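/- arXiv:1710.10694 — 2 statements merged into one kernel-verified Lean document; each statement's English description precedes it below -/
import Mathlib

section
/- Let (Ω, μ) be a probability space, T : Ω → Ω an invertible ergodic measure-preserving transformation with measurable inverse, and A : Ω → GL(d, ℝ) a measurable linear cocycle with ∫_Ω log⁺‖A(ω)‖ dμ(ω) < ∞ and ∫_Ω log⁺‖A(ω)⁻¹‖ dμ(ω) < ∞. Then there exist an integer k ≥ 1, real numbers λ₁ > λ₂ > ⋯ > λ_k, and for μ-a.e. ω a measurable direct sum decomposition ℝ^d = V^{λ₁}(ω) ⊕ ⋯ ⊕ V^{λ_k}(ω) into nonzero subspaces with A(ω) V^{λ_i}(ω) = V^{λ_i}(Tω), such that for every nonzero v ∈ V^{λ_i}(ω), lim_{N→+∞} (1/N) log ‖A^N(ω) v‖ = λ_i and lim_{N→+∞} (1/N) log ‖A^{−N}(ω) v‖ = −λ_i, where A^{−N}(ω) := A(T^{−N}ω)⁻¹ ⋯ A(T^{−1}ω)⁻¹. -/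
open MeasureTheory Filter Topology

/-- The operator norm of a square real matrix, with respect to Euclidean norms. -/
noncomputable def matOpNorm {d : ℕ} (M : Matrix (Fin d) (Fin d) ℝ) : ℝ :=
  ‖Matrix.toEuclideanCLM (𝕜 := ℝ) M‖

/-- The forward cocycle iterates `A^N(ω) = A(T^{N-1} ω) ⋯ A(T ω) A(ω)`. -/
noncomputable def cocycIter {Ω : Type*} {d : ℕ} (T : Ω → Ω)
    (A : Ω → Matrix (Fin d) (Fin d) ℝ) : ℕ → Ω → Matrix (Fin d) (Fin d) ℝ
  | 0, _ => 1
  | n + 1, ω => cocycIter T A n (T ω) * A ω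

/-- The backward cocycle iterates `A^{-N}(ω) = A(T^{-N} ω)⁻¹ ⋯ A(T^{-1} ω)⁻¹`, expressed
using the inverse map `Tinv` of `T`. -/
noncomputable def backCocycIter {Ω : Type*} {d : ℕ} (Tinv : Ω → Ω)
    (A : Ω → Matrix.GeneralLinearGroup (Fin d) ℝ) : ℕ → Ω → Matrix (Fin d) (Fin d) ℝ
  | 0, _ => 1
  | n + 1, ω => backCocycIter Tinv A n (Tinv ω) * ((A (Tinv ω))⁻¹ : Matrix (Fin d) (Fin d) ℝ)

section ErgodicTheory

/-- Chopping an orbit of a skew product into favourable blocks of length at most `N` and single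
unfavourable steps based in `B`. -/
theorem exp_sub_mul_le_iterate {Ω X : Type*} {T : Ω → Ω} {S : Ω × X → Ω × X}
    (hS : ∀ p, (S p).1 = T p.1) {ν : Ω × X → ℝ} (hν : ∀ p, 0 ≤ ν p) {g : Ω → ℝ}
    (hg : ∀ ω, 0 ≤ g ω) {c : ℝ} {N : ℕ} {B : Set Ω}
    (hstep : ∀ p, Real.exp (-g p.1) * ν p ≤ ν (S p))
    (hB : ∀ p, p.1 ∉ B → ∃ n : ℕ, 1 ≤ n ∧ n ≤ N ∧ Real.exp (n * c) * ν p ≤ ν (S^[n] p))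
    (M : ℕ) (p : Ω × X) :
    Real.exp (c * M - (∑ i ∈ Finset.range M, B.indicator (fun ω => g ω + |c|) (T^[i] p.1))
      - ∑ i ∈ Finset.Ico (M - N) M, (g (T^[i] p.1) + |c|)) * ν p ≤ ν (S^[M] p) := by
  have hpos : ∀ ω, 0 ≤ g ω + |c| := fun ω => add_nonneg (hg ω) (abs_nonneg c)
  have hipos : ∀ ω, 0 ≤ B.indicator (fun ω => g ω + |c|) ω :=
    fun ω => Set.indicator_nonneg (fun ω _ => hpos ω) ω
  have hSfst : ∀ (n : ℕ) (p : Ω × X), (S^[n] p).1 = T^[n] p.1 := by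
    intro n
    induction n with
    | zero => intro p; rfl
    | succ n ih => intro p; rw [Function.iterate_succ_apply, ih, hS, Function.iterate_succ_apply]
  have hsteps : ∀ (M : ℕ) (p : Ω × X),
      Real.exp (-∑ i ∈ Finset.range M, g (T^[i] p.1)) * ν p ≤ ν (S^[M] p) := by
    intro M
    induction M with
    | zero => intro p; simp
    | succ M ih =>
      intro p
      rw [Finset.sum_range_succ', Function.iterate_succ_apply, neg_add, Real.exp_add, mul_assoc]
      refine le_trans ?_ (ih (S p))
      simp only [hS, ← Function.iterate_succ_apply]
      exact mul_le_mul_of_nonneg_left (hstep p) (Real.exp_nonneg _)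
  induction M using Nat.strong_induction_on generalizing p with
  | _ M ih =>
  -- the bound obtained after a first block of length `n`
  have key : ∀ n : ℕ, 1 ≤ n → n ≤ M →
      ∀ a : ℝ, Real.exp a * ν p ≤ ν (S^[n] p) →
      n * c - (∑ i ∈ Finset.range n, B.indicator (fun ω => g ω + |c|) (T^[i] p.1)) ≤ a →
      Real.exp (c * M - (∑ i ∈ Finset.range M, B.indicator (fun ω => g ω + |c|) (T^[i] p.1))
      - ∑ i ∈ Finset.Ico (M - N) M, (g (T^[i] p.1) + |c|)) * ν p ≤ ν (S^[M] p) := by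
    intro n hn1 hnM a ha hle
    have h1 := ih (M - n) (by omega) (S^[n] p)
    rw [← Function.iterate_add_apply, Nat.sub_add_cancel hnM] at h1
    refine le_trans ?_ h1
    refine le_trans ?_ (mul_le_mul_of_nonneg_left ha (Real.exp_nonneg _))
    rw [← mul_assoc, ← Real.exp_add]
    refine mul_le_mul_of_nonneg_right (Real.exp_le_exp.mpr ?_) (hν p)
    simp only [hSfst, ← Function.iterate_add_apply]
    have e1 : ∑ i ∈ Finset.range M, B.indicator (fun ω => g ω + |c|) (T^[i] p.1)
        = ∑ i ∈ Finset.range n, B.indicator (fun ω => g ω + |c|) (T^[i] p.1)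
        + ∑ i ∈ Finset.range (M - n), B.indicator (fun ω => g ω + |c|) (T^[i + n] p.1) := by
      conv_lhs => rw [← Nat.add_sub_cancel' hnM, Finset.sum_range_add]
      simp only [add_comm n]
    have e2 : ∑ i ∈ Finset.Ico (M - n - N) (M - n), (g (T^[i + n] p.1) + |c|)
        ≤ ∑ i ∈ Finset.Ico (M - N) M, (g (T^[i] p.1) + |c|) := by
      rw [Finset.sum_Ico_add' (fun i => g (T^[i] p.1) + |c|)]
      refine Finset.sum_le_sum_of_subset_of_nonneg ?_ (fun i _ _ => hpos _)
      intro i hi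
      simp only [Finset.mem_Ico] at hi ⊢
      omega
    have e3 : ((M - n : ℕ) : ℝ) = M - n := by push_cast [hnM]; ring
    rw [e1, e3]
    linarith
  by_cases hMN : M ≤ N
  · refine le_trans (mul_le_mul_of_nonneg_right (Real.exp_le_exp.mpr ?_) (hν p)) (hsteps M p)
    rw [Nat.sub_eq_zero_of_le hMN, ← Finset.range_eq_Ico, Finset.sum_add_distrib]
    simp only [Finset.sum_const, Finset.card_range, nsmul_eq_mul]
    have := Finset.sum_nonneg (fun i (_ : i ∈ Finset.range M) => hipos (T^[i] p.1))
    have : c * M ≤ M * |c| := by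
      rw [mul_comm]; exact mul_le_mul_of_nonneg_left (le_abs_self c) (Nat.cast_nonneg _)
    linarith
  · by_cases hp : p.1 ∈ B
    · refine key 1 le_rfl (by omega) (-g p.1) (hstep p) ?_
      simp [Set.indicator_of_mem hp]
      linarith [le_abs_self c]
    · obtain ⟨n, hn1, hnN, hn⟩ := hB p hp
      refine key n hn1 (by omega) (n * c) hn ?_
      have := Finset.sum_nonneg (fun i (_ : i ∈ Finset.range n) => hipos (T^[i] p.1))
      linarith

variable {Ω : Type*} [MeasurableSpace Ω] {μ : Measure Ω}

theorem exists_integral_indicator_compl_lt {G : ℕ → Set Ω} (hG : ∀ N, MeasurableSet (G N))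
    (hmono : Monotone G) (hae : ∀ᵐ ω ∂μ, ∃ N, ω ∈ G N) {h : Ω → ℝ} (hh : Integrable h μ)
    {δ : ℝ} (hδ : 0 < δ) : ∃ N, ∫ ω, (G N)ᶜ.indicator h ω ∂μ < δ := by
  have h1 := tendsto_setIntegral_of_antitone (f := h) (μ := μ) (s := fun N => (G N)ᶜ)
    (fun N => (hG N).compl) (fun _ _ hab => Set.compl_subset_compl.mpr (hmono hab))
    ⟨0, hh.integrableOn⟩
  have h2 : ∫ x in ⋂ n, (G n)ᶜ, h x ∂μ = 0 := by
    apply setIntegral_measure_zero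
    rw [← Set.compl_iUnion, ← mem_ae_iff]
    filter_upwards [hae] with ω hω using Set.mem_iUnion.mpr hω
  rw [h2] at h1
  obtain ⟨N, hN⟩ := (h1.eventually (gt_mem_nhds hδ)).exists
  exact ⟨N, by rwa [integral_indicator (hG N).compl]⟩

theorem MeasureTheory.MeasurePreserving.integrable_birkhoffSum {T : Ω → Ω}
    (hT : MeasurePreserving T μ μ) {f : Ω → ℝ} (hf : Integrable f μ) (n : ℕ) :
    Integrable (birkhoffSum T f n) μ :=
  integrable_finsetSum _ fun i _ => (hT.iterate i).integrable_comp_of_integrable hf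

theorem MeasureTheory.MeasurePreserving.integral_comp_of_measurable {T : Ω → Ω}
    (hT : MeasurePreserving T μ μ) {f : Ω → ℝ} (hfm : Measurable f) :
    ∫ ω, f (T ω) ∂μ = ∫ ω, f ω ∂μ := by
  conv_rhs => rw [← hT.map_eq]
  rw [integral_map hT.measurable.aemeasurable hfm.aestronglyMeasurable]

theorem MeasureTheory.MeasurePreserving.integral_sum_iterate {T : Ω → Ω}
    (hT : MeasurePreserving T μ μ) {f : Ω → ℝ} (hfm : Measurable f) (hf : Integrable f μ)
    (s : Finset ℕ) : ∫ ω, ∑ i ∈ s, f (T^[i] ω) ∂μ = s.card * ∫ ω, f ω ∂μ := by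
  rw [integral_finsetSum s (f := fun i ω => f (T^[i] ω)) fun i _ =>
    (hT.iterate i).integrable_comp_of_integrable hf]
  simp [(hT.iterate _).integral_comp_of_measurable hfm]

theorem birkhoffSum_le_of_integral_lt [IsProbabilityMeasure μ] {T : Ω → Ω} (hT : Ergodic T μ)
    {f : Ω → ℝ} (hfm : Measurable f) (hf : Integrable f μ) {c : ℝ} (hc : ∫ ω, f ω ∂μ < c) :
    ∀ᵐ ω ∂μ, ∃ b : ℝ, ∀ n : ℕ, birkhoffSum T f n ω ≤ n * c + b := by
  have hSm : ∀ n, Measurable (birkhoffSum T f n) := fun n =>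
    Finset.measurable_fun_sum _ fun i _ => hfm.comp (hT.measurable.iterate i)
  set Z : Set Ω := {ω | ∀ b : ℕ, ∃ n : ℕ, n * c + b < birkhoffSum T f n ω} with hZ
  have hZm : MeasurableSet Z := by
    have : Z = ⋂ b : ℕ, ⋃ n : ℕ, {ω | n * c + b < birkhoffSum T f n ω} := by
      ext ω; simp [hZ]
    rw [this]
    exact MeasurableSet.iInter fun b => MeasurableSet.iUnion fun n =>
      measurableSet_lt measurable_const (hSm n)
  have hZinv : T ⁻¹' Z = Z := by
    ext ω
    constructor
    · intro h b
      obtain ⟨b', hb'⟩ := exists_nat_ge (b + |f ω| + |c|)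
      obtain ⟨n, hn⟩ := h b'
      refine ⟨n + 1, ?_⟩
      rw [birkhoffSum_succ']
      push_cast
      linarith [neg_abs_le (f ω), le_abs_self c]
    · intro h b
      obtain ⟨b', hb'⟩ := exists_nat_ge (b + |f ω| + |c|)
      obtain ⟨n, hn⟩ := h b'
      rcases n with _ | n
      · simp at hn
        have := (Nat.cast_nonneg b' : (0 : ℝ) ≤ b')
        linarith
      · refine ⟨n, ?_⟩
        rw [birkhoffSum_succ'] at hn
        push_cast at hn
        linarith [le_abs_self (f ω), neg_abs_le c]
  rcases hT.toPreErgodic.prob_eq_zero_or_one hZm hZinv with h0 | h1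
  · have : ∀ᵐ ω ∂μ, ω ∉ Z := measure_eq_zero_iff_ae_notMem.mp h0
    filter_upwards [this] with ω hω
    simp only [hZ, Set.mem_ofPred_eq, not_forall, not_exists, not_lt] at hω
    obtain ⟨b, hb⟩ := hω
    exact ⟨b, hb⟩
  exfalso
  have hZae : ∀ᵐ ω ∂μ, ω ∈ Z := (prob_compl_eq_zero_iff hZm).mpr h1
  let G : ℕ → Set Ω := fun N => ⋃ n ∈ Set.Icc 1 N, {ω | n * c ≤ birkhoffSum T f n ω}
  have hG : ∀ N, MeasurableSet (G N) := fun N =>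
    MeasurableSet.biUnion (Set.to_countable _) fun n _ => measurableSet_le measurable_const (hSm n)
  have hGmono : Monotone G := fun a b hab =>
    Set.biUnion_subset_biUnion_left (Set.Icc_subset_Icc_right hab)
  have hGae : ∀ᵐ ω ∂μ, ∃ N, ω ∈ G N := by
    filter_upwards [hZae] with ω hω
    obtain ⟨n, hn⟩ := hω 0
    have hn0 : n ≠ 0 := by rintro rfl; simp at hn
    exact ⟨n, Set.mem_biUnion (⟨Nat.one_le_iff_ne_zero.mpr hn0, le_rfl⟩ : n ∈ Set.Icc 1 n)
      (by simp at hn ⊢; linarith)⟩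
  set δ := (c - ∫ ω, f ω ∂μ) / 2 with hδ
  have hgi : Integrable (fun ω => |f ω| + |c|) μ := hf.abs.add (integrable_const _)
  have hgm : Measurable (fun ω => |f ω| + |c|) := by fun_prop
  obtain ⟨N, hN⟩ := exists_integral_indicator_compl_lt hG hGmono hGae hgi
    (show 0 < δ by rw [hδ]; linarith)
  let S : Ω × ℝ → Ω × ℝ := fun p => (T p.1, p.2 + f p.1)
  have hSn : ∀ (n : ℕ) (p : Ω × ℝ), S^[n] p = (T^[n] p.1, p.2 + birkhoffSum T f n p.1) := by
    intro n
    induction n with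
    | zero => intro p; simp
    | succ n ih =>
      intro p
      rw [Function.iterate_succ_apply, ih, birkhoffSum_succ', Function.iterate_succ_apply]
      simp [S, add_assoc]
  have hchop := fun (M : ℕ) (ω : Ω) => exp_sub_mul_le_iterate (T := T) (S := S) (fun p => rfl)
    (ν := fun p => Real.exp p.2) (fun p => (Real.exp_pos _).le) (g := fun ω => |f ω|)
    (fun ω => abs_nonneg _) (c := c) (N := N) (B := (G N)ᶜ)
    (fun p => by
      rw [← Real.exp_add]
      exact Real.exp_le_exp.mpr (by simp only [S]; linarith [neg_abs_le (f p.1)]))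
    (fun p hp => by
      rw [Set.notMem_compl_iff, Set.mem_iUnion₂] at hp
      obtain ⟨n, hn, hn'⟩ := hp
      refine ⟨n, hn.1, hn.2, ?_⟩
      rw [← Real.exp_add, hSn]
      refine Real.exp_le_exp.mpr ?_
      simp only [Set.mem_ofPred_eq] at hn'
      linarith) M (ω, 0)
  have hchop' : ∀ (M : ℕ) (ω : Ω),
      c * M - birkhoffSum T ((G N)ᶜ.indicator (fun ω => |f ω| + |c|)) M ω
        - ∑ i ∈ Finset.Ico (M - N) M, (|f (T^[i] ω)| + |c|) ≤ birkhoffSum T f M ω := by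
    intro M ω
    have := hchop M ω
    simp only [hSn, Real.exp_zero, mul_one, zero_add] at this
    exact Real.exp_le_exp.mp this
  have hIi : Integrable ((G N)ᶜ.indicator (fun ω => |f ω| + |c|)) μ := hgi.indicator (hG N).compl
  have hIm : Measurable ((G N)ᶜ.indicator (fun ω => |f ω| + |c|)) := hgm.indicator (hG N).compl
  have hint : ∀ {k : Ω → ℝ}, Measurable k → Integrable k μ → ∀ M : ℕ,
      ∫ ω, birkhoffSum T k M ω ∂μ = M * ∫ ω, k ω ∂μ := by
    intro k hkm hki M
    simpa [birkhoffSum] using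
      hT.toMeasurePreserving.integral_sum_iterate hkm hki (Finset.range M)
  set C := ∫ ω, (|f ω| + |c|) ∂μ with hC
  have hC0 : 0 ≤ C := integral_nonneg fun ω => by positivity
  have hmain : ∀ M : ℕ, c * M - M * δ - N * C ≤ M * ∫ ω, f ω ∂μ := by
    intro M
    rw [← hint hfm hf M]
    have hi2 : Integrable (fun ω => ∑ i ∈ Finset.Ico (M - N) M, (|f (T^[i] ω)| + |c|)) μ :=
      integrable_finsetSum _ fun i _ =>
        (hT.toMeasurePreserving.iterate i).integrable_comp_of_integrable hgi
    have hi1 := hT.toMeasurePreserving.integrable_birkhoffSum hIi M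
    have := integral_mono (((integrable_const (c * M)).sub hi1).sub hi2)
      (hT.toMeasurePreserving.integrable_birkhoffSum hf M) (hchop' M)
    refine le_trans ?_ this
    have e1 : ∫ ω, ∑ i ∈ Finset.Ico (M - N) M, (|f (T^[i] ω)| + |c|) ∂μ ≤ N * C := by
      rw [hT.toMeasurePreserving.integral_sum_iterate hgm hgi, Nat.card_Ico]
      refine mul_le_mul_of_nonneg_right ?_ hC0
      exact_mod_cast (by omega : M - (M - N) ≤ N)
    rw [integral_sub' ((integrable_const (c * M)).sub hi1) hi2,
      integral_sub' (integrable_const (c * M)) hi1, hint hIm hIi]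
    simp only [integral_const, probReal_univ, smul_eq_mul, one_mul]
    have : M * ∫ ω, (G N)ᶜ.indicator (fun ω => |f ω| + |c|) ω ∂μ ≤ M * δ :=
      mul_le_mul_of_nonneg_left hN.le (Nat.cast_nonneg _)
    linarith
  obtain ⟨M, hM⟩ := exists_nat_gt (N * C / δ)
  have hδ0 : 0 < δ := by rw [hδ]; linarith
  rw [div_lt_iff₀ hδ0] at hM
  have := hmain M
  have : c = ∫ ω, f ω ∂μ + 2 * δ := by rw [hδ]; ring
  nlinarith

end ErgodicTheory

section InvertibleErgodicTheory

variable {Ω : Type*} [MeasurableSpace Ω] {μ : Measure Ω}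

theorem Ergodic.perm_inv {T : Equiv.Perm Ω} (hT : Ergodic T μ) (hm : Measurable ⇑T⁻¹) :
    Ergodic ⇑T⁻¹ μ := by
  refine ⟨⟨hm, ?_⟩, ⟨fun s hs hinv => hT.aeconst_set hs ?_⟩⟩
  · conv_lhs => rw [← hT.map_eq]
    rw [Measure.map_map hm hT.measurable]
    have : ⇑T⁻¹ ∘ ⇑T = id := by ext ω; simp
    rw [this, Measure.map_id]
  · conv_lhs => rw [← hinv]
    ext ω; simp

theorem MeasureTheory.MeasurePreserving.perm_zpow {T : Equiv.Perm Ω}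
    (hT : MeasurePreserving T μ μ) (hT' : MeasurePreserving ⇑T⁻¹ μ μ) (n : ℤ) :
    MeasurePreserving ⇑(T ^ n) μ μ := by
  obtain ⟨n, rfl | rfl⟩ := n.eq_nat_or_neg
  · rw [zpow_natCast, ← Equiv.Perm.iterate_eq_pow]; exact hT.iterate n
  · rw [zpow_neg, zpow_natCast, ← inv_pow, ← Equiv.Perm.iterate_eq_pow]; exact hT'.iterate n

theorem Equiv.Perm.iterate_apply_eq_zpow {Ω : Type*} (T : Equiv.Perm Ω) (n : ℕ) (ω : Ω) :
    (⇑T)^[n] ω = (T ^ (n : ℤ)) ω := by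
  rw [Equiv.Perm.iterate_eq_pow, zpow_natCast]

theorem Equiv.Perm.zpow_add_apply {Ω : Type*} (T : Equiv.Perm Ω) (m n : ℤ) (ω : Ω) :
    (T ^ (m + n)) ω = (T ^ m) ((T ^ n) ω) := by
  rw [zpow_add, Equiv.Perm.mul_apply]

theorem ae_zpow_of_ae {T : Equiv.Perm Ω} (hT : MeasurePreserving T μ μ)
    (hT' : MeasurePreserving ⇑T⁻¹ μ μ) {p : Ω → Prop} (hp : ∀ᵐ ω ∂μ, p ω) :
    ∀ᵐ ω ∂μ, ∀ k : ℤ, p ((T ^ k) ω) :=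
  ae_all_iff.mpr fun k => (hT.perm_zpow hT' k).quasiMeasurePreserving.ae hp

theorem ae_forall_pos_of_antitone {p : ℝ → Ω → Prop}
    (hanti : ∀ ω ε ε', ε ≤ ε' → p ε ω → p ε' ω) (h : ∀ ε > 0, ∀ᵐ ω ∂μ, p ε ω) :
    ∀ᵐ ω ∂μ, ∀ ε > 0, p ε ω := by
  have : ∀ᵐ ω ∂μ, ∀ n : ℕ, p (1 / ((n : ℝ) + 1)) ω :=
    ae_all_iff.mpr fun n => h _ (by positivity)
  filter_upwards [this] with ω hω ε hε
  obtain ⟨n, hn⟩ := exists_nat_one_div_lt hε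
  exact hanti ω _ _ hn.le (hω n)

variable [IsProbabilityMeasure μ]

theorem ae_iterate_le_add_mul {T : Ω → Ω} (hT : Ergodic T μ) {g : Ω → ℝ} (hgm : Measurable g)
    (hgi : Integrable g μ) {ε : ℝ} (hε : 0 < ε) :
    ∀ᵐ ω ∂μ, ∃ K : ℝ, ∀ n : ℕ, g (T^[n] ω) ≤ K + ε * n := by
  have h1 := birkhoffSum_le_of_integral_lt hT hgm hgi
    (show ∫ ω, g ω ∂μ < ∫ ω, g ω ∂μ + ε / 2 by linarith)
  have h2 := birkhoffSum_le_of_integral_lt hT hgm.neg hgi.neg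
    (show ∫ ω, (-g) ω ∂μ < -∫ ω, g ω ∂μ + ε / 2 by
      simp only [Pi.neg_apply, integral_neg]; linarith)
  filter_upwards [h1, h2] with ω ⟨b1, hb1⟩ ⟨b2, hb2⟩
  refine ⟨b1 + b2 + ∫ ω, g ω ∂μ + ε / 2, fun n => ?_⟩
  have e1 := hb1 (n + 1)
  have e2 := hb2 n
  rw [birkhoffSum_succ] at e1
  have e3 : birkhoffSum T (-g) n ω = -birkhoffSum T g n ω := by simp [birkhoffSum]
  rw [e3] at e2
  push_cast at e1
  linarith

/-- An integrable function grows sublinearly along almost every two-sided orbit. -/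
theorem ae_zpow_le_add_mul {T : Equiv.Perm Ω} (hT : Ergodic T μ) (hT' : Ergodic ⇑T⁻¹ μ)
    {g : Ω → ℝ} (hgm : Measurable g) (hgi : Integrable g μ) :
    ∀ᵐ ω ∂μ, ∀ ε > 0, ∃ K : ℝ, ∀ k : ℤ, g ((T ^ k) ω) ≤ K + ε * |(k : ℝ)| := by
  refine ae_forall_pos_of_antitone (fun ω ε ε' hle ⟨K, hK⟩ => ⟨K, fun k => (hK k).trans ?_⟩) ?_
  · gcongr
  intro ε hε
  filter_upwards [ae_iterate_le_add_mul hT hgm hgi hε, ae_iterate_le_add_mul hT' hgm hgi hε]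
    with ω ⟨K1, h1⟩ ⟨K2, h2⟩
  refine ⟨max K1 K2, fun k => ?_⟩
  obtain ⟨n, rfl | rfl⟩ := k.eq_nat_or_neg
  · have := h1 n
    rw [Equiv.Perm.iterate_apply_eq_zpow] at this
    simp only [Int.cast_natCast, Nat.abs_cast]
    linarith [le_max_left K1 K2]
  · have := h2 n
    rw [Equiv.Perm.iterate_apply_eq_zpow, inv_zpow, ← zpow_neg] at this
    simp only [Int.cast_neg, Int.cast_natCast, abs_neg, Nat.abs_cast]
    linarith [le_max_right K1 K2]

/-- If almost every fibre sees a block of growth rate at least `c`, of length bounded uniformly on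
the fibre, then growth at any smaller rate holds uniformly on almost every fibre, both for orbits
starting and for orbits ending at the fibre. -/
theorem ae_exp_mul_le_iterate {T : Equiv.Perm Ω} (hT : Ergodic T μ) (hT' : Ergodic ⇑T⁻¹ μ)
    {X : Type*} {S : Ω × X → Ω × X}
    (hS : ∀ p, (S p).1 = T p.1) {ν : Ω × X → ℝ} (hν : ∀ p, 0 ≤ ν p) {g : Ω → ℝ}
    (hgm : Measurable g) (hgi : Integrable g μ) (hg : ∀ ω, 0 ≤ g ω) {c c' : ℝ} (hc : c' < c)
    {G : ℕ → Set Ω} (hG : ∀ N, MeasurableSet (G N))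
    (hmono : Monotone G) (hae : ∀ᵐ ω ∂μ, ∃ N, ω ∈ G N)
    (hstep : ∀ p, Real.exp (-g p.1) * ν p ≤ ν (S p))
    (hgood : ∀ N p, p.1 ∈ G N →
      ∃ n : ℕ, 1 ≤ n ∧ n ≤ N ∧ Real.exp (n * c) * ν p ≤ ν (S^[n] p)) :
    ∀ᵐ ω ∂μ, ∃ K : ℝ, ∀ (M : ℕ) (x : X),
      Real.exp (c' * M - K) * ν (ω, x) ≤ ν (S^[M] (ω, x)) ∧
      Real.exp (c' * M - K) * ν ((T ^ (-(M : ℤ))) ω, x)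
        ≤ ν (S^[M] ((T ^ (-(M : ℤ))) ω, x)) := by
  set δ := (c - c') / 2 with hδdef
  have hδ : 0 < δ := by rw [hδdef]; linarith
  have hki : Integrable (fun ω => g ω + |c|) μ := hgi.add (integrable_const _)
  have hkm : Measurable (fun ω => g ω + |c|) := by fun_prop
  have hk0 : ∀ ω, 0 ≤ g ω + |c| := fun ω => add_nonneg (hg ω) (abs_nonneg c)
  obtain ⟨N, hN⟩ := exists_integral_indicator_compl_lt hG hmono hae hki hδ
  set h : Ω → ℝ := (G N)ᶜ.indicator (fun ω => g ω + |c|) with hh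
  have hh0 : ∀ ω, 0 ≤ h ω := fun ω => Set.indicator_nonneg (fun ω _ => hk0 ω) ω
  have hhi : Integrable h μ := hki.indicator (hG N).compl
  have hhm : Measurable h := hkm.indicator (hG N).compl
  have hchop := exp_sub_mul_le_iterate hS hν hg (c := c) (N := N) (B := (G N)ᶜ) hstep
    (fun p hp => hgood N p (Set.notMem_compl_iff.mp hp))
  filter_upwards [ae_zpow_le_add_mul hT hT' hkm hki,
    birkhoffSum_le_of_integral_lt hT hhm hhi hN,
    birkhoffSum_le_of_integral_lt hT' hhm hhi hN] with ω htemp ⟨b1, hb1⟩ ⟨b2, hb2⟩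
  obtain ⟨K, hK⟩ := htemp (δ / (N + 1)) (by positivity)
  have hK0 : 0 ≤ K := by
    have := hK 0
    simp at this
    linarith [hk0 ω]
  have htail : ∀ (M : ℕ) (s : ℕ → Ω), (∀ i < M, ∃ k : ℤ, |(k : ℝ)| ≤ M ∧ s i = (T ^ k) ω) →
      ∑ i ∈ Finset.Ico (M - N) M, (g (s i) + |c|) ≤ N * K + δ * M := by
    intro M s hs
    have : ∀ i ∈ Finset.Ico (M - N) M, g (s i) + |c| ≤ K + δ / (N + 1) * M := by
      intro i hi
      obtain ⟨k, hk, hk'⟩ := hs i (Finset.mem_Ico.mp hi).2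
      rw [hk']
      exact (hK k).trans (by gcongr)
    refine (Finset.sum_le_card_nsmul _ _ _ this).trans ?_
    rw [Nat.card_Ico, nsmul_eq_mul]
    have hc1 : ((M - (M - N) : ℕ) : ℝ) ≤ N := by exact_mod_cast (by omega : M - (M - N) ≤ N)
    have hM0 : (0 : ℝ) ≤ M := Nat.cast_nonneg M
    have hN0 : (0 : ℝ) ≤ N := Nat.cast_nonneg N
    calc ((M - (M - N) : ℕ) : ℝ) * (K + δ / (N + 1) * M)
        ≤ N * (K + δ / (N + 1) * M) := by gcongr
      _ = N * K + (N / (N + 1)) * (δ * M) := by field_simp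
      _ ≤ N * K + 1 * (δ * M) := by
        gcongr
        rw [div_le_one (by positivity)]; linarith
      _ = _ := by ring
  refine ⟨max b1 (b2 + δ) + N * K, fun M x => ⟨?_, ?_⟩⟩
  · refine le_trans (mul_le_mul_of_nonneg_right (Real.exp_le_exp.mpr ?_) (hν _)) (hchop M (ω, x))
    have e1 := hb1 M
    have e2 := htail M (fun i => (⇑T)^[i] ω) (fun i hi => ⟨i, by simpa using hi.le,
      Equiv.Perm.iterate_apply_eq_zpow T i ω⟩)
    simp only [birkhoffSum] at e1
    have : c * M = c' * M + 2 * (δ * M) := by rw [hδdef]; ring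
    simp only [← hh]
    linarith [le_max_left b1 (b2 + δ)]
  · refine le_trans (mul_le_mul_of_nonneg_right (Real.exp_le_exp.mpr ?_) (hν _)) (hchop M _)
    have hit : ∀ i, (⇑T)^[i] ((T ^ (-(M : ℤ))) ω) = (T ^ ((i : ℤ) - M)) ω := by
      intro i
      rw [Equiv.Perm.iterate_apply_eq_zpow, ← Equiv.Perm.zpow_add_apply, sub_eq_add_neg]
    have e1 : ∑ i ∈ Finset.range M, h ((⇑T)^[i] ((T ^ (-(M : ℤ))) ω)) ≤ M * δ + δ + b2 := by
      have h1 := hb2 (M + 1)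
      rw [birkhoffSum, Finset.sum_range_succ'] at h1
      rw [← Finset.sum_range_reflect]
      have h3 : ∑ j ∈ Finset.range M, h ((⇑T)^[M - 1 - j] ((T ^ (-(M : ℤ))) ω))
          = ∑ k ∈ Finset.range M, h ((⇑T⁻¹)^[k + 1] ω) := by
        refine Finset.sum_congr rfl fun j hj => ?_
        rw [hit, Equiv.Perm.iterate_apply_eq_zpow, inv_zpow, ← zpow_neg]
        have := Finset.mem_range.mp hj
        congr 3
        omega
      rw [h3]
      push_cast at h1
      have := hh0 ((⇑T⁻¹)^[0] ω)
      linarith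
    have e2 := htail M (fun i => (⇑T)^[i] ((T ^ (-(M : ℤ))) ω)) (fun i hi => ⟨(i : ℤ) - M, by
      push_cast
      have : (i : ℝ) ≤ M := by exact_mod_cast hi.le
      rw [abs_of_nonpos (by linarith)]
      have : (0 : ℝ) ≤ i := Nat.cast_nonneg i
      linarith, hit i⟩)
    have : c * M = c' * M + 2 * (δ * M) := by rw [hδdef]; ring
    simp only [← hh]
    linarith [le_max_right b1 (b2 + δ)]

end InvertibleErgodicTheory

section ExponentialRates

/-- A two-sided sequence grows at most like `exp (a k)`, up to subexponential factors in `|k|`. -/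
def HasRate {W : Type*} [Norm W] (u : ℤ → W) (a : ℝ) : Prop :=
  ∀ ε > 0, ∃ K : ℝ, ∀ k : ℤ, ‖u k‖ ≤ K * Real.exp (a * k + ε * |(k : ℝ)|)

namespace HasRate

variable {W : Type*} [NormedAddCommGroup W] {u v : ℤ → W} {a b : ℝ}

theorem add (hu : HasRate u a) (hv : HasRate v a) : HasRate (fun k => u k + v k) a := by
  intro ε hε
  obtain ⟨K, hK⟩ := hu ε hε
  obtain ⟨K', hK'⟩ := hv ε hε
  refine ⟨K + K', fun k => (norm_add_le _ _).trans ?_⟩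
  rw [add_mul]
  exact add_le_add (hK k) (hK' k)

theorem neg (hu : HasRate u a) : HasRate (fun k => -u k) a := by
  simpa only [HasRate, norm_neg] using hu

theorem sub (hu : HasRate u a) (hv : HasRate v a) : HasRate (fun k => u k - v k) a := by
  simpa only [sub_eq_add_neg] using hu.add hv.neg

theorem zero : HasRate (fun _ => (0 : W)) a := fun _ _ => ⟨0, fun k => by simp⟩

theorem sum {ι : Type*} (s : Finset ι) {u : ι → ℤ → W} (hu : ∀ i ∈ s, HasRate (u i) a) :
    HasRate (fun k => ∑ i ∈ s, u i k) a := by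
  classical
  induction s using Finset.induction_on with
  | empty => simpa using zero
  | insert i s his ih =>
    simp only [Finset.sum_insert his]
    exact (hu i (Finset.mem_insert_self i s)).add
      (ih fun j hj => hu j (Finset.mem_insert_of_mem hj))

theorem const (w : W) : HasRate (fun _ => w) 0 := fun ε hε =>
  ⟨‖w‖, fun k => by
    have : 1 ≤ Real.exp (0 * k + ε * |(k : ℝ)|) := Real.one_le_exp (by
      rw [zero_mul, zero_add]; positivity)
    exact le_mul_of_one_le_right (norm_nonneg _) this⟩

theorem mul {M : Type*} [NormedRing M] {u v : ℤ → M} (hu : HasRate u a) (hv : HasRate v b) :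
    HasRate (fun k => u k * v k) (a + b) := by
  intro ε hε
  obtain ⟨K, hK⟩ := hu (ε / 2) (half_pos hε)
  obtain ⟨K', hK'⟩ := hv (ε / 2) (half_pos hε)
  refine ⟨K * K', fun k => (norm_mul_le _ _).trans ?_⟩
  refine (mul_le_mul (hK k) (hK' k) (norm_nonneg _) ((norm_nonneg _).trans (hK k))).trans ?_
  rw [mul_mul_mul_comm, ← Real.exp_add]
  refine le_of_eq ?_
  congr 2
  ring

theorem comp_neg (hu : HasRate u a) : HasRate (fun k => u (-k)) (-a) := by
  intro ε hε
  obtain ⟨K, hK⟩ := hu ε hε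
  refine ⟨K, fun k => ?_⟩
  simpa using hK (-k)

theorem of_forall_lt {δ : ℝ} (hδ : 0 < δ)
    (h : ∀ ε, 0 < ε → ε < δ → ∃ K : ℝ, ∀ k : ℤ, ‖u k‖ ≤ K * Real.exp (a * k + ε * |(k : ℝ)|)) :
    HasRate u a := by
  intro ε hε
  obtain ⟨K, hK⟩ := h (min ε (δ / 2)) (lt_min hε (half_pos hδ))
    ((min_le_right _ _).trans_lt (half_lt_self hδ))
  refine ⟨K, fun k => (hK k).trans ?_⟩
  have hK0 : 0 ≤ K := by
    have := (norm_nonneg _).trans (hK 0)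
    simpa using this
  gcongr
  exact min_le_left _ _

theorem exists_limit [CompleteSpace W] (ha : a < 0)
    (hu : HasRate (fun n => u (n + 1) - u n) a) :
    ∃ l, Tendsto u atTop (𝓝 l) ∧ HasRate (fun n => l - u n) a := by
  have hkey : ∀ ε, 0 < ε → ε < -a → ∃ K : ℝ, ∀ n : ℤ, ∀ j : ℕ,
      dist (u (n + j)) (u (n + (j + 1 : ℕ))) ≤
        (K * Real.exp (a * n + ε * |(n : ℝ)|)) * (Real.exp (a + ε)) ^ j := by
    intro ε hε _
    obtain ⟨K, hK⟩ := hu ε hε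
    have hK0 : 0 ≤ K := by
      have := (norm_nonneg _).trans (hK 0)
      simpa using this
    refine ⟨K, fun n j => ?_⟩
    rw [dist_eq_norm, norm_sub_rev]
    have : ‖u (n + j + 1) - u (n + j)‖ ≤ _ := hK (n + j)
    rw [add_assoc] at this
    push_cast at this ⊢
    refine this.trans ?_
    rw [mul_assoc, ← Real.exp_nat_mul, ← Real.exp_add]
    have habs : |(n : ℝ) + j| ≤ |(n : ℝ)| + j := by
      simpa using abs_add_le (n : ℝ) (j : ℝ)
    have := mul_le_mul_of_nonneg_left habs hε.le
    refine mul_le_mul_of_nonneg_left (Real.exp_le_exp.mpr ?_) hK0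
    linarith
  have hr : ∀ ε, ε < -a → Real.exp (a + ε) < 1 := fun ε hε =>
    Real.exp_lt_one_iff.mpr (by linarith)
  obtain ⟨K, hK⟩ := hkey (-a / 2) (by linarith) (by linarith)
  have hcau := cauchySeq_of_le_geometric _ _ (hr (-a / 2) (by linarith)) (hK 0)
  obtain ⟨l, hl⟩ := cauchySeq_tendsto_of_complete hcau
  have hl' : Tendsto u atTop (𝓝 l) := by
    rw [← Nat.map_cast_int_atTop, tendsto_map'_iff]
    simpa [Function.comp_def] using hl
  refine ⟨l, hl', of_forall_lt (δ := -a) (by linarith) fun ε hε hεa => ?_⟩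
  obtain ⟨K, hK⟩ := hkey ε hε hεa
  refine ⟨K / (1 - Real.exp (a + ε)), fun n => ?_⟩
  have hn : Tendsto (fun j : ℕ => u (n + j)) atTop (𝓝 l) :=
    hl'.comp (tendsto_atTop_add_const_left _ _ tendsto_natCast_atTop_atTop)
  have := dist_le_of_le_geometric_of_tendsto₀ _ _ (hr ε hεa) (hK n) hn
  rw [dist_comm, dist_eq_norm] at this
  simp only [Nat.cast_zero, add_zero] at this
  refine this.trans (le_of_eq ?_)
  ring

theorem exists_nat_bound {v : ℕ → W} {K ε : ℝ} (hε : 0 < ε)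
    (h : ∀ n, ‖v (n + 1) - v n‖ ≤ K * Real.exp (ε * n)) :
    ∃ K', ∀ n, ‖v n‖ ≤ K' * Real.exp (ε * n) := by
  have hK0 : 0 ≤ K := by
    have := (norm_nonneg _).trans (h 0)
    simpa using this
  have hr : 0 < Real.exp ε - 1 := by linarith [Real.one_lt_exp_iff.mpr hε]
  refine ⟨‖v 0‖ + K / (Real.exp ε - 1), fun n => ?_⟩
  induction n with
  | zero => simpa using by positivity
  | succ n ih =>
    have e1 : ‖v (n + 1)‖ ≤ ‖v n‖ + ‖v (n + 1) - v n‖ := by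
      simpa using norm_add_le (v n) (v (n + 1) - v n)
    refine e1.trans ((add_le_add ih (h n)).trans ?_)
    push_cast
    rw [mul_add, mul_one, Real.exp_add, ← add_mul, mul_comm (Real.exp (ε * n)), ← mul_assoc]
    refine mul_le_mul_of_nonneg_right ?_ (Real.exp_nonneg _)
    have e2 : K / (Real.exp ε - 1) * Real.exp ε = K + K / (Real.exp ε - 1) := by
      field_simp; ring
    rw [add_mul, e2]
    have : ‖v 0‖ * 1 ≤ ‖v 0‖ * Real.exp ε :=
      mul_le_mul_of_nonneg_left (by linarith) (norm_nonneg _)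
    linarith

theorem of_differences (h1 : HasRate (fun n => u (n + 1) - u n) 0)
    (h2 : HasRate (fun n => u (n - 1) - u n) 0) : HasRate u 0 := by
  intro ε hε
  obtain ⟨K1, hK1⟩ := h1 ε hε
  obtain ⟨K2, hK2⟩ := h2 ε hε
  obtain ⟨C1, hC1⟩ := exists_nat_bound (v := fun n : ℕ => u n) (K := K1) hε fun n => by
    simpa using hK1 n
  obtain ⟨C2, hC2⟩ := exists_nat_bound (v := fun n : ℕ => u (-n)) (K := K2) hε fun n => by
    have : ‖u (-n - 1) - u (-n)‖ ≤ _ := hK2 (-n)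
    rw [← neg_add'] at this
    simpa using this
  refine ⟨max C1 C2, fun k => ?_⟩
  obtain ⟨n, rfl | rfl⟩ := k.eq_nat_or_neg
  · refine (hC1 n).trans ?_
    simp only [Int.cast_natCast, Nat.abs_cast, zero_mul, zero_add]
    gcongr
    exact le_max_left _ _
  · refine (hC2 n).trans ?_
    simp only [Int.cast_neg, Int.cast_natCast, abs_neg, Nat.abs_cast, zero_mul, zero_add]
    gcongr
    exact le_max_right _ _

end HasRate

end ExponentialRates

section TwistedCohomology

variable {Ω : Type*} [MeasurableSpace Ω] {μ : Measure Ω}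
  {M : Type*} [NormedRing M] [CompleteSpace M] [MeasurableSpace M] [BorelSpace M]

theorem exists_twisted_coboundary_of_lt {T : Equiv.Perm Ω} (hT : MeasurePreserving T μ μ)
    (hT' : MeasurePreserving ⇑T⁻¹ μ μ) {c x y : ℤ → Ω → M} {a b : ℝ} (hab : b < a)
    (hc : ∀ n, Measurable (c n))
    (hcoc : ∀ᵐ ω ∂μ, ∀ m n : ℤ, c (m + n) ω = c n ω + x n ω * c m ((T ^ n) ω) * y n ω)
    (hx : ∀ᵐ ω ∂μ, HasRate (fun n => x n ω) (-a)) (hy : ∀ᵐ ω ∂μ, HasRate (fun n => y n ω) b)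
    (hc₁ : ∀ᵐ ω ∂μ, HasRate (fun n => c 1 ((T ^ n) ω)) 0) :
    ∃ L : Ω → M, Measurable L ∧ ∀ᵐ ω ∂μ, HasRate (fun k => L ω + c k ω) (b - a) ∧
      ∀ k : ℤ, L ω + c k ω = x k ω * L ((T ^ k) ω) * y k ω := by
  have hlim : ∀ᵐ ω ∂μ, ∃ l, Tendsto (fun n => -c n ω) atTop (𝓝 l) ∧
      HasRate (fun n => l - -c n ω) (b - a) := by
    filter_upwards [hcoc, hx, hy, hc₁] with ω h1 h2 h3 h4
    refine HasRate.exists_limit (by linarith) ?_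
    have : ∀ n : ℤ, -c (n + 1) ω - -c n ω = -(x n ω * c 1 ((T ^ n) ω) * y n ω) := by
      intro n
      rw [add_comm, h1]
      abel
    simp only [this]
    have := ((h2.mul h4).mul h3).neg
    rwa [show -a + 0 + b = b - a by ring] at this
  obtain ⟨L, hLm, hL⟩ := measurable_limit_of_tendsto_metrizable_ae (μ := μ)
    (f := fun (n : ℤ) ω => -c n ω) (L := atTop) (fun n => (hc n).neg.aemeasurable)
    (hlim.mono fun ω ⟨l, hl, _⟩ => ⟨l, hl⟩)
  refine ⟨L, hLm, ?_⟩
  filter_upwards [hlim, hL, ae_zpow_of_ae hT hT' hL, hcoc] with ω ⟨l, hl, hlr⟩ h1 h2 h3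
  obtain rfl := tendsto_nhds_unique hl h1
  refine ⟨by simpa only [sub_neg_eq_add] using hlr, fun k => ?_⟩
  have e1 : Tendsto (fun m : ℤ => -c (m + k) ω) atTop (𝓝 (L ω)) :=
    h1.comp (tendsto_atTop_add_const_right _ k tendsto_id)
  have e2 : Tendsto (fun m : ℤ => -c (m + k) ω) atTop
      (𝓝 (-c k ω + x k ω * L ((T ^ k) ω) * y k ω)) := by
    have : ∀ m : ℤ, -c (m + k) ω = -c k ω + x k ω * -c m ((T ^ k) ω) * y k ω := by
      intro m
      rw [h3, mul_neg, neg_mul]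
      abel
    simp only [this]
    exact (((h2 k).const_mul _).mul_const _).const_add _
  rw [tendsto_nhds_unique e1 e2]
  abel

/-- A twisted cocycle whose left and right twists have exact exponential rates is a twisted
coboundary when the rates differ, and grows subexponentially when they agree. -/
theorem exists_twisted_coboundary {T : Equiv.Perm Ω} (hT : MeasurePreserving T μ μ)
    (hT' : MeasurePreserving ⇑T⁻¹ μ μ) {c x y : ℤ → Ω → M} (a b : ℝ)
    (hc : ∀ n, Measurable (c n))
    (hcoc : ∀ᵐ ω ∂μ, ∀ m n : ℤ, c (m + n) ω = c n ω + x n ω * c m ((T ^ n) ω) * y n ω)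
    (hx : ∀ᵐ ω ∂μ, HasRate (fun n => x n ω) (-a)) (hy : ∀ᵐ ω ∂μ, HasRate (fun n => y n ω) b)
    (hc₁ : ∀ᵐ ω ∂μ, HasRate (fun n => c 1 ((T ^ n) ω)) 0)
    (hc₂ : ∀ᵐ ω ∂μ, HasRate (fun n => c (-1) ((T ^ n) ω)) 0) :
    ∃ L : Ω → M, Measurable L ∧ (a = b → L = 0) ∧
      ∀ᵐ ω ∂μ, HasRate (fun k => L ω + c k ω) (b - a) ∧
        (a ≠ b → ∀ k : ℤ, L ω + c k ω = x k ω * L ((T ^ k) ω) * y k ω) := by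
  rcases lt_trichotomy b a with hab | rfl | hab
  · obtain ⟨L, hLm, hL⟩ := exists_twisted_coboundary_of_lt hT hT' hab hc hcoc hx hy hc₁
    exact ⟨L, hLm, fun h => absurd h hab.ne', hL.mono fun ω h => ⟨h.1, fun _ => h.2⟩⟩
  · refine ⟨0, measurable_const, fun _ => rfl, ?_⟩
    filter_upwards [hcoc, hx, hy, hc₁, hc₂] with ω h1 h2 h3 h4 h5
    refine ⟨?_, fun h => absurd rfl h⟩
    simp only [Pi.zero_apply, zero_add, sub_self]
    refine HasRate.of_differences ?_ ?_
    · have : ∀ n : ℤ, c (n + 1) ω - c n ω = x n ω * c 1 ((T ^ n) ω) * y n ω := by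
        intro n; rw [add_comm, h1]; abel
      simp only [this]
      simpa using (h2.mul h4).mul h3
    · have : ∀ n : ℤ, c (n - 1) ω - c n ω = x n ω * c (-1) ((T ^ n) ω) * y n ω := by
        intro n; rw [sub_eq_add_neg n 1, add_comm, h1]; abel
      simp only [this]
      simpa using (h2.mul h5).mul h3
  · obtain ⟨L, hLm, hL⟩ := exists_twisted_coboundary_of_lt (T := T⁻¹) hT'
      (by simpa using hT) (c := fun n => c (-n)) (x := fun n => x (-n)) (y := fun n => y (-n))
      (a := -a) (b := -b) (by linarith) (fun n => hc _)
      (hcoc.mono fun ω h m n => by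
        rw [neg_add, h, inv_zpow, ← zpow_neg])
      (hx.mono fun ω h => h.comp_neg) (hy.mono fun ω h => h.comp_neg)
      (hc₂.mono fun ω h => by
        simpa [inv_zpow, ← zpow_neg] using h.comp_neg)
    refine ⟨L, hLm, fun h => absurd h hab.ne, hL.mono fun ω h => ⟨?_, fun _ k => ?_⟩⟩
    · have := h.1.comp_neg
      simp only [neg_neg] at this
      rwa [show -(-b - -a) = b - a by ring] at this
    · have := h.2 (-k)
      simpa [inv_zpow, ← zpow_neg] using this

end TwistedCohomology

section Splittings

variable {Ω : Type*} {M : Type*} [NormedRing M]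

/-- At the point `ω`, the operators `pr l`, `l ∈ S`, are complementary projections of the image of
`Φ 0`, equivariant under the cocycle `Φ`, on which `Φ` grows at the exact two-sided rate `l`. -/
structure SplitsAt (T : Equiv.Perm Ω) (Φ : ℤ → Ω → M) (S : Finset ℝ) (pr : ℝ → Ω → M) (ω : Ω) :
    Prop where
  sum_eq : ∑ l ∈ S, pr l ω = Φ 0 ω
  mul_self : ∀ l, pr l ω * pr l ω = pr l ω
  mul_of_ne : ∀ l l', l ≠ l' → pr l ω * pr l' ω = 0
  comm : ∀ l (n : ℤ), Φ n ω * pr l ω = pr l ((T ^ n) ω) * Φ n ω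
  rate : ∀ l, HasRate (fun k => Φ k ω * pr l ω) l
  rate_inv : ∀ l, HasRate (fun k => pr l ω * Φ (-k) ((T ^ k) ω)) (-l)

/-- The cocycle `Φ` admits a measurable Oseledets splitting. -/
def IsOseledetsRegular [MeasurableSpace Ω] [MeasurableSpace M] (T : Equiv.Perm Ω) (μ : Measure Ω)
    (Φ : ℤ → Ω → M) : Prop :=
  ∃ (S : Finset ℝ) (pr : ℝ → Ω → M), (∀ l, Measurable (pr l)) ∧ (∀ l ∉ S, pr l = 0) ∧
    ∀ᵐ ω ∂μ, SplitsAt T Φ S pr ω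

namespace SplitsAt

variable {T : Equiv.Perm Ω} {Φ : ℤ → Ω → M} {S : Finset ℝ} {pr : ℝ → Ω → M} {ω : Ω}

theorem sum_mul_self (h : SplitsAt T Φ S pr ω) (hS : ∀ l ∉ S, pr l = 0) (l : ℝ) :
    Φ 0 ω * pr l ω = pr l ω := by
  classical
  rw [← h.sum_eq, Finset.sum_mul]
  by_cases hl : l ∈ S
  · rw [Finset.sum_eq_single_of_mem l hl fun b _ hb => h.mul_of_ne b l hb, h.mul_self]
  · simp [hS l hl]

theorem mul_sum_self (h : SplitsAt T Φ S pr ω) (hS : ∀ l ∉ S, pr l = 0) (l : ℝ) :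
    pr l ω * Φ 0 ω = pr l ω := by
  classical
  rw [← h.sum_eq, Finset.mul_sum]
  by_cases hl : l ∈ S
  · rw [Finset.sum_eq_single_of_mem l hl fun b _ hb => h.mul_of_ne l b hb.symm, h.mul_self]
  · simp [hS l hl]

/-- The projections are tempered along the orbit. -/
theorem tempered (h : SplitsAt T Φ S pr ω) (h' : ∀ k : ℤ, SplitsAt T Φ S pr ((T ^ k) ω))
    (hS : ∀ l ∉ S, pr l = 0)
    (hΦ : ∀ k : ℤ, Φ k ω * Φ (-k) ((T ^ k) ω) = Φ 0 ((T ^ k) ω)) (l : ℝ) :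
    HasRate (fun k : ℤ => pr l ((T ^ k) ω)) 0 := by
  have := (h.rate l).mul (h.rate_inv l)
  rw [add_neg_cancel] at this
  convert this using 2 with k
  rw [mul_assoc, ← mul_assoc (pr l ω), h.mul_self, ← mul_assoc, h.comm, mul_assoc, hΦ,
    (h' k).mul_sum_self hS]

end SplitsAt

end Splittings

section BlockTriangular

variable {M : Type*} [Ring M]

/-- Conjugating a block diagonal projection by the unipotent `1 + L`. -/
theorem conj_unipotent_mul {R S L p q p' q' : M} (hL : R * L = L) (hL' : L * S = L)
    (hSR : S * R = 0) (hRS : R * S = 0)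
    (hp2 : p * R = p) (hq2 : q * S = q)
    (hp' : R * p' = p') (hq' : S * q' = q') :
    (p + q - p * L + L * q) * (p' + q' - p' * L + L * q') =
      p * p' + q * q' - p * p' * L + L * (q * q') := by
  have e1 : L * p' = 0 := by rw [← hL', ← hp', mul_assoc, ← mul_assoc S, hSR]; simp
  have e2 : L * L = 0 := by
    rw [show L * L = L * S * (R * L) by rw [hL, hL'], mul_assoc, ← mul_assoc S, hSR]; simp
  have e3 : q * p' = 0 := by rw [← hq2, ← hp', mul_assoc, ← mul_assoc S, hSR]; simp
  have e4 : p * q' = 0 := by rw [← hp2, ← hq', mul_assoc, ← mul_assoc R, hRS]; simp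
  have e5 : q * L = 0 := by rw [← hq2, ← hL, mul_assoc, ← mul_assoc S, hSR]; simp
  have : (p + q - p * L + L * q) * (p' + q' - p' * L + L * q') -
      (p * p' + q * q' - p * p' * L + L * (q * q')) =
      p * q' + q * p' - q * p' * L + q * L * q' - p * (L * p') - p * (L * p') * (-L)
      - p * (L * L) * q' + L * (q * p') - L * (q * p') * L + L * (q * L) * q' := by
    noncomm_ring
  rw [← sub_eq_zero, this, e1, e2, e3, e4, e5]
  simp

/-- Expansion of a block triangular operator times a conjugated block diagonal projection. -/
theorem triangular_mul_conj {R S F c Q L p q : M} (hSR : S * R = 0)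
    (hL : R * L = L) (hF : F * R = F) (hc : c * S = c) (hQ : Q * S = Q)
    (hp : R * p = p) (hq : S * q = q) (hRS : R * S = 0) :
    (F + F * c + Q) * (p + q - p * L + L * q) =
      F * p - F * p * L + F * ((L + c) * q) + Q * q := by
  have e1 : c * p = 0 := by rw [← hc, ← hp, mul_assoc, ← mul_assoc S, hSR]; simp
  have e2 : c * L = 0 := by rw [← hc, ← hL, mul_assoc, ← mul_assoc S, hSR]; simp
  have e3 : Q * p = 0 := by rw [← hQ, ← hp, mul_assoc, ← mul_assoc S, hSR]; simp
  have e4 : Q * L = 0 := by rw [← hQ, ← hL, mul_assoc, ← mul_assoc S, hSR]; simp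
  have e5 : F * q = 0 := by rw [← hF, ← hq, mul_assoc, ← mul_assoc R, hRS]; simp
  have : (F + F * c + Q) * (p + q - p * L + L * q) -
      (F * p - F * p * L + F * ((L + c) * q) + Q * q) =
      F * q + F * (c * p) - F * (c * p) * L + F * (c * L) * q + Q * p - Q * p * L
        + Q * L * q := by
    noncomm_ring
  rw [← sub_eq_zero, this, e1, e2, e3, e4, e5]
  simp

/-- Expansion of a conjugated block diagonal projection times a block triangular operator. -/
theorem conj_mul_triangular {R S G B H L p q : M} (hSR : S * R = 0) (hRS : R * S = 0)
    (hL : L * S = L) (hG : R * G = G) (hB : R * B = B) (hH : S * H = H)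
    (hp : p * R = p) (hq : q * S = q) :
    (p + q - p * L + L * q) * (G + B + H) = p * G + q * H + L * (q * H) - p * L * H + p * B := by
  have e1 : q * G = 0 := by rw [← hq, ← hG, mul_assoc, ← mul_assoc S, hSR]; simp
  have e2 : L * G = 0 := by rw [← hL, ← hG, mul_assoc, ← mul_assoc S, hSR]; simp
  have e3 : q * B = 0 := by rw [← hq, ← hB, mul_assoc, ← mul_assoc S, hSR]; simp
  have e4 : L * B = 0 := by rw [← hL, ← hB, mul_assoc, ← mul_assoc S, hSR]; simp
  have e5 : p * H = 0 := by rw [← hp, ← hH, mul_assoc, ← mul_assoc R, hRS]; simp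
  have : (p + q - p * L + L * q) * (G + B + H) -
      (p * G + q * H + L * (q * H) - p * L * H + p * B) =
      p * H + q * G + q * B - p * (L * G) - p * (L * B) + L * (q * G) + L * (q * B) := by
    noncomm_ring
  rw [← sub_eq_zero, this, e1, e2, e3, e4, e5]
  simp

end BlockTriangular

section TriangularCocycle

variable {Ω : Type*} {M : Type*} [NormedRing M]

/-- The cocycle `Φ` is block upper triangular with diagonal blocks `F` and `Q`; `c` is the
off-diagonal block, normalized by `F`. -/
structure IsTriangularCocycle (T : Equiv.Perm Ω) (Φ F Q c : ℤ → Ω → M) : Prop where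
  eq_add : ∀ n ω, Φ n ω = F n ω + F n ω * c n ω + Q n ω
  zero_eq : ∀ ω, Φ 0 ω = F 0 ω + Q 0 ω
  zero_mul_zero : ∀ ω, F 0 ω * Q 0 ω = 0
  zero_mul_zero' : ∀ ω, Q 0 ω * F 0 ω = 0
  left_mul : ∀ n ω, F 0 ((T ^ n) ω) * F n ω = F n ω
  left_mul_zero : ∀ n ω, F n ω * F 0 ω = F n ω
  right_mul : ∀ n ω, Q 0 ((T ^ n) ω) * Q n ω = Q n ω
  right_mul_zero : ∀ n ω, Q n ω * Q 0 ω = Q n ω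
  mul_off : ∀ n ω, F 0 ω * c n ω = c n ω
  off_mul : ∀ n ω, c n ω * Q 0 ω = c n ω
  left_inv : ∀ n ω, F n ω * F (-n) ((T ^ n) ω) = F 0 ((T ^ n) ω)
  right_inv : ∀ n ω, Q n ω * Q (-n) ((T ^ n) ω) = Q 0 ((T ^ n) ω)
  off_add : ∀ m n ω, c (m + n) ω = c n ω + F (-n) ((T ^ n) ω) * c m ((T ^ n) ω) * Q n ω

namespace IsTriangularCocycle

variable {T : Equiv.Perm Ω} {Φ F Q c : ℤ → Ω → M}

theorem off_zero (h : IsTriangularCocycle T Φ F Q c) (ω : Ω) : c 0 ω = 0 := by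
  have := h.off_add 0 0 ω
  simpa [h.mul_off, h.off_mul] using this

theorem inv_mul_off (h : IsTriangularCocycle T Φ F Q c) (k : ℤ) (ω : Ω) :
    F (-k) ((T ^ k) ω) * c (-k) ((T ^ k) ω) = -(c k ω * Q (-k) ((T ^ k) ω)) := by
  have h1 := h.off_add (-k) k ω
  rw [neg_add_cancel, h.off_zero] at h1
  have h2 := congrArg (· * Q (-k) ((T ^ k) ω)) h1
  simp only [zero_mul, add_mul] at h2
  rw [mul_assoc _ (Q k ω), h.right_inv, mul_assoc (F _ _), h.off_mul] at h2
  exact (neg_eq_of_add_eq_zero_right h2.symm).symm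

/-- The hypotheses on a solution `L` of the twisted cohomological equation at `ω`: the blocks of
`L + c k` have the expected rates, and `L` conjugates `Φ` to block diagonal form up to blocks with
equal rates. -/
structure IsSolutionAt (T : Equiv.Perm Ω) (F Q c : ℤ → Ω → M) (S S' : Finset ℝ)
    (p q : ℝ → Ω → M) (L : Ω → M) (ω : Ω) : Prop where
  mul_eq : F 0 ω * L ω = L ω
  eq_mul : L ω * Q 0 ω = L ω
  rate : ∀ l ∈ S, ∀ l' ∈ S', HasRate (fun k => p l ω * (L ω + c k ω) * q l' ω) (l' - l)
  equivariant : ∀ l ∈ S, ∀ l' ∈ S', l ≠ l' → ∀ k : ℤ,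
    p l ω * (L ω + c k ω - F (-k) ((T ^ k) ω) * L ((T ^ k) ω) * Q k ω) * q l' ω = 0

/-- A two-block splitting of a triangular cocycle is assembled from splittings of the diagonal
blocks and a solution of the twisted cohomological equation. -/
theorem splitsAt (h : IsTriangularCocycle T Φ F Q c) {S S' : Finset ℝ} {p q : ℝ → Ω → M}
    {L : Ω → M} {ω : Ω} (hS : ∀ l ∉ S, p l = 0) (hS' : ∀ l ∉ S', q l = 0)
    (hF : ∀ k : ℤ, SplitsAt T F S p ((T ^ k) ω)) (hQ : ∀ k : ℤ, SplitsAt T Q S' q ((T ^ k) ω))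
    (hL : ∀ k : ℤ, IsSolutionAt T F Q c S S' p q L ((T ^ k) ω)) :
    SplitsAt T Φ (S ∪ S') (fun l ω => p l ω + q l ω - p l ω * L ω + L ω * q l ω) ω := by
  classical
  have hF0 : SplitsAt T F S p ω := by simpa using hF 0
  have hQ0 : SplitsAt T Q S' q ω := by simpa using hQ 0
  have hL0 : IsSolutionAt T F Q c S S' p q L ω := by simpa using hL 0
  have hp1 := hF0.sum_mul_self hS
  have hp2 := hF0.mul_sum_self hS
  have hq1 := hQ0.sum_mul_self hS'
  have hq2 := hQ0.mul_sum_self hS'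
  have hmul : ∀ l l', (p l ω + q l ω - p l ω * L ω + L ω * q l ω) *
      (p l' ω + q l' ω - p l' ω * L ω + L ω * q l' ω) = p l ω * p l' ω + q l ω * q l' ω -
        p l ω * p l' ω * L ω + L ω * (q l ω * q l' ω) := fun l l' =>
    conj_unipotent_mul hL0.mul_eq hL0.eq_mul (h.zero_mul_zero' ω) (h.zero_mul_zero ω)
      (hp2 l) (hq2 l) (hp1 l') (hq1 l')
  have hsp : ∑ l ∈ S ∪ S', p l ω = F 0 ω := by
    rw [← hF0.sum_eq]
    exact (Finset.sum_subset Finset.subset_union_left fun l _ hl => by simp [hS l hl]).symm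
  have hsq : ∑ l ∈ S ∪ S', q l ω = Q 0 ω := by
    rw [← hQ0.sum_eq]
    exact (Finset.sum_subset Finset.subset_union_right fun l _ hl => by simp [hS' l hl]).symm
  have hleft : ∀ l (n : ℤ), Φ n ω * (p l ω + q l ω - p l ω * L ω + L ω * q l ω) =
      F n ω * p l ω - F n ω * p l ω * L ω + F n ω * ((L ω + c n ω) * q l ω) + Q n ω * q l ω := by
    intro l n
    rw [h.eq_add]
    exact triangular_mul_conj (h.zero_mul_zero' ω) hL0.mul_eq (h.left_mul_zero n ω)
      (h.off_mul n ω) (h.right_mul_zero n ω) (hp1 l) (hq1 l) (h.zero_mul_zero ω)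
  refine ⟨?_, ?_, ?_, ?_, ?_, ?_⟩
  · simp only [Finset.sum_add_distrib, Finset.sum_sub_distrib, ← Finset.sum_mul, ← Finset.mul_sum,
      hsp, hsq, hL0.mul_eq, hL0.eq_mul, h.zero_eq]
    abel
  · intro l
    rw [hmul, hF0.mul_self, hQ0.mul_self]
  · intro l l' hll
    rw [hmul, hF0.mul_of_ne l l' hll, hQ0.mul_of_ne l l' hll]
    simp
  · intro l n
    have hkey : p l ω * (L ω + c n ω - F (-n) ((T ^ n) ω) * L ((T ^ n) ω) * Q n ω) =
        (L ω + c n ω - F (-n) ((T ^ n) ω) * L ((T ^ n) ω) * Q n ω) * q l ω := by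
      set D := L ω + c n ω - F (-n) ((T ^ n) ω) * L ((T ^ n) ω) * Q n ω with hD
      have hzero : ∀ l l', l ≠ l' → p l ω * D * q l' ω = 0 := by
        intro l l' hll
        by_cases hl : l ∈ S
        · by_cases hl' : l' ∈ S'
          · exact hL0.equivariant l hl l' hl' hll n
          · simp [hS' l' hl']
        · simp [hS l hl]
      have hFn : F 0 ω * F (-n) ((T ^ n) ω) = F (-n) ((T ^ n) ω) := by
        simpa using h.left_mul (-n) ((T ^ n) ω)
      have hD1 : F 0 ω * D = D := by
        rw [hD, mul_sub, mul_add, hL0.mul_eq, h.mul_off, ← mul_assoc, ← mul_assoc, hFn]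
      have hD2 : D * Q 0 ω = D := by
        rw [hD, sub_mul, add_mul, hL0.eq_mul, h.off_mul, mul_assoc _ (Q n ω), h.right_mul_zero]
      trans p l ω * D * q l ω
      · conv_lhs => rw [← hD2, ← hsq, Finset.mul_sum, Finset.mul_sum]
        rw [Finset.sum_eq_single l]
        · rw [mul_assoc]
        · intro b _ hb
          rw [← mul_assoc]
          exact hzero l b hb.symm
        · intro hl
          have : l ∉ S' := fun h => hl (Finset.mem_union_right _ h)
          simp [hS' l this]
      · conv_rhs => rw [← hD1, ← hsp, Finset.sum_mul, Finset.sum_mul]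
        rw [Finset.sum_eq_single l]
        · intro b _ hb
          exact hzero b l hb
        · intro hl
          have : l ∉ S := fun h => hl (Finset.mem_union_left _ h)
          simp [hS l this]
    have hLn := hL n
    have hq1' := (hQ n).sum_mul_self hS' l
    have hq2' := (hQ n).mul_sum_self hS' l
    have hp2' := (hF n).mul_sum_self hS l
    have hB : F 0 ((T ^ n) ω) * (F n ω * c n ω) = F n ω * c n ω := by
      rw [← mul_assoc, h.left_mul]
    have hright := conj_mul_triangular (h.zero_mul_zero' ((T ^ n) ω)) (h.zero_mul_zero _)
      hLn.eq_mul (h.left_mul n ω) hB (h.right_mul n ω) hp2' hq2'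
    rw [hleft, h.eq_add, hright, ← hF0.comm, ← hQ0.comm, ← mul_assoc (p l ((T ^ n) ω)) (F n ω),
      ← hF0.comm]
    have hk := congrArg (F n ω * ·) hkey
    have e1 : F n ω * (p l ω * (F (-n) ((T ^ n) ω) * L ((T ^ n) ω) * Q n ω)) =
        p l ((T ^ n) ω) * L ((T ^ n) ω) * Q n ω := by
      rw [← mul_assoc, hF0.comm, ← mul_assoc, ← mul_assoc, mul_assoc (p _ _) (F n ω), h.left_inv,
        hp2']
    have e2 : F n ω * (F (-n) ((T ^ n) ω) * L ((T ^ n) ω) * Q n ω * q l ω) =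
        L ((T ^ n) ω) * (Q n ω * q l ω) := by
      rw [← mul_assoc, ← mul_assoc, ← mul_assoc, h.left_inv, hLn.mul_eq, mul_assoc]
    simp only [mul_sub, sub_mul, e1, e2] at hk
    rw [sub_eq_iff_eq_add] at hk
    rw [← mul_assoc (F n ω) (p l ω) (L ω + c n ω), mul_add] at hk
    generalize L ((T ^ n) ω) * (Q n ω * q l ω) = X1 at *
    generalize p l ((T ^ n) ω) * L ((T ^ n) ω) * Q n ω = X2 at *
    generalize F n ω * ((L ω + c n ω) * q l ω) = X3 at *
    rw [show F n ω * p l ω * c n ω = X3 - X1 + X2 - F n ω * p l ω * L ω from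
      eq_sub_of_add_eq' hk]
    abel
  · intro l
    simp only [hleft]
    have h1 := hF0.rate l
    have h2 := h1.mul (HasRate.const (L ω))
    rw [add_zero] at h2
    have h3 : HasRate (fun n => F n ω * ((L ω + c n ω) * q l ω)) l := by
      have e : ∀ n, F n ω * ((L ω + c n ω) * q l ω) =
          ∑ l₁ ∈ S, F n ω * p l₁ ω * (p l₁ ω * (L ω + c n ω) * q l ω) := by
        intro n
        calc _ = F n ω * (F 0 ω * (L ω + c n ω) * q l ω) := by
              rw [mul_add (F 0 ω), hL0.mul_eq, h.mul_off]
          _ = _ := by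
            rw [← hF0.sum_eq, Finset.sum_mul, Finset.sum_mul, Finset.mul_sum]
            refine Finset.sum_congr rfl fun l₁ _ => ?_
            rw [mul_assoc (F n ω), ← mul_assoc (p l₁ ω) (p l₁ ω * _), ← mul_assoc (p l₁ ω) (p l₁ ω),
              hF0.mul_self]
      simp only [e]
      by_cases hl : l ∈ S'
      · refine HasRate.sum S fun l₁ hl₁ => ?_
        have := (hF0.rate l₁).mul (hL0.rate l₁ hl₁ l hl)
        rwa [add_sub_cancel] at this
      · simpa [hS' l hl] using HasRate.zero
    exact ((h1.sub h2).add h3).add (hQ0.rate l)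
  · intro l
    have hB : ∀ k : ℤ, F 0 ω * (-(c k ω * Q (-k) ((T ^ k) ω))) = -(c k ω * Q (-k) ((T ^ k) ω)) := by
      intro k
      rw [mul_neg, ← mul_assoc, h.mul_off]
    have e : ∀ k : ℤ, (p l ω + q l ω - p l ω * L ω + L ω * q l ω) * Φ (-k) ((T ^ k) ω) =
        p l ω * F (-k) ((T ^ k) ω) + q l ω * Q (-k) ((T ^ k) ω) +
          L ω * (q l ω * Q (-k) ((T ^ k) ω)) - p l ω * (L ω + c k ω) * Q (-k) ((T ^ k) ω) := by
      intro k
      have hFk : F 0 ω * F (-k) ((T ^ k) ω) = F (-k) ((T ^ k) ω) := by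
        simpa using h.left_mul (-k) ((T ^ k) ω)
      have hQk : Q 0 ω * Q (-k) ((T ^ k) ω) = Q (-k) ((T ^ k) ω) := by
        simpa using h.right_mul (-k) ((T ^ k) ω)
      rw [h.eq_add, h.inv_mul_off, conj_mul_triangular (h.zero_mul_zero' ω) (h.zero_mul_zero ω)
        hL0.eq_mul hFk (hB k) hQk (hp2 l) (hq2 l), mul_add (p l ω), add_mul, mul_neg,
        ← mul_assoc (p l ω) (c k ω)]
      abel
    simp only [e]
    have h1 := hQ0.rate_inv l
    have h2 := (HasRate.const (L ω)).mul h1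
    rw [zero_add] at h2
    have h3 : HasRate (fun k => p l ω * (L ω + c k ω) * Q (-k) ((T ^ k) ω)) (-l) := by
      have e : ∀ k : ℤ, p l ω * (L ω + c k ω) * Q (-k) ((T ^ k) ω) =
          ∑ l₁ ∈ S', (p l ω * (L ω + c k ω) * q l₁ ω) * (q l₁ ω * Q (-k) ((T ^ k) ω)) := by
        intro k
        calc _ = p l ω * ((L ω + c k ω) * Q 0 ω) * Q (-k) ((T ^ k) ω) := by
              rw [add_mul _ _ (Q 0 ω), hL0.eq_mul, h.off_mul]
          _ = _ := by
            rw [← hQ0.sum_eq, Finset.mul_sum, Finset.mul_sum, Finset.sum_mul]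
            refine Finset.sum_congr rfl fun l₁ _ => ?_
            rw [← mul_assoc, ← mul_assoc (p l ω * (L ω + c k ω) * q l₁ ω),
              mul_assoc (p l ω * (L ω + c k ω)) (q l₁ ω) (q l₁ ω), hQ0.mul_self]
      simp only [e]
      by_cases hl : l ∈ S
      · refine HasRate.sum S' fun l₁ hl₁ => ?_
        have := (hL0.rate l hl l₁ hl₁).mul (hQ0.rate_inv l₁)
        rwa [show l₁ - l + -l₁ = -l by ring] at this
      · simpa [hS l hl] using HasRate.zero
    exact (((hF0.rate_inv l).add h1).add h2).sub h3

end IsTriangularCocycle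

end TriangularCocycle

section TriangularRegular

variable {Ω : Type*} [MeasurableSpace Ω] {μ : Measure Ω}
  {M : Type*} [NormedRing M] [CompleteSpace M] [MeasurableSpace M] [BorelSpace M]
  [SecondCountableTopology M]

namespace IsTriangularCocycle

variable {T : Equiv.Perm Ω} {Φ F Q c : ℤ → Ω → M}

/-- Solution of the twisted cohomological equation for a single pair of rates. -/
theorem exists_block_solution (h : IsTriangularCocycle T Φ F Q c) (hT : MeasurePreserving T μ μ)
    (hT' : MeasurePreserving ⇑T⁻¹ μ μ) (hcm : ∀ n, Measurable (c n)) {S S' : Finset ℝ}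
    {p q : ℝ → Ω → M} (hpm : ∀ l, Measurable (p l)) (hqm : ∀ l, Measurable (q l))
    (hS : ∀ l ∉ S, p l = 0) (hS' : ∀ l ∉ S', q l = 0)
    (hF : ∀ᵐ ω ∂μ, SplitsAt T F S p ω) (hQ : ∀ᵐ ω ∂μ, SplitsAt T Q S' q ω)
    (hc₁ : ∀ᵐ ω ∂μ, HasRate (fun n => c 1 ((T ^ n) ω)) 0)
    (hc₂ : ∀ᵐ ω ∂μ, HasRate (fun n => c (-1) ((T ^ n) ω)) 0) (l l' : ℝ) :
    ∃ L : Ω → M, Measurable L ∧ ∀ᵐ ω ∂μ, p l ω * L ω * q l' ω = L ω ∧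
      HasRate (fun k => L ω + p l ω * c k ω * q l' ω) (l' - l) ∧
      (l ≠ l' → ∀ k : ℤ, L ω + p l ω * c k ω * q l' ω =
        F (-k) ((T ^ k) ω) * L ((T ^ k) ω) * Q k ω) := by
  have hF' := ae_zpow_of_ae hT hT' hF
  have hQ' := ae_zpow_of_ae hT hT' hQ
  have hFc : ∀ᵐ ω ∂μ, ∀ n : ℤ, p l ω * F (-n) ((T ^ n) ω) =
      F (-n) ((T ^ n) ω) * p l ((T ^ n) ω) := by
    filter_upwards [hF'] with ω h1 n
    simpa using ((h1 n).comm l (-n)).symm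
  have htemp : ∀ s, (∀ᵐ ω ∂μ, HasRate (fun n => c s ((T ^ n) ω)) 0) →
      ∀ᵐ ω ∂μ, HasRate (fun n => p l ((T ^ n) ω) * c s ((T ^ n) ω) * q l' ((T ^ n) ω)) 0 := by
    intro s hs
    filter_upwards [hs, hF, hQ, hF', hQ'] with ω h1 h2 h3 h4 h5
    have e1 := h2.tempered h4 hS (fun k => h.left_inv k ω) l
    have e2 := h3.tempered h5 hS' (fun k => h.right_inv k ω) l'
    simpa using (e1.mul h1).mul e2
  obtain ⟨L, hLm, -, hL⟩ := exists_twisted_coboundary (μ := μ) hT hT'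
    (c := fun n ω => p l ω * c n ω * q l' ω)
    (x := fun n ω => p l ω * F (-n) ((T ^ n) ω)) (y := fun n ω => Q n ω * q l' ω) l l'
    (fun n => ((hpm l).mul (hcm n)).mul (hqm l'))
    (by
      filter_upwards [hF, hQ, hFc] with ω h1 h2 h3 m n
      have e1 : p l ω * F (-n) ((T ^ n) ω) * p l ((T ^ n) ω) = p l ω * F (-n) ((T ^ n) ω) := by
        rw [mul_assoc, ← h3, ← mul_assoc, h1.mul_self]
      have e2 : q l' ((T ^ n) ω) * (Q n ω * q l' ω) = Q n ω * q l' ω := by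
        rw [← mul_assoc, ← h2.comm, mul_assoc, h2.mul_self]
      rw [h.off_add, mul_add, add_mul]
      congr 1
      calc _ = p l ω * F (-n) ((T ^ n) ω) * c m ((T ^ n) ω) * (Q n ω * q l' ω) := by
            simp only [mul_assoc]
        _ = p l ω * F (-n) ((T ^ n) ω) * p l ((T ^ n) ω) * c m ((T ^ n) ω) *
            (q l' ((T ^ n) ω) * (Q n ω * q l' ω)) := by rw [e1, e2]
        _ = _ := by simp only [mul_assoc])
    (hF.mono fun ω h => h.rate_inv l) (hQ.mono fun ω h => h.rate l')
    (htemp 1 hc₁) (htemp (-1) hc₂)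
  refine ⟨fun ω => p l ω * L ω * q l' ω, ((hpm l).mul hLm).mul (hqm l'), ?_⟩
  filter_upwards [hL, hF, hQ, hFc] with ω h1 h2 h3 h4
  have e : ∀ k, p l ω * L ω * q l' ω + p l ω * c k ω * q l' ω =
      p l ω * (L ω + p l ω * c k ω * q l' ω) * q l' ω := by
    intro k
    rw [mul_add, add_mul, ← mul_assoc (p l ω), ← mul_assoc (p l ω), h2.mul_self,
      mul_assoc _ (q l' ω) (q l' ω), h3.mul_self]
  refine ⟨?_, ?_, fun hne k => ?_⟩
  · rw [← mul_assoc, ← mul_assoc, h2.mul_self, mul_assoc _ (q l' ω) (q l' ω), h3.mul_self]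
  · simp only [e]
    simpa using ((HasRate.const (p l ω)).mul h1.1).mul (HasRate.const (q l' ω))
  · rw [e, h1.2 hne]
    calc _ = p l ω * p l ω * F (-k) ((T ^ k) ω) * L ((T ^ k) ω) * (Q k ω * (q l' ω * q l' ω)) := by
          simp only [mul_assoc]
      _ = (p l ω * F (-k) ((T ^ k) ω)) * L ((T ^ k) ω) * (Q k ω * q l' ω) := by
          rw [h2.mul_self, h3.mul_self]
      _ = _ := by rw [h4, h3.comm]; simp only [mul_assoc]

/-- A triangular cocycle with regular diagonal blocks and tempered off-diagonal block is
regular. -/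
theorem isOseledetsRegular (h : IsTriangularCocycle T Φ F Q c) (hT : MeasurePreserving T μ μ)
    (hT' : MeasurePreserving ⇑T⁻¹ μ μ) (hcm : ∀ n, Measurable (c n))
    (hF : IsOseledetsRegular T μ F) (hQ : IsOseledetsRegular T μ Q)
    (hc₁ : ∀ᵐ ω ∂μ, HasRate (fun n => c 1 ((T ^ n) ω)) 0)
    (hc₂ : ∀ᵐ ω ∂μ, HasRate (fun n => c (-1) ((T ^ n) ω)) 0) :
    IsOseledetsRegular T μ Φ := by
  classical
  obtain ⟨S, p, hpm, hS, hF⟩ := hF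
  obtain ⟨S', q, hqm, hS', hQ⟩ := hQ
  choose L hLm hL using h.exists_block_solution hT hT' hcm hpm hqm hS hS' hF hQ hc₁ hc₂
  have hLtot : Measurable fun ω => ∑ l ∈ S, ∑ l' ∈ S', L l l' ω :=
    Finset.measurable_fun_sum _ fun l _ => Finset.measurable_fun_sum _ fun l' _ => hLm l l'
  have hL' : ∀ᵐ ω ∂μ, ∀ l ∈ S, ∀ l' ∈ S', p l ω * L l l' ω * q l' ω = L l l' ω ∧
      HasRate (fun k => L l l' ω + p l ω * c k ω * q l' ω) (l' - l) ∧
      (l ≠ l' → ∀ k : ℤ, L l l' ω + p l ω * c k ω * q l' ω =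
        F (-k) ((T ^ k) ω) * L l l' ((T ^ k) ω) * Q k ω) := by
    rw [eventually_all_finset]
    intro l _
    rw [eventually_all_finset]
    exact fun l' _ => hL l l'
  have hblock : ∀ᵐ ω ∂μ, ∀ l ∈ S, ∀ l' ∈ S',
      p l ω * (∑ l ∈ S, ∑ l' ∈ S', L l l' ω) * q l' ω = L l l' ω := by
    filter_upwards [hL', hF, hQ] with ω h1 h2 h3 l hl l' hl'
    rw [Finset.mul_sum, Finset.sum_mul, Finset.sum_eq_single_of_mem l hl]
    · rw [Finset.mul_sum, Finset.sum_mul, Finset.sum_eq_single_of_mem l' hl']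
      · exact (h1 l hl l' hl').1
      · intro b hb hne
        rw [← (h1 l hl b hb).1, mul_assoc, mul_assoc _ (q b ω), h3.mul_of_ne b l' hne]
        simp
    · intro b hb hne
      rw [Finset.mul_sum, Finset.sum_mul]
      refine Finset.sum_eq_zero fun b' hb' => ?_
      rw [← (h1 b hb b' hb').1, ← mul_assoc, ← mul_assoc, h2.mul_of_ne l b hne.symm]
      simp
  refine ⟨S ∪ S', _, fun l => (((hpm l).add (hqm l)).sub ((hpm l).mul hLtot)).add
    (hLtot.mul (hqm l)), ?_, ?_⟩
  · intro l hl
    rw [Finset.mem_union, not_or] at hl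
    ext ω
    simp [hS l hl.1, hS' l hl.2]
  have hsol : ∀ᵐ ω ∂μ, IsSolutionAt T F Q c S S' p q (fun ω => ∑ l ∈ S, ∑ l' ∈ S', L l l' ω) ω := by
    filter_upwards [hL', hF, hQ, hblock, ae_zpow_of_ae hT hT' hblock, ae_zpow_of_ae hT hT' hF,
      ae_zpow_of_ae hT hT' hL'] with ω h1 h2 h3 h4 h5 h6 h7
    refine ⟨?_, ?_, ?_, ?_⟩
    · simp only [Finset.mul_sum]
      refine Finset.sum_congr rfl fun l hl => Finset.sum_congr rfl fun l' hl' => ?_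
      rw [← (h1 l hl l' hl').1, ← mul_assoc, ← mul_assoc, h2.sum_mul_self hS]
    · simp only [Finset.sum_mul]
      refine Finset.sum_congr rfl fun l hl => Finset.sum_congr rfl fun l' hl' => ?_
      rw [← (h1 l hl l' hl').1, mul_assoc, h3.mul_sum_self hS']
    · intro l hl l' hl'
      have e := (h1 l hl l' hl').2.1
      simpa only [mul_add, add_mul, h4 l hl l' hl'] using e
    · intro l hl l' hl' hne k
      have e := (h1 l hl l' hl').2.2 hne k
      have e1 : p l ω * F (-k) ((T ^ k) ω) = F (-k) ((T ^ k) ω) * p l ((T ^ k) ω) := by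
        simpa using ((h6 k).comm l (-k)).symm
      have e2 : p l ω * (F (-k) ((T ^ k) ω) * (∑ l ∈ S, ∑ l' ∈ S', L l l' ((T ^ k) ω)) * Q k ω) *
          q l' ω = F (-k) ((T ^ k) ω) * L l l' ((T ^ k) ω) * Q k ω := by
        calc _ = (p l ω * F (-k) ((T ^ k) ω)) * (∑ l ∈ S, ∑ l' ∈ S', L l l' ((T ^ k) ω)) *
              (Q k ω * q l' ω) := by simp only [mul_assoc]
          _ = F (-k) ((T ^ k) ω) * (p l ((T ^ k) ω) * (∑ l ∈ S, ∑ l' ∈ S', L l l' ((T ^ k) ω)) *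
              q l' ((T ^ k) ω)) * Q k ω := by rw [e1, h3.comm]; simp only [mul_assoc]
          _ = _ := by rw [h5 k l hl l' hl']
      rw [mul_sub, sub_mul, e2, ← e, mul_add, add_mul, h4 l hl l' hl', sub_self]
  filter_upwards [ae_zpow_of_ae hT hT' hF, ae_zpow_of_ae hT hT' hQ, ae_zpow_of_ae hT hT' hsol]
    with ω h1 h2 h3
  exact h.splitsAt hS hS' h1 h2 h3

end IsTriangularCocycle

end TriangularRegular

section CocycleSystems

/-- The algebra of linear operators of Euclidean space. -/
abbrev EuclideanEnd (d : ℕ) := EuclideanSpace ℝ (Fin d) →L[ℝ] EuclideanSpace ℝ (Fin d)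

variable {Ω : Type*} [MeasurableSpace Ω] {d : ℕ}

/-- A log-integrable linear cocycle over `T` on the field of subspaces of `ℝ^d` given by the images
of the orthogonal projections `Φ 0 ω`. -/
structure IsCocycleSystem (T : Equiv.Perm Ω) (μ : Measure Ω) (Φ : ℤ → Ω → EuclideanEnd d) :
    Prop where
  measurable : ∀ n, Measurable (Φ n)
  cocycle : ∀ m n ω, Φ (m + n) ω = Φ m ((T ^ n) ω) * Φ n ω
  isSelfAdjoint : ∀ ω, IsSelfAdjoint (Φ 0 ω)
  integrable_one : Integrable (fun ω => Real.posLog ‖Φ 1 ω‖) μ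
  integrable_neg_one : Integrable (fun ω => Real.posLog ‖Φ (-1) ω‖) μ

/-- A measurable field of orthogonal projections onto subspaces invariant under `Φ`. -/
structure IsInvariantField (T : Equiv.Perm Ω) (Φ : ℤ → Ω → EuclideanEnd d)
    (R : Ω → EuclideanEnd d) : Prop where
  measurable : Measurable R
  mul_self : ∀ ω, R ω * R ω = R ω
  isSelfAdjoint : ∀ ω, IsSelfAdjoint (R ω)
  zero_mul : ∀ ω, Φ 0 ω * R ω = R ω
  invariant : ∀ n ω, R ((T ^ n) ω) * (Φ n ω * R ω) = Φ n ω * R ω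

variable {μ : Measure Ω} {T : Equiv.Perm Ω} {Φ : ℤ → Ω → EuclideanEnd d}
  {R : Ω → EuclideanEnd d}

theorem Equiv.Perm.zpow_neg_apply_zpow {Ω : Type*} (T : Equiv.Perm Ω) (n : ℤ) (ω : Ω) :
    (T ^ (-n)) ((T ^ n) ω) = ω := by
  rw [← Equiv.Perm.zpow_add_apply, neg_add_cancel, zpow_zero, Equiv.Perm.one_apply]

theorem norm_le_exp_posLog {W : Type*} [NormedAddCommGroup W] (x : W) :
    ‖x‖ ≤ Real.exp (Real.posLog ‖x‖) := by
  rcases (norm_nonneg x).eq_or_lt with h | h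
  · rw [← h]; positivity
  · calc ‖x‖ = Real.exp (Real.log ‖x‖) := (Real.exp_log h).symm
      _ ≤ _ := Real.exp_le_exp.mpr (le_max_right _ _)

theorem norm_le_one_of_isSelfAdjoint_mul_self {p : EuclideanEnd d} (h1 : p * p = p)
    (h2 : IsSelfAdjoint p) : ‖p‖ ≤ 1 :=
  IsStarProjection.norm_le p ⟨h1, h2⟩

theorem Measurable.integrable_posLog_norm_of_le {X Y : Ω → EuclideanEnd d} (hX : Measurable X)
    (hY : Integrable (fun ω => Real.posLog ‖Y ω‖) μ) (h : ∀ ω, ‖X ω‖ ≤ ‖Y ω‖) :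
    Integrable (fun ω => Real.posLog ‖X ω‖) μ := by
  refine hY.mono' (Real.continuous_posLog.measurable.comp hX.norm).aestronglyMeasurable
    (Eventually.of_forall fun ω => ?_)
  rw [Real.norm_of_nonneg Real.posLog_nonneg]
  exact Real.posLog_le_posLog (norm_nonneg _) (h ω)

namespace IsCocycleSystem

theorem zero_mul_self (h : IsCocycleSystem T μ Φ) (ω : Ω) : Φ 0 ω * Φ 0 ω = Φ 0 ω := by
  simpa using (h.cocycle 0 0 ω).symm

theorem zero_mul (h : IsCocycleSystem T μ Φ) (n : ℤ) (ω : Ω) :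
    Φ 0 ((T ^ n) ω) * Φ n ω = Φ n ω := by
  simpa using (h.cocycle 0 n ω).symm

theorem mul_zero (h : IsCocycleSystem T μ Φ) (n : ℤ) (ω : Ω) : Φ n ω * Φ 0 ω = Φ n ω := by
  simpa using (h.cocycle n 0 ω).symm

theorem mul_neg (h : IsCocycleSystem T μ Φ) (n : ℤ) (ω : Ω) :
    Φ n ω * Φ (-n) ((T ^ n) ω) = Φ 0 ((T ^ n) ω) := by
  simpa using (h.cocycle n (-n) ((T ^ n) ω)).symm

theorem neg_mul (h : IsCocycleSystem T μ Φ) (n : ℤ) (ω : Ω) :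
    Φ (-n) ((T ^ n) ω) * Φ n ω = Φ 0 ω := by
  simpa using (h.cocycle (-n) n ω).symm

theorem norm_zero_le (h : IsCocycleSystem T μ Φ) (ω : Ω) : ‖Φ 0 ω‖ ≤ 1 :=
  norm_le_one_of_isSelfAdjoint_mul_self (h.zero_mul_self ω) (h.isSelfAdjoint ω)

end IsCocycleSystem

namespace IsInvariantField

theorem mul_zero (hR : IsInvariantField T Φ R) (h : IsCocycleSystem T μ Φ) (ω : Ω) :
    R ω * Φ 0 ω = R ω := by
  have := congrArg star (hR.zero_mul ω)
  rwa [star_mul, (hR.isSelfAdjoint ω).star_eq, (h.isSelfAdjoint ω).star_eq] at this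

theorem norm_le (hR : IsInvariantField T Φ R) (ω : Ω) : ‖R ω‖ ≤ 1 :=
  norm_le_one_of_isSelfAdjoint_mul_self (hR.mul_self ω) (hR.isSelfAdjoint ω)

theorem compl_mul_self (hR : IsInvariantField T Φ R) (h : IsCocycleSystem T μ Φ) (ω : Ω) :
    (Φ 0 ω - R ω) * (Φ 0 ω - R ω) = Φ 0 ω - R ω := by
  rw [mul_sub, sub_mul, sub_mul, h.zero_mul_self, hR.mul_zero h, hR.zero_mul, hR.mul_self]
  abel

theorem compl_isSelfAdjoint (hR : IsInvariantField T Φ R) (h : IsCocycleSystem T μ Φ) (ω : Ω) :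
    IsSelfAdjoint (Φ 0 ω - R ω) := by
  have h1 := (h.isSelfAdjoint ω).star_eq
  have h2 := (hR.isSelfAdjoint ω).star_eq
  rw [ContinuousLinearMap.star_eq_adjoint] at h1 h2
  rw [IsSelfAdjoint, ContinuousLinearMap.star_eq_adjoint, map_sub, h1, h2]

theorem norm_compl_le (hR : IsInvariantField T Φ R) (h : IsCocycleSystem T μ Φ) (ω : Ω) :
    ‖Φ 0 ω - R ω‖ ≤ 1 :=
  norm_le_one_of_isSelfAdjoint_mul_self (hR.compl_mul_self h ω) (hR.compl_isSelfAdjoint h ω)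

theorem norm_mul_le (hR : IsInvariantField T Φ R) (n : ℤ) (ω : Ω) :
    ‖Φ n ω * R ω‖ ≤ ‖Φ n ω‖ :=
  (_root_.norm_mul_le _ _).trans (mul_le_of_le_one_right (norm_nonneg _) (hR.norm_le ω))

theorem compl_mul_mul (hR : IsInvariantField T Φ R) (h : IsCocycleSystem T μ Φ) (n : ℤ) (ω : Ω) :
    (Φ 0 ((T ^ n) ω) - R ((T ^ n) ω)) * (Φ n ω * R ω) = 0 := by
  rw [sub_mul, hR.invariant, ← mul_assoc, h.zero_mul, sub_self]

theorem isCocycleSystem_mul (hR : IsInvariantField T Φ R) (h : IsCocycleSystem T μ Φ) :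
    IsCocycleSystem T μ (fun n ω => Φ n ω * R ω) where
  measurable n := (h.measurable n).mul hR.measurable
  cocycle m n ω := by rw [mul_assoc, hR.invariant, ← mul_assoc, h.cocycle]
  isSelfAdjoint ω := by rw [hR.zero_mul]; exact hR.isSelfAdjoint ω
  integrable_one := ((h.measurable 1).mul hR.measurable).integrable_posLog_norm_of_le
    h.integrable_one (hR.norm_mul_le 1)
  integrable_neg_one := ((h.measurable (-1)).mul hR.measurable).integrable_posLog_norm_of_le
    h.integrable_neg_one (hR.norm_mul_le (-1))

theorem isCocycleSystem_compl (hR : IsInvariantField T Φ R) (h : IsCocycleSystem T μ Φ)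
    (hT : MeasurePreserving T μ μ) (hT' : MeasurePreserving ⇑T⁻¹ μ μ) :
    IsCocycleSystem T μ (fun n ω => (Φ 0 ((T ^ n) ω) - R ((T ^ n) ω)) * Φ n ω) := by
  have hm : ∀ n : ℤ, Measurable fun ω => (Φ 0 ((T ^ n) ω) - R ((T ^ n) ω)) * Φ n ω := fun n =>
    (((h.measurable 0).sub hR.measurable).comp (hT.perm_zpow hT' n).measurable).mul
      (h.measurable n)
  have hn : ∀ (n : ℤ) ω, ‖(Φ 0 ((T ^ n) ω) - R ((T ^ n) ω)) * Φ n ω‖ ≤ ‖Φ n ω‖ := fun n ω =>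
    (_root_.norm_mul_le _ _).trans
      (mul_le_of_le_one_left (norm_nonneg _) (hR.norm_compl_le h _))
  refine ⟨hm, fun m n ω => ?_, fun ω => ?_, (hm 1).integrable_posLog_norm_of_le h.integrable_one
    (hn 1), (hm (-1)).integrable_posLog_norm_of_le h.integrable_neg_one (hn (-1))⟩
  · have e : (Φ 0 ((T ^ m) ((T ^ n) ω)) - R ((T ^ m) ((T ^ n) ω))) *
        (Φ m ((T ^ n) ω) * R ((T ^ n) ω)) = 0 := hR.compl_mul_mul h m _
    have e' : Φ m ((T ^ n) ω) * ((Φ 0 ((T ^ n) ω) - R ((T ^ n) ω)) * Φ n ω) =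
        Φ (m + n) ω - Φ m ((T ^ n) ω) * R ((T ^ n) ω) * Φ n ω := by
      rw [sub_mul, mul_sub, h.zero_mul, h.cocycle, mul_assoc]
    rw [mul_assoc, e', mul_sub, ← mul_assoc _ (_ * _) (Φ n ω), e, MulZeroClass.zero_mul, sub_zero,
      Equiv.Perm.zpow_add_apply]
  · simp only [zpow_zero, Equiv.Perm.coe_one, id_eq]
    rw [sub_mul, h.zero_mul_self, hR.mul_zero h]
    exact hR.compl_isSelfAdjoint h ω

/-- An invariant field of subspaces puts the cocycle into block triangular form. -/
theorem isTriangularCocycle (hR : IsInvariantField T Φ R) (h : IsCocycleSystem T μ Φ) :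
    IsTriangularCocycle T Φ (fun n ω => Φ n ω * R ω)
      (fun n ω => (Φ 0 ((T ^ n) ω) - R ((T ^ n) ω)) * Φ n ω)
      (fun n ω => Φ (-n) ((T ^ n) ω) * R ((T ^ n) ω) * Φ n ω * (Φ 0 ω - R ω)) := by
  have hS0 : ∀ ω, (Φ 0 ω - R ω) * Φ 0 ω = Φ 0 ω - R ω := fun ω => by
    rw [sub_mul, h.zero_mul_self, hR.mul_zero h]
  have hRS : ∀ ω, R ω * (Φ 0 ω - R ω) = 0 := fun ω => by
    rw [mul_sub, hR.mul_zero h, hR.mul_self, sub_self]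
  have hSR : ∀ ω, (Φ 0 ω - R ω) * R ω = 0 := fun ω => by
    rw [sub_mul, hR.zero_mul, hR.mul_self, sub_self]
  have hleft : ∀ (n : ℤ) ω, Φ n ω * R ω * (Φ (-n) ((T ^ n) ω) * R ((T ^ n) ω)) =
      R ((T ^ n) ω) := by
    intro n ω
    have := hR.invariant (-n) ((T ^ n) ω)
    rw [Equiv.Perm.zpow_neg_apply_zpow] at this
    rw [mul_assoc, this, ← mul_assoc, h.mul_neg, hR.zero_mul]
  have hleft' : ∀ (n : ℤ) ω, Φ (-n) ((T ^ n) ω) * R ((T ^ n) ω) * (Φ n ω * R ω) = R ω := by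
    intro n ω
    rw [mul_assoc, hR.invariant, ← mul_assoc, h.neg_mul, hR.zero_mul]
  have hQR : ∀ (n : ℤ) ω, (Φ 0 ((T ^ n) ω) - R ((T ^ n) ω)) * Φ n ω * (Φ 0 ω - R ω) =
      (Φ 0 ((T ^ n) ω) - R ((T ^ n) ω)) * Φ n ω := by
    intro n ω
    rw [mul_sub, mul_assoc, mul_assoc, hR.compl_mul_mul h, h.mul_zero, sub_zero]
  refine ⟨?_, ?_, ?_, ?_, ?_, ?_, ?_, ?_, ?_, ?_, ?_, ?_, ?_⟩
  · intro n ω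
    have e : Φ n ω * R ω * (Φ (-n) ((T ^ n) ω) * R ((T ^ n) ω) * Φ n ω * (Φ 0 ω - R ω)) =
        R ((T ^ n) ω) * Φ n ω - Φ n ω * R ω := by
      rw [← mul_assoc, ← mul_assoc, hleft, mul_sub, mul_assoc, mul_assoc, h.mul_zero, hR.invariant]
    rw [e, sub_mul, h.zero_mul]
    abel
  · intro ω
    simp only [zpow_zero, Equiv.Perm.coe_one, id_eq]
    rw [hR.zero_mul, hS0]
    abel
  · intro ω
    simp only [zpow_zero, Equiv.Perm.coe_one, id_eq]
    rw [hR.zero_mul, hS0, hRS]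
  · intro ω
    simp only [zpow_zero, Equiv.Perm.coe_one, id_eq]
    rw [hR.zero_mul, hS0, hSR]
  · intro n ω
    rw [hR.zero_mul, hR.invariant]
  · intro n ω
    rw [hR.zero_mul, mul_assoc, hR.mul_self]
  · intro n ω
    simp only [zpow_zero, Equiv.Perm.coe_one, id_eq]
    rw [hS0, ← mul_assoc, hR.compl_mul_self h]
  · intro n ω
    simp only [zpow_zero, Equiv.Perm.coe_one, id_eq]
    rw [hS0, hQR]
  · intro n ω
    have := hR.invariant (-n) ((T ^ n) ω)
    rw [Equiv.Perm.zpow_neg_apply_zpow] at this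
    rw [hR.zero_mul]
    simp only [← mul_assoc]
    rw [mul_assoc (R ω), this]
  · intro n ω
    simp only [zpow_zero, Equiv.Perm.coe_one, id_eq]
    rw [hS0, mul_assoc, hR.compl_mul_self h]
  · intro n ω
    rw [hleft, hR.zero_mul]
  · intro n ω
    simp only [Equiv.Perm.zpow_neg_apply_zpow, zpow_zero, Equiv.Perm.coe_one, id_eq]
    rw [hS0, ← mul_assoc, hQR, mul_assoc, h.mul_neg, hS0]
  · intro m n ω
    have e1 : Φ (-(m + n)) ((T ^ (m + n)) ω) * R ((T ^ (m + n)) ω) =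
        Φ (-n) ((T ^ n) ω) * R ((T ^ n) ω) *
          (Φ (-m) ((T ^ m) ((T ^ n) ω)) * R ((T ^ m) ((T ^ n) ω))) := by
      have := hR.invariant (-m) ((T ^ m) ((T ^ n) ω))
      rw [Equiv.Perm.zpow_neg_apply_zpow] at this
      rw [mul_assoc, this, ← mul_assoc, neg_add_rev, h.cocycle, ← Equiv.Perm.zpow_add_apply,
        ← Equiv.Perm.zpow_add_apply,
        neg_add_cancel_left]
    have e2 : Φ (m + n) ω = Φ m ((T ^ n) ω) * R ((T ^ n) ω) * Φ n ω +
        Φ m ((T ^ n) ω) * (Φ 0 ((T ^ n) ω) - R ((T ^ n) ω)) * Φ n ω := by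
      rw [← add_mul, ← mul_add, add_sub_cancel, h.mul_zero, h.cocycle]
    have e3 := hleft' m ((T ^ n) ω)
    rw [e1, e2, mul_add, add_mul]
    congr 1
    · calc _ = Φ (-n) ((T ^ n) ω) * R ((T ^ n) ω) * (Φ (-m) ((T ^ m) ((T ^ n) ω)) *
            R ((T ^ m) ((T ^ n) ω)) * (Φ m ((T ^ n) ω) * R ((T ^ n) ω))) * Φ n ω *
            (Φ 0 ω - R ω) := by simp only [mul_assoc]
        _ = _ := by rw [e3, mul_assoc (Φ (-n) _), hR.mul_self]
    · have e4 := hQR n ω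
      have e5 := hR.compl_mul_self h ((T ^ n) ω)
      calc _ = Φ (-n) ((T ^ n) ω) * R ((T ^ n) ω) * (Φ (-m) ((T ^ m) ((T ^ n) ω)) *
            R ((T ^ m) ((T ^ n) ω)) * Φ m ((T ^ n) ω)) * ((Φ 0 ((T ^ n) ω) - R ((T ^ n) ω)) *
            Φ n ω * (Φ 0 ω - R ω)) := by simp only [mul_assoc]
        _ = Φ (-n) ((T ^ n) ω) * R ((T ^ n) ω) * (Φ (-m) ((T ^ m) ((T ^ n) ω)) *
            R ((T ^ m) ((T ^ n) ω)) * Φ m ((T ^ n) ω)) * (((Φ 0 ((T ^ n) ω) - R ((T ^ n) ω)) *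
            (Φ 0 ((T ^ n) ω) - R ((T ^ n) ω))) * Φ n ω) := by rw [e4, e5]
        _ = _ := by simp only [mul_assoc]

end IsInvariantField

variable [IsProbabilityMeasure μ]

theorem HasRate.of_exp_le {W : Type*} [NormedAddCommGroup W] {u : ℤ → W} {g : ℤ → ℝ}
    (hg : ∀ ε > 0, ∃ K, ∀ k : ℤ, g k ≤ K + ε * |(k : ℝ)|) (h : ∀ k, ‖u k‖ ≤ Real.exp (g k)) :
    HasRate u 0 := by
  intro ε hε
  obtain ⟨K, hK⟩ := hg ε hε
  refine ⟨Real.exp K, fun k => (h k).trans ?_⟩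
  rw [← Real.exp_add, MulZeroClass.zero_mul, zero_add]
  exact Real.exp_le_exp.mpr (hK k)

theorem ae_hasRate_of_integrable_posLog (hT : Ergodic T μ) (hT' : Ergodic ⇑T⁻¹ μ)
    {X : Ω → EuclideanEnd d} (hX : Measurable X)
    (hi : Integrable (fun ω => Real.posLog ‖X ω‖) μ) :
    ∀ᵐ ω ∂μ, HasRate (fun k => X ((T ^ k) ω)) 0 := by
  filter_upwards [ae_zpow_le_add_mul hT hT'
    (Real.continuous_posLog.measurable.comp hX.norm) hi] with ω h
  exact HasRate.of_exp_le h fun k => norm_le_exp_posLog _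

/-- Regularity of a cocycle follows from regularity of the restriction to an invariant field of
subspaces and of the induced cocycle on the orthogonal complement. -/
theorem IsInvariantField.isOseledetsRegular (hR : IsInvariantField T Φ R)
    (h : IsCocycleSystem T μ Φ) (hT : Ergodic T μ) (hT' : Ergodic ⇑T⁻¹ μ)
    (hF : IsOseledetsRegular T μ (fun n ω => Φ n ω * R ω))
    (hQ : IsOseledetsRegular T μ (fun n ω => (Φ 0 ((T ^ n) ω) - R ((T ^ n) ω)) * Φ n ω)) :
    IsOseledetsRegular T μ Φ := by
  have hmp := hT.toMeasurePreserving
  have hmp' := hT'.toMeasurePreserving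
  have htemp : ∀ s, (∀ᵐ ω ∂μ, HasRate (fun k : ℤ => Φ s ((T ^ k) ω)) 0) →
      (∀ᵐ ω ∂μ, HasRate (fun k : ℤ => Φ (-s) ((T ^ k) ω)) 0) →
      ∀ᵐ ω ∂μ, HasRate (fun k : ℤ => Φ (-s) ((T ^ s) ((T ^ k) ω)) * R ((T ^ s) ((T ^ k) ω)) *
        Φ s ((T ^ k) ω) * (Φ 0 ((T ^ k) ω) - R ((T ^ k) ω))) 0 := by
    intro s h1 h2
    filter_upwards [h1, ae_zpow_of_ae hmp hmp' h2] with ω h1 h2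
    have h3 : HasRate (fun k : ℤ => Φ (-s) ((T ^ s) ((T ^ k) ω))) 0 := by
      have := h2 s
      simp only [← Equiv.Perm.zpow_add_apply] at this ⊢
      simpa only [add_comm] using this
    intro ε hε
    obtain ⟨K1, hK1⟩ := h1 (ε / 2) (half_pos hε)
    obtain ⟨K2, hK2⟩ := h3 (ε / 2) (half_pos hε)
    refine ⟨K2 * K1, fun k => ?_⟩
    have e1 : ‖Φ (-s) ((T ^ s) ((T ^ k) ω)) * R ((T ^ s) ((T ^ k) ω))‖ ≤ _ :=
      (hR.norm_mul_le (-s) _).trans (hK2 k)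
    calc _ ≤ ‖Φ (-s) ((T ^ s) ((T ^ k) ω)) * R ((T ^ s) ((T ^ k) ω)) * Φ s ((T ^ k) ω)‖ :=
          (_root_.norm_mul_le _ _).trans
            (mul_le_of_le_one_right (norm_nonneg _) (hR.norm_compl_le h _))
      _ ≤ _ := (_root_.norm_mul_le _ _).trans
        (mul_le_mul e1 (hK1 k) (norm_nonneg _) ((norm_nonneg _).trans e1))
      _ = _ := by
        rw [mul_mul_mul_comm, ← Real.exp_add]
        congr 2
        ring
  have hr1 := ae_hasRate_of_integrable_posLog hT hT' (h.measurable 1) h.integrable_one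
  have hr2 := ae_hasRate_of_integrable_posLog hT hT' (h.measurable (-1)) h.integrable_neg_one
  refine (hR.isTriangularCocycle h).isOseledetsRegular hmp hmp' (fun n => ?_) hF hQ
    (htemp 1 hr1 hr2) (htemp (-1) hr2 (by simpa using hr1))
  have hTn := (hmp.perm_zpow hmp' n).measurable
  exact ((((h.measurable (-n)).comp hTn).mul (hR.measurable.comp hTn)).mul (h.measurable n)).mul
    ((h.measurable 0).sub hR.measurable)

end CocycleSystems

section MeasurableProjection

variable {Ω : Type*} [MeasurableSpace Ω] {d : ℕ}

/-- A field of operators of Euclidean space with measurable entries is measurable. -/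
theorem measurable_euclideanEnd {X : Ω → EuclideanEnd d}
    (h : ∀ i j, Measurable fun ω => inner ℝ (EuclideanSpace.single i (1 : ℝ))
      (X ω (EuclideanSpace.single j 1))) : Measurable X := by
  have : X = fun ω => ∑ i, ∑ j, (inner ℝ (EuclideanSpace.single i (1 : ℝ))
      (X ω (EuclideanSpace.single j 1))) •
        Matrix.toEuclideanCLM (𝕜 := ℝ) (Matrix.single i j (1 : ℝ)) := by
    funext ω
    refine ContinuousLinearMap.coe_injective
      ((EuclideanSpace.basisFun (Fin d) ℝ).toBasis.ext fun k => ?_)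
    ext l
    simp [EuclideanSpace.inner_single_left, Matrix.single_apply, ite_and]
  rw [this]
  exact Finset.measurable_fun_sum _ fun i _ => Finset.measurable_fun_sum _ fun j _ =>
    (h i j).smul_const _

/-- The subspace of vectors with bounded images under a family of operators. -/
def boundedSubmodule {ι : Type*} (Z : ι → EuclideanEnd d) :
    Submodule ℝ (EuclideanSpace ℝ (Fin d)) where
  carrier := {v | ∃ C : ℝ, ∀ i, ‖Z i v‖ ≤ C}
  zero_mem' := ⟨0, fun i => by simp⟩
  add_mem' := by
    rintro v w ⟨C, hC⟩ ⟨C', hC'⟩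
    exact ⟨C + C', fun i => by
      rw [map_add]
      exact (norm_add_le _ _).trans (add_le_add (hC i) (hC' i))⟩
  smul_mem' := by
    rintro a v ⟨C, hC⟩
    exact ⟨‖a‖ * C, fun i => by
      rw [map_smul, norm_smul]
      exact mul_le_mul_of_nonneg_left (hC i) (norm_nonneg _)⟩

theorem norm_sub_starProjection_lt_iff (F : Submodule ℝ (EuclideanSpace ℝ (Fin d)))
    (x : EuclideanSpace ℝ (Fin d)) (r : ℝ) :
    ‖x - F.starProjection x‖ < r ↔ ∃ v ∈ F, ‖x - v‖ < r := by
  rw [Submodule.starProjection_minimal, ciInf_lt_iff]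
  · simp
  · exact ⟨0, by rintro _ ⟨v, rfl⟩; exact norm_nonneg _⟩

/-- Compactness reduces proximity to `boundedSubmodule` to conditions on finitely many operators
and vectors in a countable dense set. -/
theorem norm_sub_starProjection_boundedSubmodule_lt_iff {ι : Type*} (Z : ι → EuclideanEnd d)
    (x : EuclideanSpace ℝ (Fin d)) (r : ℝ) :
    ‖x - (boundedSubmodule Z).starProjection x‖ < r ↔
      ∃ q : ℚ, (q : ℝ) < r ∧ ∃ C : ℕ, ∀ s : Finset ι, ∃ k : ℕ,
        ‖x - TopologicalSpace.denseSeq _ k‖ < q ∧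
        ∀ i ∈ s, ‖Z i (TopologicalSpace.denseSeq _ k)‖ < C := by
  rw [norm_sub_starProjection_lt_iff]
  constructor
  · rintro ⟨v, ⟨C, hC⟩, hv⟩
    obtain ⟨q, hq1, hq2⟩ := exists_rat_btwn hv
    obtain ⟨C', hC'⟩ := exists_nat_gt C
    refine ⟨q, hq2, C', fun s => ?_⟩
    have hopen : IsOpen ({w | ‖x - w‖ < q} ∩ ⋂ i ∈ s, {w | ‖Z i w‖ < C'}) := by
      refine (isOpen_lt (by fun_prop) continuous_const).inter
        (isOpen_biInter_finset fun i _ => isOpen_lt (by fun_prop) continuous_const)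
    obtain ⟨k, hw⟩ :=
      (TopologicalSpace.denseRange_denseSeq (EuclideanSpace ℝ (Fin d))).exists_mem_open hopen
        ⟨v, hq1, by simpa using fun i _ => (hC i).trans_lt hC'⟩
    exact ⟨k, hw.1, by simpa using hw.2⟩
  · rintro ⟨q, hq, C, h⟩
    obtain ⟨v, hv1, hv2⟩ := (isCompact_closedBall x (q : ℝ)).inter_iInter_nonempty
      (fun i : ι => {w | ‖Z i w‖ ≤ C}) (fun i => isClosed_le (by fun_prop) continuous_const)
      (fun s => by
        obtain ⟨k, hk1, hk2⟩ := h s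
        refine ⟨TopologicalSpace.denseSeq _ k, ?_, ?_⟩
        · rw [mem_closedBall_iff_norm']
          exact hk1.le
        · simpa using fun i hi => (hk2 i hi).le)
    refine ⟨v, ⟨C, by simpa using hv2⟩, ?_⟩
    rw [mem_closedBall_iff_norm'] at hv1
    exact hv1.trans_lt hq

theorem measurable_starProjection_boundedSubmodule {ι : Type*} [Countable ι]
    {Z : ι → Ω → EuclideanEnd d} (hZ : ∀ i, Measurable (Z i)) :
    Measurable fun ω => (boundedSubmodule fun i => Z i ω).starProjection := by
  have hdist : ∀ x, Measurable fun ω =>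
      ‖x - (boundedSubmodule fun i => Z i ω).starProjection x‖ := by
    intro x
    refine measurable_of_Iio fun r => ?_
    have hZv : ∀ i v, Measurable fun ω => ‖Z i ω v‖ := fun i v =>
      ((ContinuousLinearMap.apply ℝ _ v).continuous.measurable.comp (hZ i)).norm
    have : (fun ω => ‖x - (boundedSubmodule fun i => Z i ω).starProjection x‖) ⁻¹' Set.Iio r =
        {ω | ∃ q : ℚ, (q : ℝ) < r ∧ ∃ C : ℕ, ∀ s : Finset ι, ∃ k : ℕ,
          ‖x - TopologicalSpace.denseSeq _ k‖ < q ∧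
          ∀ i ∈ s, ‖Z i ω (TopologicalSpace.denseSeq _ k)‖ < C} := by
      ext ω
      exact norm_sub_starProjection_boundedSubmodule_lt_iff (fun i => Z i ω) x r
    rw [this]
    refine Measurable.setOf (.exists fun q => .and measurable_const (.exists fun C =>
      .forall fun s => .exists fun k => .and measurable_const (.forall fun i =>
        .imp measurable_const ?_)))
    exact measurableSet_setOfPred.1 (measurableSet_lt (hZv _ _) measurable_const)
  have hself : ∀ x, Measurable fun ω =>
      inner ℝ x ((boundedSubmodule fun i => Z i ω).starProjection x) := by
    intro x
    have : ∀ ω, inner ℝ x ((boundedSubmodule fun i => Z i ω).starProjection x) =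
        ‖x‖ ^ 2 - ‖x - (boundedSubmodule fun i => Z i ω).starProjection x‖ ^ 2 := by
      intro ω
      have h1 := Submodule.starProjection_inner_eq_zero (K := boundedSubmodule fun i => Z i ω) x _
        (Submodule.starProjection_apply_mem _ x)
      rw [inner_sub_left, real_inner_self_eq_norm_sq] at h1
      rw [norm_sub_sq_real]
      linarith
    simp only [this]
    exact measurable_const.sub ((hdist x).pow_const 2)
  refine measurable_euclideanEnd fun i j => ?_
  generalize EuclideanSpace.single i (1 : ℝ) = x
  generalize EuclideanSpace.single j (1 : ℝ) = y
  have : ∀ ω, inner ℝ x ((boundedSubmodule fun i => Z i ω).starProjection y) =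
      (inner ℝ (x + y) ((boundedSubmodule fun i => Z i ω).starProjection (x + y)) -
        inner ℝ x ((boundedSubmodule fun i => Z i ω).starProjection x) -
        inner ℝ y ((boundedSubmodule fun i => Z i ω).starProjection y)) / 2 := by
    intro ω
    have h1 : inner ℝ y ((boundedSubmodule fun i => Z i ω).starProjection x) =
        inner ℝ x ((boundedSubmodule fun i => Z i ω).starProjection y) := by
      rw [real_inner_comm]
      exact Submodule.starProjection_isSymmetric _ x y
    rw [map_add, inner_add_left, inner_add_right, inner_add_right, h1]
    ring
  simp only [this]
  exact (((hself _).sub (hself _)).sub (hself _)).div_const 2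

end MeasurableProjection

section InvariantFields

variable {Ω : Type*} {d : ℕ} {Φ : ℤ → Ω → EuclideanEnd d}

/-- The operators whose simultaneous boundedness on a vector expresses that this vector lies in the
image of `Φ 0` and grows at rate at most `c`. -/
noncomputable def growthFamily (Φ : ℤ → Ω → EuclideanEnd d) (c : ℝ) :
    ℕ ⊕ ℕ → Ω → EuclideanEnd d
  | Sum.inl n => fun ω => (n : ℝ) • (1 - Φ 0 ω)
  | Sum.inr n => fun ω => Real.exp (-(n * c)) • Φ n ω

/-- The vectors in the image of `Φ 0 ω` whose forward growth rate is at most `c`. -/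
noncomputable def slowSubmodule (Φ : ℤ → Ω → EuclideanEnd d) (c : ℝ) (ω : Ω) :
    Submodule ℝ (EuclideanSpace ℝ (Fin d)) :=
  boundedSubmodule fun i => growthFamily Φ c i ω

theorem mem_slowSubmodule {c : ℝ} {ω : Ω} {v : EuclideanSpace ℝ (Fin d)} :
    v ∈ slowSubmodule Φ c ω ↔
      Φ 0 ω v = v ∧ ∃ C : ℝ, ∀ n : ℕ, ‖Φ n ω v‖ ≤ C * Real.exp (n * c) := by
  constructor
  · rintro ⟨C, hC⟩
    refine ⟨?_, C, fun n => ?_⟩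
    · by_contra hne
      have hpos : 0 < ‖v - Φ 0 ω v‖ := norm_pos_iff.2 (sub_ne_zero.2 (Ne.symm hne))
      obtain ⟨n, hn⟩ := exists_nat_gt (C / ‖v - Φ 0 ω v‖)
      have h1 := hC (Sum.inl n)
      simp only [growthFamily, smul_apply, norm_smul, Real.norm_natCast,
        sub_apply, one_apply_eq_self] at h1
      rw [div_lt_iff₀ hpos] at hn
      linarith
    · have h1 := hC (Sum.inr n)
      simp only [growthFamily, smul_apply, norm_smul, Real.norm_eq_abs,
        Real.abs_exp] at h1
      rw [Real.exp_neg, inv_mul_le_iff₀ (Real.exp_pos _)] at h1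
      linarith
  · rintro ⟨h0, C, hC⟩
    refine ⟨max C 0, ?_⟩
    rintro (n | n)
    · simp [growthFamily, h0]
    · simp only [growthFamily, smul_apply, norm_smul, Real.norm_eq_abs,
        Real.abs_exp]
      rw [Real.exp_neg, inv_mul_le_iff₀ (Real.exp_pos _), mul_comm]
      exact (hC n).trans (mul_le_mul_of_nonneg_right (le_max_left _ _) (Real.exp_pos _).le)

/-- The field of orthogonal projections onto the vectors of growth rate at most `c`. -/
noncomputable def slowProjection (Φ : ℤ → Ω → EuclideanEnd d) (c : ℝ) (ω : Ω) : EuclideanEnd d :=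
  (slowSubmodule Φ c ω).starProjection

theorem slowProjection_apply_mem (c : ℝ) (ω : Ω) (v : EuclideanSpace ℝ (Fin d)) :
    slowProjection Φ c ω v ∈ slowSubmodule Φ c ω :=
  Submodule.starProjection_apply_mem _ _

theorem slowProjection_apply_eq_self {c : ℝ} {ω : Ω} {v : EuclideanSpace ℝ (Fin d)}
    (hv : v ∈ slowSubmodule Φ c ω) : slowProjection Φ c ω v = v :=
  Submodule.starProjection_eq_self_iff.2 hv

variable [MeasurableSpace Ω] {μ : Measure Ω} {T : Equiv.Perm Ω}

theorem IsCocycleSystem.apply_mem_slowSubmodule (h : IsCocycleSystem T μ Φ) {c : ℝ} {ω : Ω}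
    {v : EuclideanSpace ℝ (Fin d)} (hv : v ∈ slowSubmodule Φ c ω) (n : ℤ) :
    Φ n ω v ∈ slowSubmodule Φ c ((T ^ n) ω) := by
  obtain ⟨-, C, hC⟩ := mem_slowSubmodule.1 hv
  rw [mem_slowSubmodule]
  have hcoc : ∀ m, Φ m ((T ^ n) ω) (Φ n ω v) = Φ (m + n) ω v := fun m => by
    rw [h.cocycle]; rfl
  simp only [hcoc]
  refine ⟨by rw [zero_add], ∑ j ∈ Finset.range n.natAbs, ‖Φ (j + n) ω v‖ * Real.exp (-(j * c)) +
    C * Real.exp (n * c), fun k => ?_⟩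
  have hC0 : 0 ≤ C := by simpa using (norm_nonneg _).trans (hC 0)
  rw [add_mul]
  by_cases hk : k < n.natAbs
  · have h1 := Finset.single_le_sum
      (f := fun j : ℕ => ‖Φ (j + n) ω v‖ * Real.exp (-(j * c))) (fun j _ => by positivity)
      (Finset.mem_range.2 hk)
    have h2 := mul_le_mul_of_nonneg_right h1 (Real.exp_pos (k * c)).le
    rw [mul_assoc, ← Real.exp_add, neg_add_cancel, Real.exp_zero, mul_one] at h2
    have : 0 ≤ C * Real.exp (n * c) * Real.exp (k * c) := by positivity
    linarith
  · obtain ⟨m, hm⟩ : ∃ m : ℕ, (k : ℤ) + n = m := Int.eq_ofNat_of_zero_le (by omega)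
    have h1 := hC m
    have hm' : (m : ℝ) = k + n := by exact_mod_cast hm.symm
    rw [hm, mul_assoc C, ← Real.exp_add, ← add_mul, add_comm (n : ℝ), ← hm']
    exact h1.trans (le_add_of_nonneg_left (mul_nonneg
      (Finset.sum_nonneg fun j _ => by positivity) (Real.exp_pos _).le))

theorem IsCocycleSystem.isInvariantField_slowProjection (h : IsCocycleSystem T μ Φ) (c : ℝ) :
    IsInvariantField T Φ (slowProjection Φ c) where
  measurable := by
    refine measurable_starProjection_boundedSubmodule (Z := growthFamily Φ c) ?_
    rintro (n | n)
    · exact (measurable_const.sub (h.measurable 0)).const_smul (n : ℝ)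
    · exact (h.measurable n).const_smul (Real.exp (-(n * c)))
  mul_self ω := Submodule.isIdempotentElem_starProjection _
  isSelfAdjoint ω := isSelfAdjoint_starProjection _
  zero_mul ω := by
    ext1 v
    exact (mem_slowSubmodule.1 (slowProjection_apply_mem c ω v)).1
  invariant n ω := by
    ext1 v
    exact slowProjection_apply_eq_self
      (h.apply_mem_slowSubmodule (slowProjection_apply_mem c ω v) n)

end InvariantFields

section Irreducible

variable {Ω : Type*} [MeasurableSpace Ω] {d : ℕ} {μ : Measure Ω} {T : Equiv.Perm Ω}
  {Φ : ℤ → Ω → EuclideanEnd d} {R : Ω → EuclideanEnd d}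

theorem Ergodic.ae_or_ae_not {f : Ω → Ω} (hf : Ergodic f μ) {p : Ω → Prop}
    (hp : MeasurableSet {ω | p ω}) (h : ∀ ω, p (f ω) ↔ p ω) :
    (∀ᵐ ω ∂μ, p ω) ∨ ∀ᵐ ω ∂μ, ¬ p ω :=
  hf.ae_mem_or_ae_notMem hp (by ext ω; exact h ω)

namespace IsCocycleSystem

theorem isInvariantField_zero (h : IsCocycleSystem T μ Φ) : IsInvariantField T Φ (Φ 0) where
  measurable := h.measurable 0
  mul_self := h.zero_mul_self
  isSelfAdjoint := h.isSelfAdjoint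
  zero_mul := h.zero_mul_self
  invariant n ω := by rw [h.mul_zero, h.zero_mul]

/-- The cocycle over `T⁻¹` obtained by reversing time. -/
theorem reverse (h : IsCocycleSystem T μ Φ) : IsCocycleSystem T⁻¹ μ (fun n => Φ (-n)) where
  measurable n := h.measurable (-n)
  cocycle m n ω := by rw [neg_add, h.cocycle, inv_zpow']
  isSelfAdjoint ω := by rw [neg_zero]; exact h.isSelfAdjoint ω
  integrable_one := h.integrable_neg_one
  integrable_neg_one := by rw [neg_neg]; exact h.integrable_one

theorem norm_le_exp_birkhoffSum (h : IsCocycleSystem T μ Φ) (n : ℕ) (ω : Ω) :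
    ‖Φ n ω‖ ≤ Real.exp (birkhoffSum T (fun ω => Real.posLog ‖Φ 1 ω‖) n ω) := by
  induction n with
  | zero => simpa using h.norm_zero_le ω
  | succ n ih =>
    rw [birkhoffSum_succ, add_comm (birkhoffSum _ _ _ _), Real.exp_add, Nat.cast_succ,
      add_comm (n : ℤ), h.cocycle, Equiv.Perm.iterate_apply_eq_zpow]
    exact (_root_.norm_mul_le _ _).trans
      (mul_le_mul (norm_le_exp_posLog _) ih (norm_nonneg _) (Real.exp_pos _).le)

theorem exists_ae_norm_le [IsProbabilityMeasure μ] (h : IsCocycleSystem T μ Φ)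
    (hT : Ergodic T μ) :
    ∃ c : ℝ, ∀ᵐ ω ∂μ, ∃ b : ℝ, ∀ n : ℕ, ‖Φ n ω‖ ≤ Real.exp (n * c + b) := by
  refine ⟨∫ ω, Real.posLog ‖Φ 1 ω‖ ∂μ + 1, ?_⟩
  filter_upwards [birkhoffSum_le_of_integral_lt hT
    (Real.continuous_posLog.measurable.comp (h.measurable 1).norm) h.integrable_one
    (lt_add_one _)] with ω ⟨b, hb⟩
  exact ⟨b, fun n => (h.norm_le_exp_birkhoffSum n ω).trans (Real.exp_le_exp.2 (hb n))⟩

theorem norm_apply_eq_iterate (h : IsCocycleSystem T μ Φ) (n : ℕ)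
    (p : Ω × EuclideanSpace ℝ (Fin d)) :
    ‖Φ 0 ((fun p : Ω × EuclideanSpace ℝ (Fin d) => (T p.1, Φ 1 p.1 p.2))^[n] p).1
      ((fun p : Ω × EuclideanSpace ℝ (Fin d) => (T p.1, Φ 1 p.1 p.2))^[n] p).2‖ =
      ‖Φ n p.1 p.2‖ := by
  have key : ∀ n : ℕ,
      ((fun p : Ω × EuclideanSpace ℝ (Fin d) => (T p.1, Φ 1 p.1 p.2))^[n] p).1 =
        (T ^ (n : ℤ)) p.1 ∧
      Φ 0 ((T ^ (n : ℤ)) p.1)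
        ((fun p : Ω × EuclideanSpace ℝ (Fin d) => (T p.1, Φ 1 p.1 p.2))^[n] p).2 =
      Φ n p.1 p.2 := by
    intro n
    induction n with
    | zero => simp
    | succ n ih =>
      rw [Function.iterate_succ_apply']
      have e1 : (T ^ ((n + 1 : ℕ) : ℤ)) p.1 = T ((T ^ (n : ℤ)) p.1) := by
        rw [Nat.cast_succ, add_comm, Equiv.Perm.zpow_add_apply, zpow_one]
      refine ⟨by simp only [ih.1, e1], ?_⟩
      have e2 : Φ ((n + 1 : ℕ) : ℤ) p.1 p.2 = Φ 1 ((T ^ (n : ℤ)) p.1) (Φ n p.1 p.2) := by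
        rw [Nat.cast_succ, add_comm, h.cocycle]; rfl
      rw [e1, e2, ← ih.2, ih.1]
      have e3 := h.zero_mul 1 ((T ^ (n : ℤ)) p.1)
      rw [zpow_one] at e3
      have e4 := (h.mul_zero 1 ((T ^ (n : ℤ)) p.1)).symm
      exact DFunLike.congr_fun (e3.trans e4) _
  rw [(key n).1, (key n).2]

end IsCocycleSystem

theorem IsInvariantField.eq_zero_iff (hR : IsInvariantField T Φ R) (h : IsCocycleSystem T μ Φ)
    (ω : Ω) : R (T ω) = 0 ↔ R ω = 0 := by
  have key : ∀ (n : ℤ) ω, R ((T ^ n) ω) = 0 → R ω = 0 := by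
    intro n ω h0
    have h1 := hR.invariant n ω
    rw [h0, MulZeroClass.zero_mul] at h1
    rw [← hR.zero_mul ω, ← h.neg_mul n ω, mul_assoc, ← h1, MulZeroClass.mul_zero]
  constructor
  · simpa using key 1 ω
  · simpa using key (-1) (T ω)

theorem IsInvariantField.eq_top_iff (hR : IsInvariantField T Φ R) (h : IsCocycleSystem T μ Φ)
    (ω : Ω) : R (T ω) = Φ 0 (T ω) ↔ R ω = Φ 0 ω := by
  have key : ∀ (n : ℤ) ω, R ((T ^ n) ω) = Φ 0 ((T ^ n) ω) → R ω = Φ 0 ω := by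
    intro n ω h0
    have h1 := hR.invariant (-n) ((T ^ n) ω)
    rw [h0, h.mul_zero, Equiv.Perm.zpow_neg_apply_zpow] at h1
    have h2 := congrArg (· * Φ n ω) h1
    simp only [mul_assoc] at h2
    rwa [h.neg_mul, hR.mul_zero h] at h2
  constructor
  · simpa using key 1 ω
  · simpa using key (-1) (T ω)

namespace IsCocycleSystem

/-- On a fibre without slow vectors, all vectors grow at some time bounded uniformly. -/
theorem exists_forall_exp_mul_le (h : IsCocycleSystem T μ Φ) {c : ℝ} {ω : Ω}
    (hz : slowProjection Φ c ω = 0) :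
    ∃ N : ℕ, ∀ v, ∃ n : ℕ, 1 ≤ n ∧ n ≤ N ∧ Real.exp (n * c) * ‖Φ 0 ω v‖ ≤ ‖Φ n ω v‖ := by
  by_contra! hcon
  obtain ⟨u, hu1, hu2⟩ := (isCompact_sphere (0 : EuclideanSpace ℝ (Fin d)) 1).inter_iInter_nonempty
    (fun n : ℕ => {u | Φ 0 ω u = u} ∩ {u | ‖Φ n ω u‖ ≤ Real.exp (n * c)})
    (fun n => (isClosed_eq (by fun_prop) continuous_id).inter
      (isClosed_le (by fun_prop) continuous_const))
    (fun s => by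
      obtain ⟨v, hv⟩ := hcon (s.sup id + 1)
      have hv0 : 0 < ‖Φ 0 ω v‖ := by
        have h1 := (norm_nonneg _).trans_lt (hv 1 le_rfl (by omega))
        exact pos_of_mul_pos_right h1 (Real.exp_pos _).le
      have h00 : Φ 0 ω (Φ 0 ω v) = Φ 0 ω v := DFunLike.congr_fun (h.zero_mul_self ω) v
      refine ⟨‖Φ 0 ω v‖⁻¹ • Φ 0 ω v, ?_, ?_⟩
      · simp [norm_smul, hv0.ne']
      · simp only [Set.mem_iInter]
        refine fun n hn => ⟨by simp [h00], ?_⟩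
        have hn0 : Φ n ω (Φ 0 ω v) = Φ n ω v := DFunLike.congr_fun (h.mul_zero n ω) v
        simp only [Set.mem_ofPred_eq, map_smul, hn0, norm_smul, norm_inv, norm_norm]
        rw [inv_mul_le_iff₀ hv0, mul_comm]
        rcases Nat.eq_zero_or_pos n with rfl | hpos
        · simp
        · exact (hv n hpos ((Finset.le_sup (f := id) hn).trans (Nat.le_succ _))).le)
  simp only [Set.mem_iInter] at hu2
  have hmem : u ∈ slowSubmodule Φ c ω :=
    mem_slowSubmodule.2 ⟨(hu2 0).1, 1, fun n => by rw [one_mul]; exact (hu2 n).2⟩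
  have hu0 := slowProjection_apply_eq_self hmem
  rw [hz, zero_apply] at hu0
  rw [← hu0] at hu1
  simp at hu1

variable [IsProbabilityMeasure μ]

theorem ae_norm_neg_le_of_slowProjection_eq_zero (h : IsCocycleSystem T μ Φ) (hT : Ergodic T μ)
    (hT' : Ergodic ⇑T⁻¹ μ) {c c' : ℝ} (hc : c' < c)
    (hz : ∀ᵐ ω ∂μ, slowProjection Φ c ω = 0) :
    ∀ᵐ ω ∂μ, ∃ K : ℝ, ∀ M : ℕ, ‖Φ (-M) ω‖ ≤ Real.exp (K - c' * M) ∧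
      ‖Φ (-M) ((T ^ (M : ℤ)) ω)‖ ≤ Real.exp (K - c' * M) := by
  set G : ℕ → Set Ω := fun N => {ω | ∀ k : ℕ, ∃ n : ℕ, 1 ≤ n ∧ n ≤ N ∧
    Real.exp (n * c) * ‖Φ 0 ω (TopologicalSpace.denseSeq _ k)‖ ≤
      ‖Φ n ω (TopologicalSpace.denseSeq _ k)‖} with hGdef
  have hm : ∀ n v, Measurable fun ω => ‖Φ n ω v‖ := fun n v =>
    ((ContinuousLinearMap.apply ℝ _ v).continuous.measurable.comp (h.measurable n)).norm
  have hgm : Measurable fun ω => Real.posLog ‖Φ (-1) (T ω)‖ :=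
    (Real.continuous_posLog.measurable.comp (h.measurable (-1)).norm).comp hT.measurable
  have hlow := ae_exp_mul_le_iterate hT hT'
    (S := fun p : Ω × EuclideanSpace ℝ (Fin d) => (T p.1, Φ 1 p.1 p.2)) (fun p => rfl)
    (ν := fun p => ‖Φ 0 p.1 p.2‖) (fun p => norm_nonneg _)
    hgm (hT.toMeasurePreserving.integrable_comp_of_integrable h.integrable_neg_one)
    (fun ω => Real.posLog_nonneg) hc (G := G)
    (fun N => Measurable.setOf (.forall fun k => .exists fun n => .and measurable_const
      (.and measurable_const (measurableSet_setOfPred.1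
        (measurableSet_le ((hm _ _).const_mul _) (hm _ _))))))
    (fun N N' hN ω hω k => by
      obtain ⟨n, h1, h2, h3⟩ := hω k
      exact ⟨n, h1, h2.trans hN, h3⟩)
    (hz.mono fun ω hω => by
      obtain ⟨N, hN⟩ := h.exists_forall_exp_mul_le hω
      exact ⟨N, fun k => hN _⟩)
    (fun p => by
      have h1 : ‖Φ 0 (T p.1) (Φ 1 p.1 p.2)‖ = ‖Φ 1 p.1 p.2‖ := by
        have := h.zero_mul 1 p.1
        rw [zpow_one] at this
        exact congrArg norm (DFunLike.congr_fun this p.2)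
      have h2 : Φ 0 p.1 p.2 = Φ (-1) (T p.1) (Φ 1 p.1 p.2) := by
        have := h.neg_mul 1 p.1
        rw [zpow_one] at this
        exact (DFunLike.congr_fun this p.2).symm
      rw [h1, h2, Real.exp_neg, inv_mul_le_iff₀ (Real.exp_pos _)]
      exact (ContinuousLinearMap.le_opNorm _ _).trans
        (mul_le_mul_of_nonneg_right (norm_le_exp_posLog _) (norm_nonneg _)))
    (fun N p hp => by
      simp only [h.norm_apply_eq_iterate]
      refine (TopologicalSpace.denseRange_denseSeq (EuclideanSpace ℝ (Fin d))).induction_on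
        (p := fun v => ∃ n : ℕ, 1 ≤ n ∧ n ≤ N ∧
          Real.exp (n * c) * ‖Φ 0 p.1 v‖ ≤ ‖Φ n p.1 v‖) p.2 ?_ hp
      have : {v | ∃ n : ℕ, 1 ≤ n ∧ n ≤ N ∧ Real.exp (n * c) * ‖Φ 0 p.1 v‖ ≤ ‖Φ n p.1 v‖} =
          ⋃ n ∈ Finset.Icc 1 N, {v | Real.exp (n * c) * ‖Φ 0 p.1 v‖ ≤ ‖Φ n p.1 v‖} := by
        ext v; simp [and_assoc]
      rw [this]
      exact isClosed_biUnion_finset fun n _ => isClosed_le (by fun_prop) (by fun_prop))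
  filter_upwards [hlow] with ω ⟨K, hK⟩
  refine ⟨K, fun M => ?_⟩
  simp only [h.norm_apply_eq_iterate] at hK
  have hexp : Real.exp (c' * M - K) = (Real.exp (K - c' * M))⁻¹ := by
    rw [← Real.exp_neg, neg_sub]
  have key : ∀ ω₀ ω₁, (T ^ (M : ℤ)) ω₀ = ω₁ →
      (∀ v, Real.exp (c' * M - K) * ‖Φ 0 ω₀ v‖ ≤ ‖Φ M ω₀ v‖) →
      ‖Φ (-M) ω₁‖ ≤ Real.exp (K - c' * M) := by
    rintro ω₀ _ rfl hv
    refine ContinuousLinearMap.opNorm_le_bound _ (Real.exp_pos _).le fun w => ?_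
    have h1 := hv (Φ (-M) ((T ^ (M : ℤ)) ω₀) w)
    have h2 := DFunLike.congr_fun (h.zero_mul (-M) ((T ^ (M : ℤ)) ω₀)) w
    have h3 := DFunLike.congr_fun (h.mul_neg M ω₀) w
    rw [Equiv.Perm.zpow_neg_apply_zpow] at h2
    simp only [mul_apply_eq_comp] at h2 h3
    rw [h2, h3, hexp, inv_mul_le_iff₀ (Real.exp_pos _)] at h1
    refine h1.trans (mul_le_mul_of_nonneg_left ?_ (Real.exp_pos _).le)
    exact (ContinuousLinearMap.le_opNorm _ _).trans
      (mul_le_of_le_one_left (norm_nonneg _) (h.norm_zero_le _))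
  refine ⟨key ((T ^ (-(M : ℤ))) ω) ω ?_ fun v => (hK M v).2, key ω _ rfl fun v => (hK M v).1⟩
  simp

theorem ae_norm_le_of_slowProjection_eq (h : IsCocycleSystem T μ Φ) (hT : Ergodic T μ)
    (hT' : Ergodic ⇑T⁻¹ μ) {c c' : ℝ} (hc : c < c')
    (hz : ∀ᵐ ω ∂μ, slowProjection Φ c ω = Φ 0 ω) :
    ∀ᵐ ω ∂μ, ∃ K : ℝ, ∀ M : ℕ, ‖Φ M ω‖ ≤ Real.exp (K + c' * M) ∧
      ‖Φ M ((T ^ (-(M : ℤ))) ω)‖ ≤ Real.exp (K + c' * M) := by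
  obtain ⟨b, hcb, hbc⟩ := exists_between hc
  have hn0 : ∀ n ω v, Φ n ω (Φ 0 ω v) = Φ n ω v := fun n ω v =>
    DFunLike.congr_fun (h.mul_zero n ω) v
  have hn0' : ∀ n ω v, Φ 0 ω v = 0 → Φ n ω v = 0 := fun n ω v hv => by
    rw [← hn0, hv, map_zero]
  have hbound : ∀ n ω v C, 0 ≤ C → ‖Φ n ω‖ ≤ C → ‖Φ n ω v‖ ≤ C * ‖Φ 0 ω v‖ :=
    fun n ω v C hC hle => by
      rw [← hn0]
      exact (ContinuousLinearMap.le_opNorm _ _).trans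
        (mul_le_mul_of_nonneg_right hle (norm_nonneg _))
  have hinv : ∀ n ω v a, ‖Φ n ω v‖ ≤ Real.exp a * ‖Φ 0 ω v‖ →
      Real.exp (-a) * ‖Φ 0 ω v‖⁻¹ ≤ ‖Φ n ω v‖⁻¹ := by
    intro n ω v a hle
    rcases (norm_nonneg (Φ n ω v)).eq_or_lt with h1 | h1
    · have : Φ 0 ω v = 0 := by
        have e := DFunLike.congr_fun (h.neg_mul n ω) v
        rw [mul_apply_eq_comp, norm_eq_zero.1 h1.symm, map_zero] at e
        exact e.symm
      simp [this]
    · rw [Real.exp_neg, ← mul_inv]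
      exact inv_anti₀ h1 hle
  have hlow := ae_exp_mul_le_iterate hT hT'
    (S := fun p : Ω × EuclideanSpace ℝ (Fin d) => (T p.1, Φ 1 p.1 p.2)) (fun p => rfl)
    (ν := fun p => ‖Φ 0 p.1 p.2‖⁻¹) (fun p => by positivity)
    (Real.continuous_posLog.measurable.comp (h.measurable 1).norm) h.integrable_one
    (fun ω => Real.posLog_nonneg) (neg_lt_neg hbc)
    (G := fun N => {ω | ∃ n : ℕ, 1 ≤ n ∧ n ≤ N ∧ ‖Φ n ω‖ ≤ Real.exp (n * b)})
    (fun N => Measurable.setOf (.exists fun n => .and measurable_const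
      (.and measurable_const (measurableSet_setOfPred.1
        (measurableSet_le (h.measurable n).norm measurable_const)))))
    (fun N N' hN ω ⟨n, h1, h2, h3⟩ => ⟨n, h1, h2.trans hN, h3⟩)
    (hz.mono fun ω hω => by
      obtain ⟨C, hC⟩ := banach_steinhaus (g := fun n : ℕ => Real.exp (-(n * c)) • Φ n ω)
        (fun v => by
          have h1 := slowProjection_apply_mem (Φ := Φ) c ω v
          rw [hω] at h1
          obtain ⟨-, C, hC⟩ := mem_slowSubmodule.1 h1
          refine ⟨C, fun n => ?_⟩
          rw [smul_apply, norm_smul, Real.norm_eq_abs, Real.abs_exp, Real.exp_neg,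
            inv_mul_le_iff₀ (Real.exp_pos _), mul_comm, ← hn0]
          exact hC n)
      have hlim : Tendsto (fun n : ℕ => Real.exp (n * (b - c))) atTop atTop :=
        Real.tendsto_exp_atTop.comp
          (tendsto_natCast_atTop_atTop.atTop_mul_const (sub_pos.2 hcb))
      obtain ⟨n, hn1, hn2⟩ := ((hlim.eventually_ge_atTop C).and (eventually_ge_atTop 1)).exists
      refine ⟨n, n, hn2, le_rfl, ?_⟩
      have h1 := hC n
      rw [norm_smul, Real.norm_eq_abs, Real.abs_exp, Real.exp_neg,
        inv_mul_le_iff₀ (Real.exp_pos _)] at h1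
      refine h1.trans ((mul_le_mul_of_nonneg_left hn1 (Real.exp_pos _).le).trans ?_)
      rw [← Real.exp_add]
      exact Real.exp_le_exp.2 (by linarith))
    (fun p => by
      have h1 : ‖Φ 0 (T p.1) (Φ 1 p.1 p.2)‖ = ‖Φ 1 p.1 p.2‖ := by
        have := h.zero_mul 1 p.1
        rw [zpow_one] at this
        exact congrArg norm (DFunLike.congr_fun this p.2)
      rw [h1]
      exact hinv _ _ _ _ (hbound _ _ _ _ (Real.exp_pos _).le (norm_le_exp_posLog _)))
    (fun N p ⟨n, h1, h2, h3⟩ => by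
      refine ⟨n, h1, h2, ?_⟩
      rw [h.norm_apply_eq_iterate, _root_.mul_neg]
      exact hinv _ _ _ _ (hbound _ _ _ _ (Real.exp_pos _).le h3))
  filter_upwards [hlow] with ω ⟨K, hK⟩
  refine ⟨K, fun M => ?_⟩
  simp only [h.norm_apply_eq_iterate] at hK
  have key : ∀ ω₀, (∀ v, Real.exp (-c' * M - K) * ‖Φ 0 ω₀ v‖⁻¹ ≤ ‖Φ M ω₀ v‖⁻¹) →
      ‖Φ M ω₀‖ ≤ Real.exp (K + c' * M) := by
    intro ω₀ hv
    refine ContinuousLinearMap.opNorm_le_bound _ (Real.exp_pos _).le fun v => ?_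
    rcases (norm_nonneg (Φ 0 ω₀ v)).eq_or_lt with h1 | h1
    · rw [hn0' _ _ _ (norm_eq_zero.1 h1.symm), norm_zero]
      positivity
    · have h2 := hv v
      have h3 : 0 < ‖Φ M ω₀ v‖ := inv_pos.1 (lt_of_lt_of_le (by positivity) h2)
      rw [show -c' * M - K = -(K + c' * M) by ring, Real.exp_neg, ← mul_inv,
        inv_le_inv₀ (by positivity) h3] at h2
      refine h2.trans (mul_le_mul_of_nonneg_left ?_ (Real.exp_pos _).le)
      exact (ContinuousLinearMap.le_opNorm _ _).trans
        (mul_le_of_le_one_left (norm_nonneg _) (h.norm_zero_le _))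
  exact ⟨key ω fun v => (hK M v).1, key _ fun v => (hK M v).2⟩

end IsCocycleSystem

end Irreducible

section Regularity

variable {Ω : Type*} [MeasurableSpace Ω] {d : ℕ} {μ : Measure Ω} {T : Equiv.Perm Ω}
  {Φ : ℤ → Ω → EuclideanEnd d}

theorem HasRate.of_nat {W : Type*} [NormedAddCommGroup W] {u : ℤ → W} {a : ℝ}
    (h : ∀ ε > 0, ∃ K : ℝ, ∀ n : ℕ, ‖u n‖ ≤ Real.exp (K + (a + ε) * n) ∧
      ‖u (-n)‖ ≤ Real.exp (K - (a - ε) * n)) : HasRate u a := by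
  intro ε hε
  obtain ⟨K, hK⟩ := h ε hε
  refine ⟨Real.exp K, fun k => ?_⟩
  rw [← Real.exp_add]
  obtain ⟨n, rfl | rfl⟩ := k.eq_nat_or_neg
  · refine (hK n).1.trans (Real.exp_le_exp.2 ?_)
    push_cast
    rw [Nat.abs_cast]
    linarith
  · refine (hK n).2.trans (Real.exp_le_exp.2 ?_)
    push_cast
    rw [abs_neg, Nat.abs_cast]
    linarith

theorem IsCocycleSystem.isOseledetsRegular_of_ae_eq_zero (h0 : ∀ᵐ ω ∂μ, Φ 0 ω = 0) :
    IsOseledetsRegular T μ Φ := by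
  refine ⟨∅, 0, fun l => measurable_const, fun l _ => rfl, ?_⟩
  filter_upwards [h0] with ω hω
  refine ⟨by simp [hω], fun l => by simp, fun l l' _ => by simp, fun l n => by simp,
    fun l => by simpa using HasRate.zero, fun l => by simpa using HasRate.zero⟩

/-- A cocycle whose vectors all have the same exact growth rate is regular. -/
theorem IsCocycleSystem.isOseledetsRegular_of_slowProjection [IsProbabilityMeasure μ]
    (h : IsCocycleSystem T μ Φ) (hT : Ergodic T μ) (hT' : Ergodic ⇑T⁻¹ μ)
    (h0 : ∀ᵐ ω ∂μ, Φ 0 ω ≠ 0)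
    (hc : ∀ c, (∀ᵐ ω ∂μ, slowProjection Φ c ω = 0) ∨ ∀ᵐ ω ∂μ, slowProjection Φ c ω = Φ 0 ω) :
    IsOseledetsRegular T μ Φ := by
  set U : Set ℝ := {c | ∀ᵐ ω ∂μ, slowProjection Φ c ω = Φ 0 ω} with hU
  have hne : U.Nonempty := by
    obtain ⟨c, hc⟩ := h.exists_ae_norm_le hT
    refine ⟨c, ?_⟩
    filter_upwards [hc] with ω ⟨b, hb⟩
    ext1 v
    have hmem : Φ 0 ω v ∈ slowSubmodule Φ c ω := by
      refine mem_slowSubmodule.2 ⟨DFunLike.congr_fun (h.zero_mul_self ω) v,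
        Real.exp b * ‖Φ 0 ω v‖, fun n => ?_⟩
      refine (ContinuousLinearMap.le_opNorm _ _).trans
        ((mul_le_mul_of_nonneg_right (hb n) (norm_nonneg _)).trans (le_of_eq ?_))
      rw [Real.exp_add]
      ring
    have h1 := slowProjection_apply_eq_self hmem
    rw [← h1]
    exact (DFunLike.congr_fun
      ((h.isInvariantField_slowProjection c).mul_zero h ω) v).symm
  have hbdd : BddBelow U := by
    obtain ⟨a, ha⟩ := h.reverse.exists_ae_norm_le hT'
    refine ⟨-a - 1, fun c hcU => ?_⟩
    by_contra! hlt
    obtain ⟨ω, hω0, ⟨b, hb⟩, K, hK⟩ :=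
      (h0.and (ha.and (h.ae_norm_le_of_slowProjection_eq hT hT' hlt hcU))).exists
    obtain ⟨M, hM⟩ := exists_nat_gt (K + b)
    have h1 : Φ M ((T ^ (-(M : ℤ))) ω) * Φ (-M) ω = Φ 0 ω := by
      simpa using (h.cocycle M (-M) ω).symm
    have h2 : ‖Φ 0 ω‖ ≤ Real.exp (K + (-a - 1) * M) * Real.exp (M * a + b) := by
      rw [← h1]
      exact (norm_mul_le _ _).trans
        (mul_le_mul (hK M).2 (hb M) (norm_nonneg _) (Real.exp_pos _).le)
    rw [← Real.exp_add] at h2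
    have h3 : Real.exp (K + (-a - 1) * M + (M * a + b)) < 1 :=
      Real.exp_lt_one_iff.2 (by linarith)
    have h4 : ‖Φ 0 ω‖ ≤ ‖Φ 0 ω‖ * ‖Φ 0 ω‖ := by
      conv_lhs => rw [← h.zero_mul_self ω]
      exact norm_mul_le _ _
    have h5 : 0 < ‖Φ 0 ω‖ := norm_pos_iff.2 hω0
    nlinarith
  set l := sInf U with hl
  have hup : ∀ᵐ ω ∂μ, ∀ ε > 0, ∃ K : ℝ, ∀ M : ℕ, ‖Φ M ω‖ ≤ Real.exp (K + (l + ε) * M) ∧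
      ‖Φ M ((T ^ (-(M : ℤ))) ω)‖ ≤ Real.exp (K + (l + ε) * M) := by
    refine ae_forall_pos_of_antitone ?_ fun ε hε => ?_
    · rintro ω ε ε' hεε ⟨K, hK⟩
      refine ⟨K, fun M => ?_⟩
      have : Real.exp (K + (l + ε) * M) ≤ Real.exp (K + (l + ε') * M) := by gcongr
      exact ⟨(hK M).1.trans this, (hK M).2.trans this⟩
    · obtain ⟨c, hcU, hcl⟩ := exists_lt_of_csInf_lt hne (show sInf U < l + ε by linarith)
      exact h.ae_norm_le_of_slowProjection_eq hT hT' hcl hcU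
  have hdown : ∀ᵐ ω ∂μ, ∀ ε > 0, ∃ K : ℝ, ∀ M : ℕ, ‖Φ (-M) ω‖ ≤ Real.exp (K - (l - ε) * M) ∧
      ‖Φ (-M) ((T ^ (M : ℤ)) ω)‖ ≤ Real.exp (K - (l - ε) * M) := by
    refine ae_forall_pos_of_antitone ?_ fun ε hε => ?_
    · rintro ω ε ε' hεε ⟨K, hK⟩
      refine ⟨K, fun M => ?_⟩
      have : Real.exp (K - (l - ε) * M) ≤ Real.exp (K - (l - ε') * M) := by gcongr
      exact ⟨(hK M).1.trans this, (hK M).2.trans this⟩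
    · have hcl : l - ε / 2 ∉ U := fun hmem => by
        have := csInf_le hbdd hmem
        linarith
      exact h.ae_norm_neg_le_of_slowProjection_eq_zero hT hT' (c := l - ε / 2) (by linarith)
        ((hc _).resolve_right hcl)
  refine ⟨{l}, fun l' => if l' = l then Φ 0 else 0, fun l' => ?_, fun l' hl' => ?_, ?_⟩
  · dsimp only
    split_ifs
    exacts [h.measurable 0, measurable_const]
  · rw [Finset.mem_singleton] at hl'
    exact if_neg hl'
  filter_upwards [hup, hdown] with ω h1 h2
  have hmax : ∀ {K K' x : ℝ}, Real.exp (K + x) ≤ Real.exp (max K K' + x) ∧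
      Real.exp (K' + x) ≤ Real.exp (max K K' + x) := fun {K K' x} => by
    constructor <;> gcongr
    exacts [le_max_left _ _, le_max_right _ _]
  refine ⟨by simp, fun l' => ?_, fun l' m hne => ?_, fun l' n => ?_, fun l' => ?_, fun l' => ?_⟩
  · split_ifs
    · exact h.zero_mul_self ω
    · simp
  · by_cases h1 : l' = l
    · have : m ≠ l := fun h2 => hne (h1.trans h2.symm)
      simp [this]
    · simp [h1]
  · split_ifs
    · rw [h.mul_zero, h.zero_mul]
    · simp
  · split_ifs with hl'
    · subst hl'
      simp only [h.mul_zero]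
      refine HasRate.of_nat fun ε hε => ?_
      obtain ⟨K, hK⟩ := h1 ε hε
      obtain ⟨K', hK'⟩ := h2 ε hε
      exact ⟨max K K', fun n => ⟨(hK n).1.trans hmax.1, (hK' n).1.trans (by
        rw [sub_eq_add_neg, sub_eq_add_neg]; exact hmax.2)⟩⟩
    · simpa using HasRate.zero
  · split_ifs with hl'
    · subst hl'
      have e : ∀ k : ℤ, Φ 0 ω * Φ (-k) ((T ^ k) ω) = Φ (-k) ((T ^ k) ω) := fun k => by
        have := h.zero_mul (-k) ((T ^ k) ω)
        rwa [Equiv.Perm.zpow_neg_apply_zpow] at this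
      simp only [e]
      refine HasRate.of_nat fun ε hε => ?_
      obtain ⟨K, hK⟩ := h1 ε hε
      obtain ⟨K', hK'⟩ := h2 ε hε
      refine ⟨max K K', fun n => ⟨?_, ?_⟩⟩
      · refine (hK' n).2.trans ?_
        rw [show K' - (l - ε) * n = K' + (-l + ε) * n by ring]
        exact hmax.2
      · rw [neg_neg]
        refine (hK n).2.trans ?_
        rw [show max K K' - (-l - ε) * n = max K K' + (l + ε) * n by ring]
        exact hmax.1
    · simpa using HasRate.zero

theorem finrank_range_lt_of_mul_eq {p q : EuclideanEnd d} (hq : q * q = q) (hpq : p * q = q)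
    (hqp : q * p = q) (hne : q ≠ p) :
    Module.finrank ℝ q.range < Module.finrank ℝ p.range := by
  refine Submodule.finrank_lt_finrank_of_lt (lt_of_le_of_ne ?_ fun heq => hne ?_)
  · rintro _ ⟨v, rfl⟩
    exact ⟨q v, DFunLike.congr_fun hpq v⟩
  · ext1 v
    have : p v ∈ q.range := heq ▸ ⟨v, rfl⟩
    obtain ⟨w, hw⟩ := this
    have h1 : q (p v) = q v := DFunLike.congr_fun hqp v
    have h2 : q (q w) = q w := DFunLike.congr_fun hq w
    have h3 : q w = p v := hw
    rw [← h1, ← h3, h2]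

/-- The **multiplicative ergodic theorem** for cocycles on measurable fields of subspaces. -/
theorem IsCocycleSystem.isOseledetsRegular [IsProbabilityMeasure μ] (h : IsCocycleSystem T μ Φ)
    (hT : Ergodic T μ) (hT' : Ergodic ⇑T⁻¹ μ) : IsOseledetsRegular T μ Φ := by
  suffices H : ∀ (n : ℕ) (Φ : ℤ → Ω → EuclideanEnd d), IsCocycleSystem T μ Φ →
      (∀ᵐ ω ∂μ, Module.finrank ℝ (Φ 0 ω).range < n) → IsOseledetsRegular T μ Φ from
    H (d + 1) Φ h (Eventually.of_forall fun ω => Nat.lt_succ_of_le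
      ((Submodule.finrank_le _).trans (by simp)))
  intro n
  induction n with
  | zero =>
    intro Φ _ hlt
    obtain ⟨ω, hω⟩ := hlt.exists
    exact absurd hω (Nat.not_lt_zero _)
  | succ n ih =>
    intro Φ h hlt
    have hzero : ∀ {R : Ω → EuclideanEnd d}, IsInvariantField T Φ R →
        (∀ᵐ ω ∂μ, R ω = 0) ∨ ∀ᵐ ω ∂μ, R ω ≠ 0 := fun hR =>
      hT.ae_or_ae_not (hR.measurable (measurableSet_singleton 0)) (hR.eq_zero_iff h)
    rcases hzero h.isInvariantField_zero with h0 | h0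
    · exact isOseledetsRegular_of_ae_eq_zero h0
    by_cases hc : ∀ c, (∀ᵐ ω ∂μ, slowProjection Φ c ω = 0) ∨
        ∀ᵐ ω ∂μ, slowProjection Φ c ω = Φ 0 ω
    · exact h.isOseledetsRegular_of_slowProjection hT hT' h0 hc
    obtain ⟨c, hc⟩ := not_forall.1 hc
    obtain ⟨hc1, hc2⟩ := not_or.1 hc
    have hR := h.isInvariantField_slowProjection c
    have hne := (hzero hR).resolve_left hc1
    have htop := (hT.ae_or_ae_not (measurableSet_eq_fun hR.measurable (h.measurable 0))
      (hR.eq_top_iff h)).resolve_left hc2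
    refine hR.isOseledetsRegular h hT hT' (ih _ (hR.isCocycleSystem_mul h) ?_)
      (ih _ (hR.isCocycleSystem_compl h hT.toMeasurePreserving hT'.toMeasurePreserving) ?_)
    · filter_upwards [hlt, htop] with ω h1 h2
      rw [hR.zero_mul]
      exact (finrank_range_lt_of_mul_eq (hR.mul_self ω) (hR.zero_mul ω) (hR.mul_zero h ω)
        h2).trans_le (Nat.lt_succ_iff.1 h1)
    · filter_upwards [hlt, hne] with ω h1 h2
      have e : (Φ 0 ω - slowProjection Φ c ω) * Φ 0 ω = Φ 0 ω - slowProjection Φ c ω := by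
        rw [sub_mul, h.zero_mul_self, hR.mul_zero h]
      rw [zpow_zero, Equiv.Perm.one_apply, e]
      refine (finrank_range_lt_of_mul_eq (hR.compl_mul_self h ω) ?_ e ?_).trans_le
        (Nat.lt_succ_iff.1 h1)
      · rw [mul_sub, h.zero_mul_self, hR.zero_mul]
      · simpa using h2

end Regularity

section GroupCocycles

variable {Ω G : Type*} [Group G]

/-- The skew product over `T` with fibre maps given by left multiplication. -/
def cocyclePerm (T : Equiv.Perm Ω) (A : Ω → G) : Equiv.Perm (Ω × G) where
  toFun p := (T p.1, A p.1 * p.2)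
  invFun p := (T⁻¹ p.1, (A (T⁻¹ p.1))⁻¹ * p.2)
  left_inv p := by simp
  right_inv p := by simp

/-- The two-sided iterates of the cocycle generated by `A` over `T`. -/
def cocycleZPow (T : Equiv.Perm Ω) (A : Ω → G) (n : ℤ) (ω : Ω) : G :=
  ((cocyclePerm T A ^ n) (ω, 1)).2

theorem cocyclePerm_zpow_apply (T : Equiv.Perm Ω) (A : Ω → G) (n : ℤ) (ω : Ω) (g : G) :
    (cocyclePerm T A ^ n) (ω, g) = ((T ^ n) ω, cocycleZPow T A n ω * g) := by
  unfold cocycleZPow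
  induction n generalizing ω g with
  | zero => simp
  | succ n ih =>
    have e : ∀ g, (cocyclePerm T A ^ ((n : ℤ) + 1)) (ω, g) =
        (cocyclePerm T A ^ (n : ℤ)) (T ω, A ω * g) := fun g => by
      rw [zpow_add_one]; rfl
    rw [e, e, ih, ih (T ω) (A ω * 1), zpow_add_one, Equiv.Perm.mul_apply]
    simp [mul_assoc]
  | pred n ih =>
    have e : ∀ g, (cocyclePerm T A ^ (-(n : ℤ) - 1)) (ω, g) =
        (cocyclePerm T A ^ (-(n : ℤ))) (T⁻¹ ω, (A (T⁻¹ ω))⁻¹ * g) := fun g => by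
      rw [zpow_sub_one]; rfl
    rw [e, e, ih, ih (T⁻¹ ω) ((A (T⁻¹ ω))⁻¹ * 1), zpow_sub_one, Equiv.Perm.mul_apply]
    simp [mul_assoc]

theorem cocycleZPow_add (T : Equiv.Perm Ω) (A : Ω → G) (m n : ℤ) (ω : Ω) :
    cocycleZPow T A (m + n) ω = cocycleZPow T A m ((T ^ n) ω) * cocycleZPow T A n ω := by
  have h : cocycleZPow T A (m + n) ω =
      ((cocyclePerm T A ^ m) ((cocyclePerm T A ^ n) (ω, 1))).2 := by
    rw [← Equiv.Perm.zpow_add_apply]; rfl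
  rw [h, cocyclePerm_zpow_apply T A n, cocyclePerm_zpow_apply, mul_one]

@[simp]
theorem cocycleZPow_zero (T : Equiv.Perm Ω) (A : Ω → G) (ω : Ω) : cocycleZPow T A 0 ω = 1 := by
  simp [cocycleZPow]

@[simp]
theorem cocycleZPow_one (T : Equiv.Perm Ω) (A : Ω → G) (ω : Ω) :
    cocycleZPow T A 1 ω = A ω := by
  simp [cocycleZPow, cocyclePerm]

@[simp]
theorem cocycleZPow_neg_one (T : Equiv.Perm Ω) (A : Ω → G) (ω : Ω) :
    cocycleZPow T A (-1) ω = (A (T⁻¹ ω))⁻¹ := by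
  have h := cocycleZPow_add T A (-1) 1 (T⁻¹ ω)
  rw [neg_add_cancel, cocycleZPow_zero, zpow_one, cocycleZPow_one,
    show T (T⁻¹ ω) = ω from T.apply_symm_apply ω] at h
  exact eq_inv_of_mul_eq_one_left h.symm

end GroupCocycles

section MatrixCocycles

variable {Ω : Type*} {d : ℕ}

theorem cocycIter_eq_cocycleZPow (T : Equiv.Perm Ω) (A : Ω → Matrix.GeneralLinearGroup (Fin d) ℝ)
    (n : ℕ) (ω : Ω) :
    cocycIter T (fun ω => (A ω : Matrix (Fin d) (Fin d) ℝ)) n ω = (cocycleZPow T A n ω).val := by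
  induction n generalizing ω with
  | zero => simp [cocycIter]
  | succ n ih =>
    rw [cocycIter, ih, Nat.cast_succ, cocycleZPow_add, zpow_one, cocycleZPow_one, Units.val_mul]

theorem backCocycIter_eq_cocycleZPow (T : Equiv.Perm Ω)
    (A : Ω → Matrix.GeneralLinearGroup (Fin d) ℝ) (n : ℕ) (ω : Ω) :
    backCocycIter ⇑T⁻¹ A n ω = (cocycleZPow T A (-n) ω).val := by
  induction n generalizing ω with
  | zero => simp [backCocycIter]
  | succ n ih =>
    rw [backCocycIter, ih, Nat.cast_succ, neg_add, cocycleZPow_add, zpow_neg_one,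
      cocycleZPow_neg_one, Units.val_mul, Matrix.coe_units_inv]

/-- The operators of Euclidean space given by the iterates of a matrix cocycle. -/
noncomputable def euclideanCocycle (T : Equiv.Perm Ω) (A : Ω → Matrix.GeneralLinearGroup (Fin d) ℝ)
    (n : ℤ) (ω : Ω) : EuclideanEnd d :=
  Matrix.toEuclideanCLM (𝕜 := ℝ) (cocycleZPow T A n ω).val

variable [MeasurableSpace Ω] {μ : Measure Ω} {T : Equiv.Perm Ω}
  {A : Ω → Matrix.GeneralLinearGroup (Fin d) ℝ}

theorem measurable_toEuclideanCLM {M : Ω → Matrix (Fin d) (Fin d) ℝ}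
    (h : ∀ i j, Measurable fun ω => M ω i j) :
    Measurable fun ω => Matrix.toEuclideanCLM (𝕜 := ℝ) (M ω) :=
  measurable_euclideanEnd fun i j => by
    simpa [EuclideanSpace.inner_single_left] using h i j

theorem measurable_matrix_inv_apply {M : Ω → Matrix (Fin d) (Fin d) ℝ}
    (h : ∀ i j, Measurable fun ω => M ω i j) (i j : Fin d) :
    Measurable fun ω => (M ω)⁻¹ i j := by
  have hM : Measurable fun ω => (fun i j => M ω i j : Fin d → Fin d → ℝ) :=
    measurable_pi_lambda _ fun i => measurable_pi_lambda _ fun j => h i j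
  have hdet : Continuous fun m : Fin d → Fin d → ℝ => (Matrix.of m).det :=
    Continuous.matrix_det continuous_id
  have hadj : Continuous fun m : Fin d → Fin d → ℝ => (Matrix.of m).adjugate i j :=
    (Continuous.matrix_adjugate continuous_id).matrix_elem i j
  have : (fun ω => (M ω)⁻¹ i j) = fun ω => ((M ω).det)⁻¹ * (M ω).adjugate i j := by
    ext ω
    rw [Matrix.inv_def, Matrix.smul_apply, Ring.inverse_eq_inv', smul_eq_mul]
  rw [this]
  exact (hdet.measurable.comp hM).inv.mul (hadj.measurable.comp hM)

theorem isCocycleSystem_euclideanCocycle (hT : MeasurePreserving T μ μ)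
    (hT' : MeasurePreserving ⇑T⁻¹ μ μ)
    (hAmeas : ∀ i j, Measurable fun ω => (A ω : Matrix (Fin d) (Fin d) ℝ) i j)
    (hint : Integrable (fun ω =>
      max (Real.log (matOpNorm (A ω : Matrix (Fin d) (Fin d) ℝ))) 0) μ)
    (hintInv : Integrable (fun ω =>
      max (Real.log (matOpNorm ((A ω)⁻¹ : Matrix (Fin d) (Fin d) ℝ))) 0) μ) :
    IsCocycleSystem T μ (euclideanCocycle T A) := by
  have hcoc : ∀ m n ω, euclideanCocycle T A (m + n) ω =
      euclideanCocycle T A m ((T ^ n) ω) * euclideanCocycle T A n ω := fun m n ω => by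
    rw [euclideanCocycle, cocycleZPow_add, Units.val_mul, map_mul]; rfl
  have h1 : euclideanCocycle T A 1 = fun ω =>
      Matrix.toEuclideanCLM (𝕜 := ℝ) (A ω : Matrix (Fin d) (Fin d) ℝ) := by
    funext ω
    rw [euclideanCocycle, cocycleZPow_one]
  have h1' : euclideanCocycle T A (-1) = fun ω =>
      Matrix.toEuclideanCLM (𝕜 := ℝ) ((A (T⁻¹ ω))⁻¹ : Matrix (Fin d) (Fin d) ℝ) := by
    funext ω
    rw [euclideanCocycle, cocycleZPow_neg_one, Matrix.coe_units_inv]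
  have hm1 : Measurable (euclideanCocycle T A 1) := h1 ▸ measurable_toEuclideanCLM hAmeas
  have hm1' : Measurable (euclideanCocycle T A (-1)) := by
    rw [h1']
    exact (measurable_toEuclideanCLM (measurable_matrix_inv_apply hAmeas)).comp hT'.measurable
  have hpos : ∀ x : ℝ, max (Real.log x) 0 = Real.posLog x := fun x => max_comm _ _
  simp only [hpos] at hint hintInv
  refine ⟨fun n => ?_, hcoc, fun ω => ?_, ?_, ?_⟩
  · induction n with
    | zero =>
      have : euclideanCocycle T A 0 = fun _ => 1 := by
        funext ω
        simp [euclideanCocycle]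
      rw [this]
      exact measurable_const
    | succ n ih =>
      rw [funext (hcoc n 1)]
      exact (ih.comp (by simpa using hT.measurable)).mul hm1
    | pred n ih =>
      rw [sub_eq_add_neg, funext (hcoc (-n) (-1))]
      exact (ih.comp (by simpa using hT'.measurable)).mul hm1'
  · simp [euclideanCocycle]
  · rw [h1]
    exact hint
  · rw [h1']
    exact hT'.integrable_comp_of_integrable hintInv

end MatrixCocycles

section OseledetsSpaces

theorem tendsto_log_div_of_exp_bounds {f : ℕ → ℝ} {a : ℝ} (hf : ∀ n, 0 ≤ f n)
    (h : ∀ ε > 0, ∃ K : ℝ, ∀ n : ℕ, f n ≤ K * Real.exp ((a + ε) * n) ∧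
      1 ≤ K * Real.exp ((-a + ε) * n) * f n) :
    Tendsto (fun n : ℕ => Real.log (f n) / n) atTop (𝓝 a) := by
  rw [Metric.tendsto_atTop']
  intro ε hε
  obtain ⟨K, hK⟩ := h (ε / 2) (half_pos hε)
  have hf0 : ∀ n, f n ≠ 0 := fun n h0 => by
    have := (hK n).2
    rw [h0, mul_zero] at this
    linarith
  have hK0 : 0 < K := by
    obtain ⟨h1, h2⟩ := hK 0
    simp only [Nat.cast_zero, mul_zero, Real.exp_zero, mul_one] at h1 h2
    by_contra! hneg
    nlinarith [hf 0]
  have hfpos : ∀ n, 0 < f n := fun n =>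
    pos_of_mul_pos_right (zero_lt_one.trans_le (hK n).2) (by positivity)
  obtain ⟨N, hN⟩ := exists_nat_gt (|Real.log K| / (ε / 2))
  refine ⟨N, fun n hn => ?_⟩
  have hn0 : (0 : ℝ) < n := by exact_mod_cast (Nat.zero_le N).trans_lt hn
  have h1 := Real.log_le_log (hfpos n) (hK n).1
  have h2 := Real.log_le_log one_pos (hK n).2
  rw [Real.log_mul hK0.ne' (Real.exp_pos _).ne', Real.log_exp] at h1
  rw [Real.log_mul (mul_pos hK0 (Real.exp_pos _)).ne' (hf0 n),
    Real.log_mul hK0.ne' (Real.exp_pos _).ne', Real.log_exp, Real.log_one] at h2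
  have h3 : |Real.log K| < ε / 2 * n := by
    rw [div_lt_iff₀ (half_pos hε)] at hN
    have : (N : ℝ) < n := by exact_mod_cast hn
    nlinarith
  rw [Real.dist_eq, div_sub' hn0.ne', abs_div, abs_of_pos hn0, div_lt_iff₀ hn0, abs_lt]
  have := le_abs_self (Real.log K)
  constructor <;> linarith

variable {Ω : Type*} {d : ℕ} {T : Equiv.Perm Ω} {Φ : ℤ → Ω → EuclideanEnd d} {S : Finset ℝ}
  {pr : ℝ → Ω → EuclideanEnd d} {ω : Ω}

theorem SplitsAt.exists_bounds (h : SplitsAt T Φ S pr ω)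
    (hneg : ∀ n : ℤ, Φ (-n) ((T ^ n) ω) * Φ n ω = 1) {l : ℝ} {v : EuclideanSpace ℝ (Fin d)}
    (hv : pr l ω v = v) (hv0 : v ≠ 0) {ε : ℝ} (hε : 0 < ε) :
    ∃ K : ℝ, ∀ k : ℤ, ‖Φ k ω v‖ ≤ K * Real.exp (l * k + ε * |(k : ℝ)|) ∧
      1 ≤ K * Real.exp (-l * k + ε * |(k : ℝ)|) * ‖Φ k ω v‖ := by
  obtain ⟨K, hK⟩ := h.rate l ε hε
  obtain ⟨K', hK'⟩ := h.rate_inv l ε hε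
  have hpos : 0 < ‖v‖ := norm_pos_iff.2 hv0
  refine ⟨max (K * ‖v‖) (K' * ‖v‖⁻¹), fun k => ⟨?_, ?_⟩⟩
  · have h1 := (Φ k ω * pr l ω).le_of_opNorm_le (hK k) v
    rw [mul_apply_eq_comp, hv] at h1
    refine h1.trans ?_
    rw [mul_right_comm]
    exact mul_le_mul_of_nonneg_right (le_max_left _ _) (Real.exp_pos _).le
  · have h1 := (pr l ω * Φ (-k) ((T ^ k) ω)).le_of_opNorm_le (hK' k) (Φ k ω v)
    have h2 : Φ (-k) ((T ^ k) ω) (Φ k ω v) = v := DFunLike.congr_fun (hneg k) v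
    rw [mul_apply_eq_comp, h2, hv] at h1
    have h3 : 1 ≤ K' * ‖v‖⁻¹ * Real.exp (-l * k + ε * |(k : ℝ)|) * ‖Φ k ω v‖ := by
      have := mul_le_mul_of_nonneg_left h1 (inv_pos.2 hpos).le
      rw [inv_mul_cancel₀ hpos.ne'] at this
      linarith
    refine h3.trans ?_
    gcongr
    exact le_max_right _ _

theorem SplitsAt.tendsto_log_div (h : SplitsAt T Φ S pr ω)
    (hneg : ∀ n : ℤ, Φ (-n) ((T ^ n) ω) * Φ n ω = 1) {l : ℝ} {v : EuclideanSpace ℝ (Fin d)}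
    (hv : pr l ω v = v) (hv0 : v ≠ 0) :
    Tendsto (fun n : ℕ => Real.log ‖Φ n ω v‖ / n) atTop (𝓝 l) ∧
      Tendsto (fun n : ℕ => Real.log ‖Φ (-n) ω v‖ / n) atTop (𝓝 (-l)) := by
  refine ⟨tendsto_log_div_of_exp_bounds (fun n => norm_nonneg _) fun ε hε => ?_,
    tendsto_log_div_of_exp_bounds (fun n => norm_nonneg _) fun ε hε => ?_⟩
  all_goals
    obtain ⟨K, hK⟩ := h.exists_bounds hneg hv hv0 hε
    refine ⟨K, fun n => ?_⟩
  · have := hK n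
    rw [Int.cast_natCast, Nat.abs_cast] at this
    simpa only [add_mul] using this
  · have := hK (-n)
    rw [Int.cast_neg, Int.cast_natCast, abs_neg, Nat.abs_cast] at this
    simpa only [add_mul, neg_mul, mul_neg, neg_neg] using this

/-- The subspace of vectors fixed by an operator. -/
def fixedSubmodule (p : EuclideanEnd d) : Submodule ℝ (EuclideanSpace ℝ (Fin d)) :=
  LinearMap.eqLocus (p : EuclideanSpace ℝ (Fin d) →ₗ[ℝ] EuclideanSpace ℝ (Fin d)) LinearMap.id

theorem mem_fixedSubmodule {p : EuclideanEnd d} {v : EuclideanSpace ℝ (Fin d)} :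
    v ∈ fixedSubmodule p ↔ p v = v := Iff.rfl

theorem SplitsAt.map_fixedSubmodule (h : SplitsAt T Φ S pr ω)
    (hneg : Φ (-1) (T ω) * Φ 1 ω = 1) (hneg' : Φ 1 ω * Φ (-1) (T ω) = 1) (l : ℝ) :
    (fixedSubmodule (pr l ω)).map
      (Φ 1 ω : EuclideanSpace ℝ (Fin d) →ₗ[ℝ] EuclideanSpace ℝ (Fin d)) =
      fixedSubmodule (pr l (T ω)) := by
  have hc : ∀ v, Φ 1 ω (pr l ω v) = pr l (T ω) (Φ 1 ω v) := fun v => by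
    have := h.comm l 1
    rw [zpow_one] at this
    exact DFunLike.congr_fun this v
  ext w
  constructor
  · rintro ⟨v, hv, rfl⟩
    rw [SetLike.mem_coe, mem_fixedSubmodule] at hv
    rw [mem_fixedSubmodule, ContinuousLinearMap.coe_coe, ← hc, hv]
  · intro hw
    rw [mem_fixedSubmodule] at hw
    have h1 : Φ 1 ω (Φ (-1) (T ω) w) = w := DFunLike.congr_fun hneg' w
    refine ⟨Φ (-1) (T ω) w, ?_, h1⟩
    rw [SetLike.mem_coe, mem_fixedSubmodule]
    have h2 : ∀ v, Φ (-1) (T ω) (Φ 1 ω v) = v := DFunLike.congr_fun hneg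
    rw [← h2 (pr l ω _), hc, h1, hw]

variable [MeasurableSpace Ω]

theorem measurableSet_fixedSubmodule {p : Ω → EuclideanEnd d} (hp : Measurable p) :
    MeasurableSet {x : Ω × EuclideanSpace ℝ (Fin d) | x.2 ∈ fixedSubmodule (p x.1)} := by
  refine measurableSet_eq_fun ?_ measurable_snd
  exact (isBoundedBilinearMap_apply (𝕜 := ℝ)).continuous.measurable.comp
    ((hp.comp measurable_fst).prodMk measurable_snd)

theorem IsCocycleSystem.ae_eq_zero_or_ae_ne_zero {μ : Measure Ω} (h : IsCocycleSystem T μ Φ)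
    (hone : ∀ ω, Φ 0 ω = 1) (hT : Ergodic T μ) (hpr : ∀ l, Measurable (pr l))
    (hsplit : ∀ᵐ ω ∂μ, SplitsAt T Φ S pr ω) (l : ℝ) :
    (∀ᵐ ω ∂μ, pr l ω = 0) ∨ ∀ᵐ ω ∂μ, pr l ω ≠ 0 := by
  refine hT.quasiErgodic.ae_mem_or_ae_notMem₀ (s := {ω | pr l ω = 0})
    (hpr l (measurableSet_singleton 0)).nullMeasurableSet ?_
  filter_upwards [hsplit] with ω hω
  have h1 := hω.comm l 1
  have h2 := h.neg_mul 1 ω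
  have h3 := h.mul_neg 1 ω
  rw [zpow_one, hone] at h2 h3
  rw [zpow_one] at h1
  refine propext ⟨fun h0 => ?_, fun h0 => ?_⟩
  · change pr l (T ω) = 0 at h0
    change pr l ω = 0
    rw [h0, MulZeroClass.zero_mul] at h1
    rw [← one_mul (pr l ω), ← h2, mul_assoc, h1, MulZeroClass.mul_zero]
  · change pr l ω = 0 at h0
    change pr l (T ω) = 0
    rw [h0, MulZeroClass.mul_zero] at h1
    rw [← mul_one (pr l (T ω)), ← h3, ← mul_assoc, ← h1, MulZeroClass.zero_mul]

end OseledetsSpaces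

/-- **Oseledets theorem, invertible (two-sided) version.** -/
theorem oseledets_two_sided
    {Ω : Type*} [MeasurableSpace Ω] {μ : Measure Ω} [IsProbabilityMeasure μ]
    {T : Ω → Ω} (hT : Ergodic T μ)
    (Tinv : Ω → Ω) (hTinvMeas : Measurable Tinv)
    (hinv₁ : ∀ ω, Tinv (T ω) = ω) (hinv₂ : ∀ ω, T (Tinv ω) = ω)
    {d : ℕ} (hd : 0 < d)
    (A : Ω → Matrix.GeneralLinearGroup (Fin d) ℝ)
    (hAmeas : ∀ i j, Measurable fun ω => (A ω : Matrix (Fin d) (Fin d) ℝ) i j)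
    (hint : Integrable (fun ω =>
      max (Real.log (matOpNorm (A ω : Matrix (Fin d) (Fin d) ℝ))) 0) μ)
    (hintInv : Integrable (fun ω =>
      max (Real.log (matOpNorm ((A ω)⁻¹ : Matrix (Fin d) (Fin d) ℝ))) 0) μ) :
    ∃ (k : ℕ), 1 ≤ k ∧
    ∃ (lam : Fin k → ℝ), StrictAnti lam ∧
    ∃ V : Fin k → Ω → Submodule ℝ (EuclideanSpace ℝ (Fin d)),
      (∀ i : Fin k,
        MeasurableSet {p : Ω × EuclideanSpace ℝ (Fin d) | p.2 ∈ V i p.1}) ∧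
      ∀ᵐ ω ∂μ,
        (∀ i : Fin k, V i ω ≠ ⊥) ∧
        (⨆ i : Fin k, V i ω) = ⊤ ∧
        (∀ i : Fin k, V i ω ⊓ (⨆ j ∈ ({i}ᶜ : Set (Fin k)), V j ω) = ⊥) ∧
        (∀ i : Fin k,
          (V i ω).map (Matrix.toEuclideanLin (A ω : Matrix (Fin d) (Fin d) ℝ)) = V i (T ω)) ∧
        (∀ i : Fin k, ∀ v ∈ V i ω, v ≠ 0 →
          Tendsto
            (fun N : ℕ =>
              Real.log ‖Matrix.toEuclideanLin (cocycIter T (fun ω' =>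
                (A ω' : Matrix (Fin d) (Fin d) ℝ)) N ω) v‖ / (N : ℝ))
            atTop (𝓝 (lam i)) ∧
          Tendsto
            (fun N : ℕ =>
              Real.log ‖Matrix.toEuclideanLin (backCocycIter Tinv A N ω) v‖ / (N : ℝ))
            atTop (𝓝 (-lam i))) := by
  classical
  obtain ⟨T, rfl⟩ : ∃ P : Equiv.Perm Ω, ⇑P = T := ⟨⟨T, Tinv, hinv₁, hinv₂⟩, rfl⟩
  obtain rfl : ⇑T⁻¹ = Tinv := funext fun ω => by
    rw [← hinv₁ (T⁻¹ ω)]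
    exact congrArg Tinv (T.apply_symm_apply ω)
  have hT' := hT.perm_inv hTinvMeas
  have h := isCocycleSystem_euclideanCocycle hT.toMeasurePreserving hT'.toMeasurePreserving
    hAmeas hint hintInv
  have hone : ∀ ω, euclideanCocycle T A 0 ω = 1 := fun ω => by simp [euclideanCocycle]
  obtain ⟨S, pr, hpr, hS, hsplit⟩ := h.isOseledetsRegular hT hT'
  set S' := S.filter fun l => ∀ᵐ ω ∂μ, pr l ω ≠ 0 with hS'
  have hzero : ∀ᵐ ω ∂μ, ∀ l ∈ S, l ∉ S' → pr l ω = 0 := by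
    rw [S.eventually_all]
    intro l hl
    rcases h.ae_eq_zero_or_ae_ne_zero hone hT hpr hsplit l with h0 | h0
    · exact h0.mono fun ω hω _ => hω
    · exact Eventually.of_forall fun ω hn => absurd (Finset.mem_filter.2 ⟨hl, h0⟩) hn
  have hne : ∀ᵐ ω ∂μ, ∀ l ∈ S', pr l ω ≠ 0 := by
    rw [S'.eventually_all]
    exact fun l hl => (Finset.mem_filter.1 hl).2
  have hsum : ∀ᵐ ω ∂μ, ∑ l ∈ S', pr l ω = 1 := by
    filter_upwards [hsplit, hzero] with ω h1 h2
    rw [← hone ω, ← h1.sum_eq]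
    exact Finset.sum_subset (Finset.filter_subset _ _) h2
  set lam : Fin S'.card → ℝ := fun i => S'.orderEmbOfFin rfl i.rev with hlam
  have hlam_mem : ∀ i, lam i ∈ S' := fun i => Finset.orderEmbOfFin_mem _ _ _
  have hlam_anti : StrictAnti lam := fun i j hij =>
    (S'.orderEmbOfFin rfl).strictMono (Fin.rev_lt_rev.2 hij)
  have hlam_surj : ∀ l ∈ S', ∃ i, lam i = l := fun l hl => by
    obtain ⟨i, hi⟩ : l ∈ Set.range (S'.orderEmbOfFin rfl) := by
      rw [Finset.range_orderEmbOfFin]; exact hl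
    exact ⟨i.rev, by rw [hlam]; simpa using hi⟩
  refine ⟨S'.card, ?_, lam, hlam_anti, fun i ω => fixedSubmodule (pr (lam i) ω),
    fun i => measurableSet_fixedSubmodule (hpr _), ?_⟩
  · rw [Nat.one_le_iff_ne_zero, Ne, Finset.card_eq_zero]
    intro hemp
    obtain ⟨ω, hω⟩ := hsum.exists
    rw [hemp, Finset.sum_empty] at hω
    have := DFunLike.congr_fun hω (EuclideanSpace.single ⟨0, hd⟩ (1 : ℝ))
    simpa using congrArg norm this
  filter_upwards [hsplit, hne, hsum] with ω hω hneω hsumω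
  have hneg : ∀ n : ℤ, euclideanCocycle T A (-n) ((T ^ n) ω) * euclideanCocycle T A n ω = 1 :=
    fun n => by rw [h.neg_mul, hone]
  have hidem : ∀ l v, pr l ω (pr l ω v) = pr l ω v := fun l v =>
    DFunLike.congr_fun (hω.mul_self l) v
  refine ⟨fun i hbot => hneω _ (hlam_mem i) ?_, ?_, fun i => ?_, fun i => ?_, fun i v hv hv0 => ?_⟩
  · ext1 v
    have : pr (lam i) ω v ∈ fixedSubmodule (pr (lam i) ω) := mem_fixedSubmodule.2 (hidem _ v)
    rw [hbot, Submodule.mem_bot] at this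
    exact this
  · refine eq_top_iff.2 fun v _ => ?_
    have hv : v = ∑ l ∈ S', pr l ω v := by
      have := DFunLike.congr_fun hsumω v
      rw [sum_apply] at this
      exact this.symm
    rw [hv]
    refine Submodule.sum_mem _ fun l hl => ?_
    obtain ⟨i, rfl⟩ := hlam_surj l hl
    exact Submodule.mem_iSup_of_mem i (mem_fixedSubmodule.2 (hidem _ v))
  · refine eq_bot_iff.2 fun x hx => ?_
    obtain ⟨hx1, hx2⟩ := Submodule.mem_inf.1 hx
    have hle : (⨆ j ∈ ({i}ᶜ : Set (Fin S'.card)), fixedSubmodule (pr (lam j) ω)) ≤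
        (pr (lam i) ω).ker := by
      refine iSup₂_le fun j hj v hv => ?_
      have h1 : pr (lam i) ω (pr (lam j) ω v) = 0 :=
        DFunLike.congr_fun (hω.mul_of_ne _ _ (hlam_anti.injective.ne (Ne.symm hj))) v
      rw [mem_fixedSubmodule.1 hv] at h1
      exact h1
    have h1 : pr (lam i) ω x = 0 := hle hx2
    rw [Submodule.mem_bot, ← mem_fixedSubmodule.1 hx1, h1]
  · have h1 := h.neg_mul 1 ω
    have h2 := h.mul_neg 1 ω
    rw [zpow_one, hone] at h1 h2
    have h3 := hω.map_fixedSubmodule h1 h2 (lam i)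
    have h4 : (euclideanCocycle T A 1 ω :
        EuclideanSpace ℝ (Fin d) →ₗ[ℝ] EuclideanSpace ℝ (Fin d)) =
        Matrix.toEuclideanLin (A ω : Matrix (Fin d) (Fin d) ℝ) := by
      rw [euclideanCocycle, cocycleZPow_one]; rfl
    rwa [h4] at h3
  · simp only [cocycIter_eq_cocycleZPow, backCocycIter_eq_cocycleZPow]
    exact hω.tendsto_log_div hneg hv hv0
end

section
/- Let ℍ be the hyperbolic plane, realized as the upper half-plane with its hyperbolic metric d, with basepoint i. Let (x_n)_{n≥0} be a sequence of points in ℍ such that d(x_n, x_{n+1})/n → 0 as n → ∞, and such that d(i, x_n)/n → θ for some θ ≥ 0. Then there exists a unit-speed geodesic ray γ : [0, ∞) → ℍ (an isometric embedding) with γ(0) = i such that (1/n) d(x_n, γ(θ·n)) → 0 as n → ∞. -/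
open Filter Topology UpperHalfPlane

namespace UpperHalfPlane

lemma cosh_sub_sinh_mul_im_pos (u : Circle) (t : ℝ) :
    0 < Real.cosh t - Real.sinh t * (u : ℂ).im := by
  have him : |(u : ℂ).im| ≤ 1 := (Complex.abs_im_le_norm _).trans_eq u.norm_coe
  have hs : |Real.sinh t * (u : ℂ).im| ≤ |Real.sinh t| := by
    rw [abs_mul]
    exact mul_le_of_le_one_right (abs_nonneg _) him
  have hc : |Real.sinh t| < Real.cosh t :=
    abs_lt_of_sq_lt_sq (by linarith [Real.cosh_sq t]) (Real.cosh_pos t).le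
  linarith [le_abs_self (Real.sinh t * (u : ℂ).im)]

/-- The point of `ℍ` with geodesic polar coordinates `(t, u)` about `i`; in the hyperboloid model
it is `(cosh t, sinh t • u)`. -/
noncomputable def polar (u : Circle) (t : ℝ) : ℍ :=
  ⟨⟨Real.sinh t * (u : ℂ).re / (Real.cosh t - Real.sinh t * (u : ℂ).im),
    1 / (Real.cosh t - Real.sinh t * (u : ℂ).im)⟩,
    one_div_pos.2 (cosh_sub_sinh_mul_im_pos u t)⟩

lemma polar_re (u : Circle) (t : ℝ) : (polar u t).re =
    Real.sinh t * (u : ℂ).re / (Real.cosh t - Real.sinh t * (u : ℂ).im) := rfl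

lemma polar_im (u : Circle) (t : ℝ) : (polar u t).im =
    1 / (Real.cosh t - Real.sinh t * (u : ℂ).im) := rfl

lemma polar_zero (u : Circle) : polar u 0 = I := by
  apply UpperHalfPlane.ext_re_im <;> simp [polar_re, polar_im]

lemma re_sq_add_im_sq_circle (u : Circle) : (u : ℂ).re ^ 2 + (u : ℂ).im ^ 2 = 1 := by
  have := u.normSq_coe
  rw [Complex.normSq_apply] at this
  linarith

/-- The hyperbolic law of cosines in polar coordinates. -/
lemma cosh_dist_polar (u v : Circle) (s t : ℝ) :
    Real.cosh (dist (polar u s) (polar v t)) =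
      Real.cosh (s - t) + Real.sinh s * Real.sinh t * (dist u v ^ 2 / 2) := by
  have hp := cosh_sub_sinh_mul_im_pos u s
  have hq := cosh_sub_sinh_mul_im_pos v t
  have hu := re_sq_add_im_sq_circle u
  have hv := re_sq_add_im_sq_circle v
  have hs := Real.cosh_sq s
  have ht := Real.cosh_sq t
  have huv : dist u v = dist (u : ℂ) v := rfl
  rw [cosh_dist, huv, Complex.dist_eq, Complex.dist_eq, Complex.sq_norm,
    Complex.sq_norm, Complex.normSq_apply, Complex.normSq_apply, Real.cosh_sub]
  simp only [Complex.sub_re, Complex.sub_im, coe_re, coe_im, polar_re, polar_im]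
  generalize (u : ℂ).re = a at *
  generalize (u : ℂ).im = b at *
  generalize (v : ℂ).re = a' at *
  generalize (v : ℂ).im = b' at *
  generalize Real.cosh s = c at *
  generalize Real.sinh s = σ at *
  generalize Real.cosh t = c' at *
  generalize Real.sinh t = τ at *
  obtain ⟨p, hpe⟩ : ∃ p, p = c - σ * b := ⟨_, rfl⟩
  obtain ⟨q, hqe⟩ : ∃ q, q = c' - τ * b' := ⟨_, rfl⟩
  rw [← hpe] at hp ⊢
  rw [← hqe] at hq ⊢
  have h1 : (σ * a) ^ 2 + 1 = p * (c + σ * b) := by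
    rw [hpe]; linear_combination σ ^ 2 * hu - hs
  have h2 : (τ * a') ^ 2 + 1 = q * (c' + τ * b') := by
    rw [hqe]; linear_combination τ ^ 2 * hv - ht
  have h3 : (a - a') * (a - a') + (b - b') * (b - b') = 2 - 2 * a * a' - 2 * b * b' := by
    linear_combination hu + hv
  rw [h3]
  have h4 : 1 + ((σ * a / p - τ * a' / q) * (σ * a / p - τ * a' / q)
      + (1 / p - 1 / q) * (1 / p - 1 / q)) / (2 * (1 / p) * (1 / q)) =
      (((σ * a) ^ 2 + 1) / p * q + ((τ * a') ^ 2 + 1) / q * p) / 2 - σ * a * τ * a' := by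
    field_simp
    ring
  rw [h4, h1, h2, mul_div_cancel_left₀ _ hp.ne', mul_div_cancel_left₀ _ hq.ne', hpe, hqe]
  ring

lemma dist_polar_self (u : Circle) (s t : ℝ) : dist (polar u s) (polar u t) = |s - t| := by
  have h := cosh_dist_polar u u s t
  rw [dist_self, ← Real.cosh_abs (s - t)] at h
  simp only [ne_eq, OfNat.ofNat_ne_zero, not_false_eq_true, zero_pow, zero_div, mul_zero,
    add_zero] at h
  exact Real.cosh_strictMonoOn.injOn (Set.mem_Ici.2 dist_nonneg) (Set.mem_Ici.2 (abs_nonneg _)) h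

lemma exists_polar_eq (z : ℍ) : ∃ u : Circle, polar u (dist I z) = z := by
  rcases eq_or_ne I z with rfl | hz
  · exact ⟨1, by rw [dist_self, polar_zero]⟩
  have hr : 0 < Real.sinh (dist I z) := Real.sinh_pos_iff.2 (dist_pos.2 hz)
  have hy := z.im_pos
  have hc : Real.cosh (dist I z) = (z.re ^ 2 + z.im ^ 2 + 1) / (2 * z.im) := by
    rw [cosh_dist, Complex.dist_eq, Complex.sq_norm, Complex.normSq_apply]
    simp only [Complex.sub_re, Complex.sub_im, coe_re, coe_im, I_re, I_im]
    field_simp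
    ring
  have hs := Real.cosh_sq (dist I z)
  rw [hc] at hs
  have hu : ‖(⟨z.re / z.im / Real.sinh (dist I z),
      (z.re ^ 2 + z.im ^ 2 - 1) / (2 * z.im) / Real.sinh (dist I z)⟩ : ℂ)‖ = 1 := by
    rw [← sq_eq_sq₀ (norm_nonneg _) zero_le_one, Complex.sq_norm, Complex.normSq_apply]
    generalize Real.sinh (dist I z) = σ at *
    field_simp at hs ⊢
    linear_combination hs
  obtain ⟨u, hre, him⟩ : ∃ u : Circle, (u : ℂ).re = z.re / z.im / Real.sinh (dist I z) ∧
      (u : ℂ).im = (z.re ^ 2 + z.im ^ 2 - 1) / (2 * z.im) / Real.sinh (dist I z) :=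
    ⟨⟨_, mem_sphere_zero_iff_norm.2 hu⟩, rfl, rfl⟩
  have hd : Real.cosh (dist I z) - Real.sinh (dist I z) * (u : ℂ).im = 1 / z.im := by
    rw [hc, him]
    field_simp
    ring
  refine ⟨u, UpperHalfPlane.ext_re_im ?_ ?_⟩
  · rw [polar_re, hd, hre]
    field_simp
  · rw [polar_im, hd, one_div_one_div]

lemma dist_circle_le_exp (u v : Circle) {s t a : ℝ} (ha : 1 ≤ a) (hs : a ≤ s) (ht : a ≤ t) :
    dist u v ≤ 6 * Real.exp (dist (polar u s) (polar v t) / 2 - a) := by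
  have hsinh : Real.exp a / 4 ≤ Real.sinh a := by
    have h1 : Real.exp a * Real.exp (-a) = 1 := by rw [← Real.exp_add]; simp
    have h2 : 2 ≤ Real.exp a := by linarith [Real.add_one_le_exp a]
    rw [Real.sinh_eq]
    nlinarith [Real.exp_pos (-a)]
  have hprod : Real.exp a / 4 * (Real.exp a / 4) ≤ Real.sinh s * Real.sinh t :=
    mul_le_mul (hsinh.trans (Real.sinh_le_sinh.2 hs)) (hsinh.trans (Real.sinh_le_sinh.2 ht))
      (by positivity) (Real.sinh_nonneg_iff.2 (by linarith))
  have hcosh := cosh_dist_polar u v s t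
  set D := dist (polar u s) (polar v t) with hD
  have hle : Real.cosh D ≤ Real.exp D := by
    have := Real.sinh_nonneg_iff.2 (dist_nonneg : 0 ≤ D)
    linarith [Real.cosh_add_sinh D]
  have hmul : Real.exp a / 4 * (Real.exp a / 4) * (dist u v ^ 2 / 2) ≤ Real.exp D := by
    have := mul_le_mul_of_nonneg_right hprod (by positivity : 0 ≤ dist u v ^ 2 / 2)
    linarith [Real.cosh_pos (s - t)]
  have hexp : Real.exp D = Real.exp (D / 2 - a) ^ 2 * Real.exp a ^ 2 := by
    rw [← mul_pow, ← Real.exp_add, ← Real.exp_nat_mul]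
    congr 1
    push_cast
    ring
  have hsq : dist u v ^ 2 ≤ 32 * Real.exp (D / 2 - a) ^ 2 := by
    have hpos : 0 < Real.exp a ^ 2 := by positivity
    rw [hexp] at hmul
    refine le_of_mul_le_mul_right ?_ hpos
    linarith
  refine abs_le_of_sq_le_sq' ?_ (by positivity) |>.2
  nlinarith [sq_nonneg (Real.exp (D / 2 - a))]

lemma exp_dist_polar_le (u v : Circle) (s : ℝ) {t : ℝ} (ht : 0 ≤ t) :
    Real.exp (dist (polar u s) (polar v t)) ≤
      2 * Real.exp |s - t| + Real.exp (s + t) * dist u v ^ 2 := by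
  have hcosh := cosh_dist_polar u v s t
  have hD := Real.cosh_add_sinh (dist (polar u s) (polar v t))
  have hD' := Real.sinh_lt_cosh (dist (polar u s) (polar v t))
  have habs : Real.cosh (s - t) ≤ Real.exp |s - t| := by
    rw [← Real.cosh_abs]
    linarith [Real.cosh_add_sinh |s - t|, Real.sinh_nonneg_iff.2 (abs_nonneg (s - t))]
  have hsinh (r : ℝ) : Real.sinh r ≤ Real.exp r := by
    linarith [Real.cosh_add_sinh r, Real.cosh_pos r]
  have hprod : Real.sinh s * Real.sinh t ≤ Real.exp (s + t) := by
    rw [Real.exp_add]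
    exact mul_le_mul (hsinh s) (hsinh t) (Real.sinh_nonneg_iff.2 ht) (Real.exp_pos s).le
  nlinarith [mul_le_mul_of_nonneg_right hprod (sq_nonneg (dist u v))]

end UpperHalfPlane

section EventuallyGeometric

variable {α : Type*} [PseudoMetricSpace α] {f : ℕ → α} {C q : ℝ}

lemma exists_forall_dist_shift_le_geometric
    (h : ∀ᶠ n in atTop, dist (f n) (f (n + 1)) ≤ C * q ^ n) :
    ∃ N, ∀ n, dist (f (n + N)) (f (n + 1 + N)) ≤ C * q ^ N * q ^ n := by
  obtain ⟨N, hN⟩ := eventually_atTop.1 h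
  refine ⟨N, fun n => ?_⟩
  have := hN (n + N) (Nat.le_add_left N n)
  rwa [pow_add, mul_comm (q ^ n), ← mul_assoc, add_right_comm] at this

lemma exists_tendsto_of_eventually_dist_le_geometric [CompleteSpace α] (hq : q < 1)
    (h : ∀ᶠ n in atTop, dist (f n) (f (n + 1)) ≤ C * q ^ n) :
    ∃ a, Tendsto f atTop (𝓝 a) := by
  obtain ⟨N, hN⟩ := exists_forall_dist_shift_le_geometric h
  obtain ⟨a, ha⟩ := cauchySeq_tendsto_of_complete
    (cauchySeq_of_le_geometric (f := fun n => f (n + N)) q (C * q ^ N) hq hN)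
  exact ⟨a, (tendsto_add_atTop_iff_nat N).1 ha⟩

lemma eventually_dist_le_of_eventually_dist_le_geometric (hq : q < 1)
    (h : ∀ᶠ n in atTop, dist (f n) (f (n + 1)) ≤ C * q ^ n) {a : α}
    (ha : Tendsto f atTop (𝓝 a)) : ∀ᶠ n in atTop, dist (f n) a ≤ C / (1 - q) * q ^ n := by
  obtain ⟨N, hN⟩ := exists_forall_dist_shift_le_geometric h
  filter_upwards [eventually_ge_atTop N] with n hn
  obtain ⟨k, rfl⟩ := Nat.exists_eq_add_of_le' hn
  have := dist_le_of_le_geometric_of_tendsto (f := fun n => f (n + N)) q (C * q ^ N) hq hN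
    ((tendsto_add_atTop_iff_nat N).2 ha) k
  refine this.trans_eq ?_
  rw [pow_add]
  ring

end EventuallyGeometric

/-- **Kaimanovich's regularity criterion in the hyperbolic plane.**
If a sequence in `ℍ` has small steps (`d(x_n, x_{n+1}) = o(n)`) and linearly convergent
distances to the basepoint `i` (`d(i, x_n)/n → θ`), then it sublinearly tracks a unit-speed
geodesic ray starting at `i`. -/
theorem regular_sequence_hyperbolic_plane
    (x : ℕ → UpperHalfPlane) (θ : ℝ) (hθ : 0 ≤ θ)
    (hsmall : Tendsto (fun n : ℕ => dist (x n) (x (n + 1)) / (n : ℝ)) atTop (𝓝 0))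
    (hdist : Tendsto (fun n : ℕ => dist UpperHalfPlane.I (x n) / (n : ℝ)) atTop (𝓝 θ)) :
    ∃ γ : ℝ → UpperHalfPlane,
      γ 0 = UpperHalfPlane.I ∧
      (∀ s t : ℝ, 0 ≤ s → 0 ≤ t → dist (γ s) (γ t) = |s - t|) ∧
      Tendsto (fun n : ℕ => dist (x n) (γ (θ * n)) / (n : ℝ)) atTop (𝓝 0) := by
  suffices h : ∃ v : Circle,
      Tendsto (fun n : ℕ => dist (x n) (polar v (θ * n)) / (n : ℝ)) atTop (𝓝 0) by
    obtain ⟨v, hv⟩ := h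
    exact ⟨polar v, polar_zero v, fun s t _ _ => dist_polar_self v s t, hv⟩
  rcases hθ.eq_or_lt with rfl | hθ
  · refine ⟨1, ?_⟩
    simpa only [zero_mul, polar_zero, dist_comm] using hdist
  choose u hu using fun n => exists_polar_eq (x n)
  have hnear {ε : ℝ} (hε : 0 < ε) : ∀ᶠ n : ℕ in atTop, 0 < (n : ℝ) ∧
      dist (x n) (x (n + 1)) ≤ ε * n ∧ |dist I (x n) - θ * n| ≤ ε * n := by
    filter_upwards [hsmall.eventually_le_const hε, Metric.tendsto_nhds.1 hdist ε hε,
      eventually_gt_atTop 0] with n h1 h2 h3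
    have hn : (0 : ℝ) < n := by exact_mod_cast h3
    refine ⟨hn, (div_le_iff₀ hn).1 h1, ?_⟩
    rw [Real.dist_eq] at h2
    rw [show dist I (x n) - θ * n = (dist I (x n) / n - θ) * n by field_simp, abs_mul,
      abs_of_pos hn]
    exact mul_le_mul_of_nonneg_right h2.le hn.le
  have hstep {ε : ℝ} (hε : 0 < ε) (hεθ : ε < θ / 2) : ∀ᶠ n : ℕ in atTop,
      dist (u n) (u (n + 1)) ≤ 6 * Real.exp (-(θ - 2 * ε)) ^ n := by
    have hlarge : ∀ᶠ n : ℕ in atTop, 1 ≤ (θ - ε) * n :=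
      (tendsto_natCast_atTop_atTop.const_mul_atTop (by linarith)).eventually_ge_atTop 1
    filter_upwards [hnear hε, (tendsto_add_atTop_nat 1).eventually (hnear hε), hlarge]
      with n ⟨hn, h1, h2⟩ ⟨_, _, h3⟩ h4
    rw [abs_le] at h2 h3
    push_cast at h3
    refine (dist_circle_le_exp (u n) (u (n + 1)) (s := dist I (x n)) (t := dist I (x (n + 1)))
      h4 (by linarith) (by nlinarith)).trans ?_
    rw [hu, hu, ← Real.exp_nat_mul]
    gcongr
    nlinarith
  have hq {ε : ℝ} (hεθ : ε < θ / 2) : Real.exp (-(θ - 2 * ε)) < 1 :=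
    Real.exp_lt_one_iff.2 (by linarith)
  obtain ⟨v, hv⟩ := exists_tendsto_of_eventually_dist_le_geometric
    (hq (ε := θ / 4) (by linarith)) (hstep (ε := θ / 4) (by linarith) (by linarith))
  refine ⟨v, ?_⟩
  have hbound {ε : ℝ} (hε : 0 < ε) (hεθ : ε < θ / 2) : ∀ᶠ n : ℕ in atTop,
      dist (x n) (polar v (θ * n)) / n ≤ 6 * ε := by
    obtain ⟨K, hK⟩ : ∃ K, K = 6 / (1 - Real.exp (-(θ - 2 * ε))) := ⟨_, rfl⟩
    have hconv := eventually_dist_le_of_eventually_dist_le_geometric (hq hεθ) (hstep hε hεθ) hv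
    rw [← hK] at hconv
    have hlarge : ∀ᶠ n : ℕ in atTop, 2 + K ^ 2 ≤ Real.exp (ε * n) :=
      (Real.tendsto_exp_atTop.comp
        (tendsto_natCast_atTop_atTop.const_mul_atTop hε)).eventually_ge_atTop _
    filter_upwards [hnear hε, hconv, hlarge] with n ⟨hn, _, h2⟩ h3 h4
    rw [div_le_iff₀ hn, ← Real.exp_le_exp]
    have hexp := exp_dist_polar_le (u n) v (dist I (x n)) (t := θ * n) (by positivity)
    rw [hu] at hexp
    have hsq : dist (u n) v ^ 2 ≤ K ^ 2 * Real.exp (-(2 * (θ - 2 * ε) * n)) := by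
      refine (pow_le_pow_left₀ dist_nonneg h3 2).trans_eq ?_
      rw [mul_pow, ← Real.exp_nat_mul, ← Real.exp_nat_mul]
      congr 2
      push_cast
      ring
    have hfst : Real.exp |dist I (x n) - θ * n| ≤ Real.exp (5 * ε * n) :=
      Real.exp_le_exp.2 (by nlinarith)
    have hsnd : Real.exp (dist I (x n) + θ * n) * dist (u n) v ^ 2 ≤
        K ^ 2 * Real.exp (5 * ε * n) := by
      calc _ ≤ Real.exp ((2 * θ + ε) * n) * (K ^ 2 * Real.exp (-(2 * (θ - 2 * ε) * n))) := by
            gcongr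
            linarith [(abs_le.1 h2).2]
        _ = K ^ 2 * Real.exp (5 * ε * n) := by
            rw [mul_left_comm, ← Real.exp_add]
            congr 2
            ring
    calc _ ≤ (2 + K ^ 2) * Real.exp (5 * ε * n) := by linarith
      _ ≤ Real.exp (ε * n) * Real.exp (5 * ε * n) := by gcongr
      _ = Real.exp (6 * ε * n) := by
          rw [← Real.exp_add]
          congr 1
          ring
  rw [Metric.tendsto_nhds]
  intro δ hδ
  have hmin : 0 < min (δ / 7) (θ / 4) := by positivity
  filter_upwards [hbound hmin ((min_le_right _ _).trans_lt (by linarith))] with n hn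
  rw [Real.dist_0_eq_abs, abs_of_nonneg (by positivity)]
  linarith [min_le_left (δ / 7) (θ / 4)]
end
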